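/- arXiv:2202.04986 — 13 statements merged into one kernel-verified Lean document; each statement's English description precedes it below -/
import Mathlib

section
/- Let h : ℤ → ℝ be a feedback filter, i.e. h_n = 0 for n ≤ 0 and for n > L (for some L ∈ ℕ), and let y : ℕ → ℝ be an input sequence. Define the state sequence v : ℤ → ℝ and the output q : ℕ → {−1,1} of the 1-bit ΣΔ quantizer by v_n = 0 for n < 0 and, for n ≥ 0, q_n = sign((h∗v)_n + y_n) and v_n = (h∗v)_n + y_n − q_n, where (h∗v)_n = Σ_{j=1}^L h_j v_{n−j}. If Σ_{j=1}^L |h_j| + sup_{n∈ℕ} |y_n| ≤ 2, then |v_n| ≤ 1 for all n ∈ ℕ. -/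
/-- The 1-bit sign quantizer: `sgn x = 1` if `x > 0` and `-1` if `x ≤ 0`. -/
noncomputable def sgn (x : ℝ) : ℝ := if 0 < x then 1 else -1

/-!
The bound propagates by strong induction on time: if all earlier states are at most `1` in absolute
value, the quantizer input `(h ∗ v)_n + y_n` is at most `‖h‖₁ + |y_n| ≤ 2` in absolute value, and
the sign quantizer has error at most `1` exactly on `[-2, 2]`. The only property of the quantizer
that matters is that it maps a ball of inputs to a ball of errors, so the argument works for
vector-valued signals.
-/

theorem abs_sub_sgn (x : ℝ) : |x - sgn x| = |(|x| - 1)| := by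
  rcases lt_or_ge 0 x with hx | hx
  · rw [sgn, if_pos hx, abs_of_pos hx]
  · rw [sgn, if_neg hx.not_gt, abs_of_nonpos hx, ← abs_neg]
    congr 1
    ring

theorem abs_sub_sgn_le_one_iff {x : ℝ} : |x - sgn x| ≤ 1 ↔ |x| ≤ 2 := by
  rw [abs_sub_sgn, abs_le]
  constructor
  · rintro ⟨-, hx⟩
    linarith
  · intro hx
    constructor <;> linarith [abs_nonneg x]

section Seminormed

variable {R E : Type*} [SeminormedRing R] [SeminormedAddCommGroup E] [Module R E]
  [IsBoundedSMul R E]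

theorem norm_sum_smul_le_sum_norm_mul {ι : Type*} (s : Finset ι) (h : ι → R) {x : ι → E} {C : ℝ}
    (hx : ∀ i ∈ s, ‖x i‖ ≤ C) : ‖∑ i ∈ s, h i • x i‖ ≤ (∑ i ∈ s, ‖h i‖) * C := by
  rw [Finset.sum_mul]
  refine norm_sum_le_of_le s fun i hi => (norm_smul_le (h i) (x i)).trans ?_
  gcongr
  exact hx i hi

theorem stmt_0_general {s : Finset ℤ} (hs : ∀ j ∈ s, 0 < j) {h : ℤ → R} {Q : E → E} {r C : ℝ}
    (hQ : ∀ u, ‖u‖ ≤ r → ‖u - Q u‖ ≤ C) {y : ℕ → E} {v : ℤ → E} {q : ℕ → E}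
    (hv_neg : ∀ n < 0, ‖v n‖ ≤ C)
    (hq : ∀ n : ℕ, q n = Q ((∑ j ∈ s, h j • v (n - j)) + y n))
    (hv : ∀ n : ℕ, v n = (∑ j ∈ s, h j • v (n - j)) + y n - q n)
    (hbound : ∀ n : ℕ, (∑ j ∈ s, ‖h j‖) * C + ‖y n‖ ≤ r) (n : ℤ) : ‖v n‖ ≤ C := by
  induction n using Int.strongRec (m := 0) with
  | lt n hn => exact hv_neg n hn
  | ge n hn ih =>
    lift n to ℕ using hn
    have past_le : ∀ j ∈ s, ‖v (n - j)‖ ≤ C := fun j hj => ih _ (sub_lt_self _ (hs j hj))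
    rw [hv, hq]
    apply hQ
    calc ‖(∑ j ∈ s, h j • v (n - j)) + y n‖
        ≤ ‖∑ j ∈ s, h j • v (n - j)‖ + ‖y n‖ := norm_add_le _ _
      _ ≤ (∑ j ∈ s, ‖h j‖) * C + ‖y n‖ := by
        gcongr
        exact norm_sum_smul_le_sum_norm_mul s h past_le
      _ ≤ r := hbound n

end Seminormed

/-- Stability of the one-dimensional 1-bit ΣΔ quantizer: if
`‖h‖₁ + sup_n |y_n| ≤ 2`, then the state variable satisfies `|v_n| ≤ 1` for all `n ∈ ℕ`. -/
theorem stmt_0 (L : ℕ) (h : ℤ → ℝ)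
    (hcausal : ∀ n : ℤ, n ≤ 0 → h n = 0)
    (hsupp : ∀ n : ℤ, (L : ℤ) < n → h n = 0)
    (y : ℕ → ℝ) (v : ℤ → ℝ) (q : ℕ → ℝ)
    (hv_neg : ∀ n : ℤ, n < 0 → v n = 0)
    (hq : ∀ n : ℕ, q n =
      sgn ((∑ j ∈ Finset.Icc (1 : ℤ) (L : ℤ), h j * v ((n : ℤ) - j)) + y n))
    (hv : ∀ n : ℕ, v (n : ℤ) =
      (∑ j ∈ Finset.Icc (1 : ℤ) (L : ℤ), h j * v ((n : ℤ) - j)) + y n - q n)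
    (hbound : ∀ n : ℕ, (∑ j ∈ Finset.Icc (1 : ℤ) (L : ℤ), |h j|) + |y n| ≤ 2) :
    ∀ n : ℕ, |v (n : ℤ)| ≤ 1 := by
  have hv_neg_le : ∀ n < 0, ‖v n‖ ≤ 1 := fun n hn => by simp [hv_neg n hn]
  exact fun n => stmt_0_general (h := h) (y := y) (fun j hj => (Finset.mem_Icc.mp hj).1)
    (fun u => abs_sub_sgn_le_one_iff.mpr) hv_neg_le hq hv (by simpa using hbound) n
end

section
/- Fix p, s, ℓ ∈ ℕ and a weight matrix w = (w_{i,j}), i ∈ {0,…,p}, j ∈ {−s,…,ℓ}, with w_{i,j} ≥ 0, w_{0,j} = 0 for j ≤ 0, and Σ_{i,j} w_{i,j} = 1; let d_{i,j} = (i,j) ∈ ℤ², and for each (i,j) let h^{i,j} : ℤ → ℝ be a feedback filter supported on {1,…,L}. Given an input y : ℕ² → ℝ, define the state v : ℤ² → ℝ and output q : ℕ² → {−1,1} of the weighted ΣΔ quantizer by v_n = 0 for n ∉ ℕ² and, for n ∈ ℕ² processed in raster order (row by row, left to right), q_n = sign(Σ_{i,j} w_{i,j} (h^{i,j} ∗_{d_{i,j}}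 v)_n + y_n) and v_n = Σ_{i,j} w_{i,j} (h^{i,j} ∗_{d_{i,j}} v)_n + y_n − q_n, where (h ∗_d v)_n = Σ_{k=1}^L h_k v_{n − k d}. If Σ_{i,j} w_{i,j} ‖h^{i,j}‖₁ + sup_{n∈ℕ²} |y_n| ≤ 2, then |v_n| ≤ 1 for all n ∈ ℕ². -/
/-!
One ΣΔ step maps a quantizer input `x` to the state `x - sgn x`, so `|x| ≤ 2` yields a state of
modulus at most `1`. If all earlier states have modulus at most `1`, the norm condition bounds the
next input by `2`. Raster order is the lexicographic order on `ℤ²`: directions of nonzero weight are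
positive for it and the quadrant is well-founded, so induction closes the loop.
-/

/-- Output at `n` of a linear feedback loop with finitely many taps: tap `t` reads the state `v`
at delay `d t` and has gain `c t`. Distinct taps may share a delay, as happens when several
directional filters are superposed. -/
def tapFeedback {G ι : Type*} [Sub G] (T : Finset ι) (c : ι → ℝ) (d : ι → G) (v : G → ℝ)
    (n : G) : ℝ :=
  ∑ t ∈ T, c t * v (n - d t)

lemma abs_sub_sgn_le_one {x : ℝ} (hx : |x| ≤ 2) : |x - sgn x| ≤ 1 := by
  rw [abs_le] at hx ⊢
  unfold sgn
  split_ifs <;> constructor <;> linarith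

lemma abs_tapFeedback_le {G ι : Type*} [Sub G] {T : Finset ι} {c : ι → ℝ} {d : ι → G}
    {v : G → ℝ} {n : G} (hv : ∀ t ∈ T, c t ≠ 0 → |v (n - d t)| ≤ 1) :
    |tapFeedback T c d v n| ≤ ∑ t ∈ T, |c t| := by
  refine (Finset.abs_sum_le_sum_abs _ _).trans (Finset.sum_le_sum fun t ht => ?_)
  rw [abs_mul]
  rcases eq_or_ne (c t) 0 with hc | hc
  · simp [hc]
  · exact mul_le_of_le_one_right (abs_nonneg _) (hv t ht hc)

theorem abs_le_one_of_eq_tapFeedback_sub_sgn {G ι : Type*} [AddGroup G] [Preorder G]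
    [AddLeftStrictMono G] {S : Set G} (hS : S.IsWF) {T : Finset ι} {c : ι → ℝ} {d : ι → G}
    (hd : ∀ t ∈ T, c t ≠ 0 → 0 < d t) {y v : G → ℝ} (hv_init : ∀ n ∉ S, |v n| ≤ 1)
    (hv : ∀ n ∈ S, v n = tapFeedback T c d v n + y n - sgn (tapFeedback T c d v n + y n))
    (hbound : ∀ n ∈ S, ∑ t ∈ T, |c t| + |y n| ≤ 2) (n : G) :
    |v n| ≤ 1 := by
  by_cases hn : n ∈ S
  · refine Set.WellFoundedOn.induction (P := fun n => |v n| ≤ 1) hS hn fun n hn ih => ?_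
    have hpast : ∀ t ∈ T, c t ≠ 0 → |v (n - d t)| ≤ 1 := by
      intro t ht hc
      by_cases hmem : n - d t ∈ S
      · exact ih _ hmem (sub_lt_self n (hd t ht hc))
      · exact hv_init _ hmem
    have hinput : |tapFeedback T c d v n + y n| ≤ 2 :=
      calc |tapFeedback T c d v n + y n|
          ≤ |tapFeedback T c d v n| + |y n| := abs_add_le _ _
        _ ≤ ∑ t ∈ T, |c t| + |y n| := by gcongr; exact abs_tapFeedback_le hpast
        _ ≤ 2 := hbound n hn
    rw [hv n hn]
    exact abs_sub_sgn_le_one hinput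
  · exact hv_init n hn

lemma isWF_toLex_image_Ici {α β : Type*} [LinearOrder α] [LocallyFiniteOrder α]
    [LinearOrder β] [LocallyFiniteOrder β] (a : α × β) : (toLex '' Set.Ici a).IsWF := by
  rw [Set.Ici_prod_eq]
  exact ((bddBelow_Ici.isWF.isPWO.prod bddBelow_Ici.isWF.isPWO).image_of_monotone
    Prod.Lex.toLex_mono).isWF

lemma toLex_pos_of_ne_zero {α β M : Type*} [PartialOrder α] [Zero α] [LinearOrder β] [Zero β]
    [Zero M] {w : α → β → M} (hw_zero : ∀ j ≤ 0, w 0 j = 0) {i : α} {j : β} (hi : 0 ≤ i)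
    (hij : w i j ≠ 0) : 0 < toLex (i, j) := by
  rcases hi.lt_or_eq with hi_pos | rfl
  · exact Prod.Lex.toLex_lt_toLex.2 (.inl hi_pos)
  · exact Prod.Lex.toLex_lt_toLex.2 (.inr ⟨rfl, not_le.1 (mt (hw_zero j) hij)⟩)

lemma tapFeedback_product_toLex (I J K : Finset ℤ) (w : ℤ → ℤ → ℝ) (h : ℤ → ℤ → ℤ → ℝ)
    (v : ℤ × ℤ → ℝ) (n : ℤ × ℤ) :
    tapFeedback (I ×ˢ J ×ˢ K) (fun t => w t.1 t.2.1 * h t.1 t.2.1 t.2.2)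
        (fun t => t.2.2 • toLex (t.1, t.2.1)) (v ∘ ofLex) (toLex n) =
      ∑ i ∈ I, ∑ j ∈ J, w i j * ∑ k ∈ K, h i j k * v (n.1 - k * i, n.2 - k * j) := by
  simp only [tapFeedback, Finset.sum_product, Finset.mul_sum, mul_assoc]
  rfl

lemma sum_product_abs_mul {α β γ : Type*} (I : Finset α) (J : Finset β) (K : Finset γ)
    (w : α → β → ℝ) (h : α → β → γ → ℝ) :
    ∑ t ∈ I ×ˢ J ×ˢ K, |w t.1 t.2.1 * h t.1 t.2.1 t.2.2| =
      ∑ i ∈ I, ∑ j ∈ J, |w i j| * ∑ k ∈ K, |h i j k| := by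
  simp only [Finset.sum_product, Finset.mul_sum, abs_mul]

theorem stmt_1_general (I J : Finset ℤ) (L : ℤ) (w : ℤ → ℤ → ℝ) (h : ℤ → ℤ → ℤ → ℝ)
    (hw : ∀ i ∈ I, ∀ j ∈ J, w i j ≠ 0 → 0 < toLex (i, j))
    (y v q : ℤ × ℤ → ℝ) (hv_init : ∀ n : ℤ × ℤ, n.1 < 0 ∨ n.2 < 0 → |v n| ≤ 1)
    (hq : ∀ n : ℤ × ℤ, 0 ≤ n.1 → 0 ≤ n.2 → q n =
      sgn ((∑ i ∈ I, ∑ j ∈ J, w i j * ∑ k ∈ Finset.Icc 1 L,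
        h i j k * v (n.1 - k * i, n.2 - k * j)) + y n))
    (hv : ∀ n : ℤ × ℤ, 0 ≤ n.1 → 0 ≤ n.2 → v n =
      (∑ i ∈ I, ∑ j ∈ J, w i j * ∑ k ∈ Finset.Icc 1 L,
        h i j k * v (n.1 - k * i, n.2 - k * j)) + y n - q n)
    (hbound : ∀ n : ℤ × ℤ, 0 ≤ n.1 → 0 ≤ n.2 →
      (∑ i ∈ I, ∑ j ∈ J, |w i j| * ∑ k ∈ Finset.Icc 1 L, |h i j k|) + |y n| ≤ 2)
    (n : ℤ × ℤ) : |v n| ≤ 1 := by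
  refine abs_le_one_of_eq_tapFeedback_sub_sgn (isWF_toLex_image_Ici 0)
    (T := I ×ˢ J ×ˢ Finset.Icc 1 L) (c := fun t => w t.1 t.2.1 * h t.1 t.2.1 t.2.2)
    (d := fun t => t.2.2 • toLex (t.1, t.2.1)) (y := y ∘ ofLex) (v := v ∘ ofLex)
    ?_ ?_ ?_ ?_ (toLex n)
  · rintro ⟨i, j, k⟩ ht hc
    simp only [Finset.mem_product, Finset.mem_Icc] at ht
    exact zsmul_pos (hw i ht.1 j ht.2.1 (left_ne_zero_of_mul hc)) (by lia)
  · intro m hm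
    refine hv_init (ofLex m) ?_
    contrapose! hm
    exact ⟨ofLex m, hm, rfl⟩
  · rintro _ ⟨m, hm, rfl⟩
    rw [tapFeedback_product_toLex]
    simpa only [Function.comp_apply, ofLex_toLex, hq m hm.1 hm.2] using hv m hm.1 hm.2
  · rintro _ ⟨m, hm, rfl⟩
    rw [sum_product_abs_mul]
    exact hbound m hm.1 hm.2

/-- Stability of the weighted 1-bit ΣΔ quantizer in two dimensions: if
`Σ_{i,j} w_{i,j} ‖h^{i,j}‖₁ + sup_{n ∈ ℕ²} |y_n| ≤ 2`, then `|v_n| ≤ 1` for all `n ∈ ℕ²`. -/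
theorem stmt_1 (p s ℓ L : ℕ) (w : ℤ → ℤ → ℝ) (h : ℤ → ℤ → ℤ → ℝ)
    (hw_nonneg : ∀ i j : ℤ, 0 ≤ w i j)
    (hw_zero : ∀ j : ℤ, j ≤ 0 → w 0 j = 0)
    (hw_sum : ∑ i ∈ Finset.Icc (0 : ℤ) (p : ℤ), ∑ j ∈ Finset.Icc (-(s : ℤ)) (ℓ : ℤ), w i j = 1)
    (hh_causal : ∀ i j k : ℤ, k ≤ 0 → h i j k = 0)
    (hh_supp : ∀ i j k : ℤ, (L : ℤ) < k → h i j k = 0)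
    (y v q : ℤ × ℤ → ℝ)
    (hv_neg : ∀ n : ℤ × ℤ, n.1 < 0 ∨ n.2 < 0 → v n = 0)
    (hq : ∀ n : ℤ × ℤ, 0 ≤ n.1 → 0 ≤ n.2 → q n =
      sgn ((∑ i ∈ Finset.Icc (0 : ℤ) (p : ℤ), ∑ j ∈ Finset.Icc (-(s : ℤ)) (ℓ : ℤ),
        w i j * ∑ k ∈ Finset.Icc (1 : ℤ) (L : ℤ), h i j k * v (n.1 - k * i, n.2 - k * j)) + y n))
    (hv : ∀ n : ℤ × ℤ, 0 ≤ n.1 → 0 ≤ n.2 → v n =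
      (∑ i ∈ Finset.Icc (0 : ℤ) (p : ℤ), ∑ j ∈ Finset.Icc (-(s : ℤ)) (ℓ : ℤ),
        w i j * ∑ k ∈ Finset.Icc (1 : ℤ) (L : ℤ), h i j k * v (n.1 - k * i, n.2 - k * j))
        + y n - q n)
    (hbound : ∀ n : ℤ × ℤ, 0 ≤ n.1 → 0 ≤ n.2 →
      (∑ i ∈ Finset.Icc (0 : ℤ) (p : ℤ), ∑ j ∈ Finset.Icc (-(s : ℤ)) (ℓ : ℤ),
        w i j * ∑ k ∈ Finset.Icc (1 : ℤ) (L : ℤ), |h i j k|) + |y n| ≤ 2) :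
    ∀ n : ℤ × ℤ, 0 ≤ n.1 → 0 ≤ n.2 → |v n| ≤ 1 := by
  exact fun n _ _ => stmt_1_general _ _ L w h
    (fun i hi j _ => toLex_pos_of_ne_zero hw_zero (Finset.mem_Icc.1 hi).1) y v q
    (fun m hm => by simp [hv_neg m hm]) hq hv
    (by simpa only [abs_of_nonneg (hw_nonneg _ _)] using hbound) n
end

section
/- Fix p, s, ℓ ∈ ℕ and a weight matrix w = (w_{i,j}), i ∈ {0,…,p}, j ∈ {−s,…,ℓ}, with w_{i,j} ≥ 0, w_{0,j} = 0 for j ≤ 0, and Σ_{i,j} w_{i,j} = 1; let d_{i,j} = (i,j) ∈ ℤ². Given y : ℕ² → ℝ, define the state v : ℤ² → ℝ and output q : ℕ² → {−1,1} of the first-order weighted ΣΔ quantizer by v_n = 0 for n ∉ ℕ² and, for n ∈ ℕ² in raster order, q_n = sign(Σ_{i,j} w_{i,j} v_{n − d_{i,j}} + y_n) and v_n = Σ_{i,j} w_{i,j} v_{n − d_{i,j}} + y_n − q_n. If sup_{n∈ℕ²} |y_n| ≤ 1, then |v_n| ≤ 1 for all n ∈ ℕ². -/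
lemma abs_sum_mul_le_sum_abs_mul {ι K : Type*} [Ring K] [LinearOrder K] [IsOrderedRing K]
    {D : Finset ι} {w x : ι → K} {C : K} (hx : ∀ k ∈ D, w k ≠ 0 → |x k| ≤ C) :
    |∑ k ∈ D, w k * x k| ≤ (∑ k ∈ D, |w k|) * C := by
  rw [Finset.sum_mul]
  refine (Finset.abs_sum_le_sum_abs _ _).trans (Finset.sum_le_sum fun k hk => ?_)
  by_cases hwk : w k = 0
  · simp [hwk]
  · rw [abs_mul]
    exact mul_le_mul_of_nonneg_left (hx k hk hwk) (abs_nonneg _)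

lemma isWF_ofLex_preimage_prod {α β : Type*} [PartialOrder α] [Preorder β] {s : Set α} {t : Set β}
    (hs : s.IsPWO) (ht : t.IsPWO) : (ofLex ⁻¹' s ×ˢ t).IsWF := by
  rw [← toLex_symm_eq, ← Equiv.image_eq_preimage_symm]
  exact ((hs.prod ht).image_of_monotone Prod.Lex.toLex_mono).isWF

lemma toLex_pos_of_weight_ne_zero {α β M : Type*} [PartialOrder α] [Zero α] [LinearOrder β] [Zero β]
    [Zero M] {w : α → β → M} (hw : ∀ j ≤ 0, w 0 j = 0) {i : α} {j : β} (hi : 0 ≤ i)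
    (hij : w i j ≠ 0) : 0 < toLex (i, j) := by
  refine Prod.Lex.toLex_lt_toLex'.2 ⟨hi, fun hi_zero => lt_of_not_ge fun hj => hij ?_⟩
  rw [← show 0 = i from hi_zero, hw j hj]

theorem stmt_2_general {G ι : Type*} [AddGroup G] [Preorder G] [AddLeftStrictMono G]
    {R : Set G} (hR : R.IsWF) {D : Finset ι} {d : ι → G} {w : ι → ℝ}
    (hd : ∀ k ∈ D, w k ≠ 0 → 0 < d k) {y v q : G → ℝ}
    (hv_init : ∀ n ∉ R, |v n| ≤ 1)
    (hq : ∀ n ∈ R, q n = sgn (∑ k ∈ D, w k * v (n - d k) + y n))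
    (hv : ∀ n ∈ R, v n = ∑ k ∈ D, w k * v (n - d k) + y n - q n)
    (hy : ∀ n ∈ R, ∑ k ∈ D, |w k| + |y n| ≤ 2) (n : G) : |v n| ≤ 1 := by
  by_cases hn : n ∈ R
  · refine Set.WellFoundedOn.induction hR hn (P := (|v ·| ≤ 1)) fun n hn ih => ?_
    have past_bound : ∀ k ∈ D, w k ≠ 0 → |v (n - d k)| ≤ 1 := fun k hk hwk => by
      by_cases hmem : n - d k ∈ R
      · exact ih _ hmem (sub_lt_self n (hd k hk hwk))
      · exact hv_init _ hmem
    rw [hv n hn, hq n hn]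
    refine abs_sub_sgn_le_one ((abs_add_le _ _).trans ?_)
    linarith [abs_sum_mul_le_sum_abs_mul past_bound, hy n hn]
  · exact hv_init n hn

/-- Stability of the first-order weighted 1-bit ΣΔ quantizer in two dimensions:
if `sup_{n ∈ ℕ²} |y_n| ≤ 1` then `|v_n| ≤ 1` for all `n ∈ ℕ²`. -/
theorem stmt_2 (p s ℓ : ℕ) (w : ℤ → ℤ → ℝ)
    (hw_nonneg : ∀ i j : ℤ, 0 ≤ w i j)
    (hw_zero : ∀ j : ℤ, j ≤ 0 → w 0 j = 0)
    (hw_sum : ∑ i ∈ Finset.Icc (0 : ℤ) (p : ℤ), ∑ j ∈ Finset.Icc (-(s : ℤ)) (ℓ : ℤ), w i j = 1)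
    (y v q : ℤ × ℤ → ℝ)
    (hv_neg : ∀ n : ℤ × ℤ, n.1 < 0 ∨ n.2 < 0 → v n = 0)
    (hq : ∀ n : ℤ × ℤ, 0 ≤ n.1 → 0 ≤ n.2 → q n =
      sgn ((∑ i ∈ Finset.Icc (0 : ℤ) (p : ℤ), ∑ j ∈ Finset.Icc (-(s : ℤ)) (ℓ : ℤ),
        w i j * v (n.1 - i, n.2 - j)) + y n))
    (hv : ∀ n : ℤ × ℤ, 0 ≤ n.1 → 0 ≤ n.2 → v n =
      (∑ i ∈ Finset.Icc (0 : ℤ) (p : ℤ), ∑ j ∈ Finset.Icc (-(s : ℤ)) (ℓ : ℤ),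
        w i j * v (n.1 - i, n.2 - j)) + y n - q n)
    (hbound : ∀ n : ℤ × ℤ, 0 ≤ n.1 → 0 ≤ n.2 → |y n| ≤ 1) :
    ∀ n : ℤ × ℤ, 0 ≤ n.1 → 0 ≤ n.2 → |v n| ≤ 1 := by
  intro n _ _
  simp only [← Finset.sum_product'] at hw_sum hq hv
  have quadrant_isWF : (ofLex ⁻¹' Set.Ici (0 : ℤ) ×ˢ Set.Ici (0 : ℤ)).IsWF :=
    isWF_ofLex_preimage_prod bddBelow_Ici.isWF.isPWO bddBelow_Ici.isWF.isPWO
  refine stmt_2_general quadrant_isWF (d := toLex) (v := v ∘ ofLex) (q := q ∘ ofLex)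
    (fun k hk => toLex_pos_of_weight_ne_zero hw_zero ?_) (fun m hm => ?_)
    (fun m hm => hq m hm.1 hm.2) (fun m hm => hv m hm.1 hm.2) (fun m hm => ?_) (toLex n)
  · exact (Finset.mem_Icc.1 (Finset.mem_product.1 hk).1).1
  · have hm_neg : (ofLex m).1 < 0 ∨ (ofLex m).2 < 0 := by
      by_contra! hm_nonneg
      exact hm hm_nonneg
    simp [hv_neg _ hm_neg]
  · simp only [abs_of_nonneg (hw_nonneg _ _), hw_sum]
    linarith [hbound m hm.1 hm.2]
end

section
/- Let r ≥ 1 and let h : ℤ → ℝ be a feedback filter supported on {1,…,L} satisfying the order-r vanishing moment conditions, i.e. Σ_{j=1}^L h_j = 1 and Σ_{j=1}^L h_j j^k = 0 for k = 1,…,r−1, and let C_h = Σ_{j=1}^L h_j j^r be its filter constant. Let Ψ : ℝ² → ℝ be r-times continuously differentiable, and for a ∈ ℝ² let R_{a,r}(u) = Ψ(a+u) − Σ_{ℓ=0}^r Σ_{|α|=ℓ} (u^α/α!) ∂^α Ψ(a) be the r-th order Taylor remainder of Ψ at a. Then for all a, d ∈ ℝ²: Σ_{k=1}^L h_k Ψ(a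 − k d) = Ψ(a) + (−1)^r C_h Σ_{|α|=r} (d^α/α!) ∂^α Ψ(a) + Σ_{k=1}^L h_k R_{a,r}(−k d). -/
/-- Partial derivative in the first coordinate of a function on `ℝ²`. -/
noncomputable def pd1 (f : ℝ × ℝ → ℝ) : ℝ × ℝ → ℝ :=
  fun x => deriv (fun t => f (t, x.2)) x.1

/-- Partial derivative in the second coordinate of a function on `ℝ²`. -/
noncomputable def pd2 (f : ℝ × ℝ → ℝ) : ℝ × ℝ → ℝ :=
  fun x => deriv (fun t => f (x.1, t)) x.2

/-- Mixed partial derivative `∂^α` for the multi-index `α = (a, b)`. -/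
noncomputable def pdm (a b : ℕ) (f : ℝ × ℝ → ℝ) : ℝ × ℝ → ℝ :=
  pd1^[a] (pd2^[b] f)

/-- The `r`-th order Taylor remainder of `Ψ : ℝ² → ℝ` at `a`:
`R_{a,r}(u) = Ψ(a+u) − Σ_{ℓ=0}^r Σ_{|α|=ℓ} (u^α/α!) ∂^α Ψ(a)`. -/
noncomputable def taylorRem2 (r : ℕ) (Ψ : ℝ × ℝ → ℝ) (a u : ℝ × ℝ) : ℝ :=
  Ψ (a + u) - ∑ l ∈ Finset.range (r + 1), ∑ m ∈ Finset.range (l + 1),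
    u.1 ^ (l - m) * u.2 ^ m / ((l - m).factorial * m.factorial) * pdm (l - m) m Ψ a

/-!
The Taylor polynomial of `Ψ` at `a`, evaluated at `-x • d`, is a polynomial in `x` of degree at most
`r` whose coefficient of `x ^ l` is `(-1) ^ l` times the `l`-th homogeneous Taylor term at `d`.
Averaging it against weights whose moments of orders `1, …, r - 1` vanish leaves the constant
coefficient and the top one, the latter multiplied by the `r`-th moment.
-/

section

open Finset

theorem sum_smul_sum_range_pow_smul_of_moments {ι R E : Type*} [Semiring R] [AddCommMonoid E]
    [Module R E] {s : Finset ι} {w x : ι → R} {r : ℕ} (hr : 1 ≤ r) (hm0 : ∑ i ∈ s, w i = 1)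
    (hmk : ∀ k : ℕ, 1 ≤ k → k < r → ∑ i ∈ s, w i * x i ^ k = 0) (c : ℕ → E) :
    ∑ i ∈ s, w i • ∑ l ∈ range (r + 1), x i ^ l • c l
      = c 0 + (∑ i ∈ s, w i * x i ^ r) • c r := by
  have lower_order : ∑ l ∈ range r, (∑ i ∈ s, w i * x i ^ l) • c l = c 0 := by
    rw [sum_eq_single_of_mem 0 (mem_range.mpr hr)]
    · simp [hm0]
    · intro l hl hl0
      rw [hmk l (Nat.one_le_iff_ne_zero.mpr hl0) (mem_range.mp hl), zero_smul]
  calc ∑ i ∈ s, w i • ∑ l ∈ range (r + 1), x i ^ l • c l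
      = ∑ l ∈ range (r + 1), (∑ i ∈ s, w i * x i ^ l) • c l := by
        simp_rw [smul_sum, sum_smul, mul_smul]
        exact sum_comm
    _ = c 0 + (∑ i ∈ s, w i * x i ^ r) • c r := by rw [sum_range_succ, lower_order]

/-- The homogeneous part of degree `l` of the Taylor expansion of `Ψ : ℝ² → ℝ` at `a`, evaluated at
the increment `u`: `Σ_{|α|=l} (u^α/α!) ∂^α Ψ(a)`, with the multi-indices of order `l` enumerated as
`α = (l - m, m)`, `m ≤ l`. -/
noncomputable def taylorTerm2 (l : ℕ) (Ψ : ℝ × ℝ → ℝ) (a u : ℝ × ℝ) : ℝ :=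
  ∑ m ∈ range (l + 1),
    u.1 ^ (l - m) * u.2 ^ m / ((l - m).factorial * m.factorial) * pdm (l - m) m Ψ a

theorem taylorTerm2_zero (Ψ : ℝ × ℝ → ℝ) (a u : ℝ × ℝ) : taylorTerm2 0 Ψ a u = Ψ a := by
  simp [taylorTerm2, pdm]

theorem taylorTerm2_smul (l : ℕ) (Ψ : ℝ × ℝ → ℝ) (a u : ℝ × ℝ) (t : ℝ) :
    taylorTerm2 l Ψ a (t • u) = t ^ l * taylorTerm2 l Ψ a u := by
  rw [taylorTerm2, taylorTerm2, mul_sum]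
  refine sum_congr rfl fun m hm => ?_
  have pow_split : t ^ l = t ^ (l - m) * t ^ m :=
    (pow_sub_mul_pow t (mem_range_succ_iff.mp hm)).symm
  rw [pow_split, Prod.smul_fst, Prod.smul_snd, smul_eq_mul, smul_eq_mul, mul_pow, mul_pow]
  ring

theorem apply_add_eq_sum_taylorTerm2_add_taylorRem2 (r : ℕ) (Ψ : ℝ × ℝ → ℝ) (a u : ℝ × ℝ) :
    Ψ (a + u) = ∑ l ∈ range (r + 1), taylorTerm2 l Ψ a u + taylorRem2 r Ψ a u :=
  (add_sub_cancel _ _).symm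

theorem apply_sub_smul_eq_sum_taylorTerm2_add_taylorRem2 (r : ℕ) (Ψ : ℝ × ℝ → ℝ) (a d : ℝ × ℝ)
    (x : ℝ) :
    Ψ (a - x • d) = ∑ l ∈ range (r + 1), x ^ l * ((-1) ^ l * taylorTerm2 l Ψ a d)
      + taylorRem2 r Ψ a (-(x • d)) := by
  rw [sub_eq_add_neg, apply_add_eq_sum_taylorTerm2_add_taylorRem2 r Ψ a, ← neg_smul]
  congr 1
  refine sum_congr rfl fun l _ => ?_
  rw [taylorTerm2_smul, neg_pow]
  ring

theorem stmt_3_general {ι : Type*} {s : Finset ι} {w x : ι → ℝ} {r : ℕ} (hr : 1 ≤ r)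
    (hm0 : ∑ i ∈ s, w i = 1)
    (hmk : ∀ k : ℕ, 1 ≤ k → k < r → ∑ i ∈ s, w i * x i ^ k = 0)
    (Ψ : ℝ × ℝ → ℝ) (a d : ℝ × ℝ) :
    ∑ i ∈ s, w i * Ψ (a - x i • d)
      = Ψ a + (-1) ^ r * (∑ i ∈ s, w i * x i ^ r) * taylorTerm2 r Ψ a d
        + ∑ i ∈ s, w i * taylorRem2 r Ψ a (-(x i • d)) := by
  have average_taylor : ∑ i ∈ s, w i * ∑ l ∈ range (r + 1),
      x i ^ l * ((-1) ^ l * taylorTerm2 l Ψ a d)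
      = Ψ a + (∑ i ∈ s, w i * x i ^ r) * ((-1) ^ r * taylorTerm2 r Ψ a d) := by
    simpa only [smul_eq_mul, pow_zero, one_mul, taylorTerm2_zero] using
      sum_smul_sum_range_pow_smul_of_moments hr hm0 hmk fun l => (-1) ^ l * taylorTerm2 l Ψ a d
  simp_rw [apply_sub_smul_eq_sum_taylorTerm2_add_taylorRem2 r, mul_add, sum_add_distrib]
  rw [average_taylor]
  ring

end

/-- Directional generalized convolution identity: for a feedback filter `h` with `r`
vanishing moments and filter constant `C_h = Σ_j h_j j^r`, one has
`Σ_k h_k Ψ(a − k d) = Ψ(a) + (−1)^r C_h Σ_{|α|=r} (d^α/α!) ∂^α Ψ(a) + Σ_k h_k R_{a,r}(−k d)`. -/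
theorem stmt_3 (r L : ℕ) (hr : 1 ≤ r) (h : ℤ → ℝ)
    (hcausal : ∀ n : ℤ, n ≤ 0 → h n = 0)
    (hsupp : ∀ n : ℤ, (L : ℤ) < n → h n = 0)
    (hm0 : ∑ j ∈ Finset.Icc (1 : ℤ) (L : ℤ), h j = 1)
    (hmk : ∀ k : ℕ, 1 ≤ k → k < r →
      ∑ j ∈ Finset.Icc (1 : ℤ) (L : ℤ), h j * (j : ℝ) ^ k = 0)
    (Ψ : ℝ × ℝ → ℝ) (hΨ : ContDiff ℝ (r : ℕ∞) Ψ) (a d : ℝ × ℝ) :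
    ∑ k ∈ Finset.Icc (1 : ℤ) (L : ℤ), h k * Ψ (a - (k : ℝ) • d)
      = Ψ a
        + (-1) ^ r * (∑ j ∈ Finset.Icc (1 : ℤ) (L : ℤ), h j * (j : ℝ) ^ r) *
          (∑ m ∈ Finset.range (r + 1),
            d.1 ^ (r - m) * d.2 ^ m / ((r - m).factorial * m.factorial) * pdm (r - m) m Ψ a)
        + ∑ k ∈ Finset.Icc (1 : ℤ) (L : ℤ), h k * taylorRem2 r Ψ a (-((k : ℝ) • d)) :=
  stmt_3_general hr hm0 hmk Ψ a d
end

section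
/- Let r ≥ 1 and let h : ℤ → ℝ be a feedback filter supported on {1,…,L} satisfying the order-r vanishing moment conditions, with filter constant C_h = Σ_{j=1}^L h_j j^r. Let Φ : ℝ → ℝ be r-times continuously differentiable and, for a ∈ ℝ, let R_{a,r}(t) = Φ(a+t) − Σ_{p=0}^r (t^p/p!) Φ^{(p)}(a) be the r-th order Taylor remainder of Φ at a. Then for all a ∈ ℝ and δ > 0: Φ(a) − Σ_{j=1}^L h_j Φ(a − jδ) = (−1)^{r+1} (C_h δ^r / r!) Φ^{(r)}(a) − Σ_{j=1}^L h_j R_{a,r}(−jδ). -/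
/-- The `r`-th order Taylor remainder of `Φ : ℝ → ℝ` at `a`:
`R_{a,r}(t) = Φ(a+t) − Σ_{p=0}^r (t^p/p!) Φ^{(p)}(a)`. -/
noncomputable def taylorRem1 (r : ℕ) (Φ : ℝ → ℝ) (a t : ℝ) : ℝ :=
  Φ (a + t) - ∑ p ∈ Finset.range (r + 1), t ^ p / p.factorial * iteratedDeriv p Φ a

/-!
A filter with `r` vanishing moments maps a polynomial of degree at most `r` to its value at `0` plus
the filter constant times its coefficient of degree `r`. Subtracting this for the Taylor polynomial
from the filtered samples leaves the filtered remainders. The sign `(-1) ^ (r + 1)` arises because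
the filter samples at the backward nodes `-(j * δ)`. The argument is purely algebraic: the same
identity holds with any polynomial of degree at most `r` that takes the value `Φ a` at `0` in place
of the Taylor polynomial.
-/

section Moments

open Finset

variable {ι R M : Type*} {s : Finset ι} {r : ℕ}

/-- The order-`r` vanishing moment conditions for the filter with weight `w j` at the node `x j`,
`j ∈ s`: it reproduces the value at `0` of every polynomial of degree less than `r`. Since
`0 ^ 0 = 1`, the right-hand side `0 ^ k` encodes both the normalization `k = 0` and the vanishing
of the moments `0 < k < r`. -/
def VanishingMoments [Semiring R] (s : Finset ι) (w x : ι → R) (r : ℕ) : Prop :=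
  ∀ k < r, ∑ j ∈ s, w j * x j ^ k = 0 ^ k

theorem vanishingMoments_of_sum_eq_one [Semiring R] {w x : ι → R} (h_one : ∑ j ∈ s, w j = 1)
    (h_zero : ∀ k, 1 ≤ k → k < r → ∑ j ∈ s, w j * x j ^ k = 0) : VanishingMoments s w x r := by
  intro k hk
  obtain rfl | hk_ne := eq_or_ne k 0
  · simpa using h_one
  · rw [h_zero k (Nat.one_le_iff_ne_zero.mpr hk_ne) hk, zero_pow hk_ne]

theorem sum_mul_mul_pow [CommSemiring R] (s : Finset ι) (w x : ι → R) (δ : R) (k : ℕ) :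
    ∑ j ∈ s, w j * (x j * δ) ^ k = (∑ j ∈ s, w j * x j ^ k) * δ ^ k := by
  simp only [mul_pow, sum_mul, mul_assoc]

theorem VanishingMoments.mul_right [CommSemiring R] {w x : ι → R} (hw : VanishingMoments s w x r)
    (δ : R) : VanishingMoments s w (fun j ↦ x j * δ) r := by
  intro k hk
  rw [sum_mul_mul_pow, hw k hk, ← mul_pow, zero_mul]

theorem sum_smul_sum_pow_smul [Semiring R] [AddCommMonoid M] [Module R M] (s : Finset ι)
    (w x : ι → R) (n : ℕ) (c : ℕ → M) :
    ∑ j ∈ s, w j • ∑ p ∈ range n, x j ^ p • c p =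
      ∑ p ∈ range n, (∑ j ∈ s, w j * x j ^ p) • c p := by
  simp only [smul_sum, sum_smul, mul_smul]
  exact sum_comm

theorem VanishingMoments.sum_smul_sum_range_succ [Semiring R] [AddCommMonoid M] [Module R M]
    {w x : ι → R} (hw : VanishingMoments s w x r) (hr : 1 ≤ r) (c : ℕ → M) :
    ∑ j ∈ s, w j • ∑ p ∈ range (r + 1), x j ^ p • c p =
      c 0 + (∑ j ∈ s, w j * x j ^ r) • c r := by
  have h_low : ∑ p ∈ range r, (∑ j ∈ s, w j * x j ^ p) • c p = c 0 :=
    calc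
      _ = ∑ p ∈ range r, (0 : R) ^ p • c p :=
        sum_congr rfl fun p hp ↦ by rw [hw p (mem_range.mp hp)]
      _ = (0 : R) ^ 0 • c 0 :=
        sum_eq_single_of_mem 0 (mem_range.mpr hr) fun p _ hp ↦ by rw [zero_pow hp, zero_smul]
      _ = c 0 := by rw [pow_zero, one_smul]
  rw [sum_smul_sum_pow_smul, sum_range_succ, h_low]

theorem VanishingMoments.sub_sum_smul [Ring R] [AddCommGroup M] [Module R M]
    {w x : ι → R} (hw : VanishingMoments s w x r) (hr : 1 ≤ r) (c : ℕ → M) (y : ι → M) :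
    c 0 - ∑ j ∈ s, w j • y j =
      -((∑ j ∈ s, w j * x j ^ r) • c r) -
        ∑ j ∈ s, w j • (y j - ∑ p ∈ range (r + 1), x j ^ p • c p) := by
  simp only [smul_sub, sum_sub_distrib, hw.sum_smul_sum_range_succ hr]
  abel

theorem stmt_4_general [CommRing R] [AddCommGroup M] [Module R M] {w x : ι → R}
    (hw : VanishingMoments s w x r) (hr : 1 ≤ r) (f : R → M) (a δ : R) (c : ℕ → M)
    (hc : c 0 = f a) :
    f a - ∑ j ∈ s, w j • f (a - x j * δ) =
      ((-1) ^ (r + 1) * ((∑ j ∈ s, w j * x j ^ r) * δ ^ r)) • c r -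
        ∑ j ∈ s, w j • (f (a - x j * δ) - ∑ p ∈ range (r + 1), (-(x j * δ)) ^ p • c p) := by
  have h_sign : -(∑ j ∈ s, w j * (-(x j * δ)) ^ r) =
      (-1) ^ (r + 1) * ((∑ j ∈ s, w j * x j ^ r) * δ ^ r) := by
    simp only [← mul_neg (x _)]
    rw [sum_mul_mul_pow, neg_pow δ]
    ring
  simpa only [hc, ← neg_smul, h_sign, mul_neg] using
    (hw.mul_right (-δ)).sub_sum_smul hr c fun j ↦ f (a - x j * δ)

end Moments

/-- One-dimensional convolution identity: for a feedback filter `h` with `r` vanishing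
moments and filter constant `C_h = Σ_j h_j j^r`, for all `a ∈ ℝ` and `δ > 0`,
`Φ(a) − Σ_j h_j Φ(a − jδ) = (−1)^{r+1} (C_h δ^r / r!) Φ^{(r)}(a) − Σ_j h_j R_{a,r}(−jδ)`. -/
theorem stmt_4 (r L : ℕ) (hr : 1 ≤ r) (h : ℤ → ℝ)
    (hcausal : ∀ n : ℤ, n ≤ 0 → h n = 0)
    (hsupp : ∀ n : ℤ, (L : ℤ) < n → h n = 0)
    (hm0 : ∑ j ∈ Finset.Icc (1 : ℤ) (L : ℤ), h j = 1)
    (hmk : ∀ k : ℕ, 1 ≤ k → k < r →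
      ∑ j ∈ Finset.Icc (1 : ℤ) (L : ℤ), h j * (j : ℝ) ^ k = 0)
    (Φ : ℝ → ℝ) (hΦ : ContDiff ℝ (r : ℕ∞) Φ) (a δ : ℝ) (hδ : 0 < δ) :
    Φ a - ∑ j ∈ Finset.Icc (1 : ℤ) (L : ℤ), h j * Φ (a - (j : ℝ) * δ)
      = (-1) ^ (r + 1) *
          ((∑ j ∈ Finset.Icc (1 : ℤ) (L : ℤ), h j * (j : ℝ) ^ r) * δ ^ r / r.factorial) *
            iteratedDeriv r Φ a
        - ∑ j ∈ Finset.Icc (1 : ℤ) (L : ℤ), h j * taylorRem1 r Φ a (-((j : ℝ) * δ)) := by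
  have h_taylor := stmt_4_general (vanishingMoments_of_sum_eq_one hm0 hmk) hr Φ a δ
    (fun p ↦ iteratedDeriv p Φ a / p.factorial) (by simp)
  simpa only [taylorRem1, smul_eq_mul, ← sub_eq_add_neg, mul_div_assoc', div_mul_eq_mul_div]
    using h_taylor
end

section
/- Let r ≥ 1 and let c : ℤ → ℝ be finitely supported with c_n = 0 for n < 0. Then the following are equivalent: (i) there exists a finitely supported g : ℤ → ℝ with g_n = 0 for n < 0 such that c = Δ^r g, where Δ is the backward finite difference operator (Δg)_n = g_n − g_{n−1}; (ii) c has r vanishing moments, i.e. Σ_{n∈ℤ} c_n n^k = 0 for every k = 0,…,r−1 (with the convention 0⁰ = 1). -/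
/-- The backward finite difference operator on sequences indexed by `ℤ`:
`(Δg)_n = g_n − g_{n−1}`. -/
def bdiff (g : ℤ → ℝ) : ℤ → ℝ := fun n => g n - g (n - 1)

/-!
Summation by parts moves `Δ` from `g` onto the weight:
`∑ n ^ k (Δg)_n = -∑ ((n + 1) ^ k - n ^ k) g_n`. Expanding binomially, the `k`-th moment of `Δg` is
a combination of the moments of `g` of order below `k`, in which the moment of order `k - 1` has
coefficient `-k`. Hence `Δ` raises the number of vanishing moments by exactly one. Conversely, a
sequence whose sum vanishes is `Δ` of its partial sums, which are again finitely supported, so `r`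
vanishing moments allow `r` factors `Δ` to be split off. The support of `Δg` starts where that of
`g` does, so `g` is causal as soon as `Δ^r g` is.
-/

open Function Set
open scoped fwdDiff

lemma hasFiniteSupport_iff_of_eq_zero_of_lt {α A : Type*} [LinearOrder α] [LocallyFiniteOrder α]
    [Zero A] {g : α → A} {a : α} (h : ∀ n < a, g n = 0) :
    g.HasFiniteSupport ↔ ∃ M, ∀ n, M < n → g n = 0 := by
  have : Nonempty α := ⟨a⟩
  have below : BddBelow g.support := ⟨a, fun n hn ↦ not_lt.1 (mt (h n) hn)⟩
  rw [HasFiniteSupport, Set.finite_iff_bddBelow_bddAbove, and_iff_right below]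
  exact exists_congr fun M ↦ forall_congr' fun n ↦ by rw [mem_support, ← not_lt, not_imp_not]

lemma hasFiniteSupport_comp_sub {M A : Type*} [AddGroup M] [Zero A] {g : M → A}
    (hg : g.HasFiniteSupport) (h : M) : HasFiniteSupport fun n ↦ g (n - h) :=
  Set.Finite.preimage (sub_left_injective (b := h)).injOn hg

section BackwardDifference

variable {M A : Type*} [AddCommGroup M] [AddCommGroup A]

/-- The backward difference `n ↦ g n - g (n - h)` with step `h`, the counterpart of Mathlib's
`fwdDiff`, for functions with values in any additive group; `bdiff` is the case of real sequences
and `h = 1`. -/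
def bwdDiff (h : M) (g : M → A) : M → A := fun n ↦ g n - g (n - h)

lemma hasFiniteSupport_bwdDiff {g : M → A} (hg : g.HasFiniteSupport) (h : M) :
    (bwdDiff h g).HasFiniteSupport :=
  hg.sub (hasFiniteSupport_comp_sub hg h)

lemma hasFiniteSupport_bwdDiff_iterate {g : M → A} (hg : g.HasFiniteSupport) (h : M) (r : ℕ) :
    ((bwdDiff h)^[r] g).HasFiniteSupport :=
  Function.Iterate.rec _ hg (fun _ hf ↦ hasFiniteSupport_bwdDiff hf h) r

theorem finsum_smul_bwdDiff {R : Type*} [Ring R] [Module R A] (h : M) (f : M → R) {g : M → A}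
    (hg : g.HasFiniteSupport) :
    ∑ᶠ n, f n • bwdDiff h g n = -∑ᶠ n, Δ_[h] f n • g n := by
  have shift : ∑ᶠ n, f n • g (n - h) = ∑ᶠ n, f (n + h) • g n := by
    rw [← finsum_comp_equiv (Equiv.addRight h)]
    simp
  calc ∑ᶠ n, f n • bwdDiff h g n
      = ∑ᶠ n, f n • g n - ∑ᶠ n, f n • g (n - h) := by
        have hg_shift := hasFiniteSupport_comp_sub hg h
        simp only [bwdDiff, smul_sub]
        exact finsum_sub_distrib (hg.fun_smul_right f) (hg_shift.fun_smul_right f)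
    _ = -∑ᶠ n, Δ_[h] f n • g n := by
        simp only [shift, fwdDiff, sub_smul]
        rw [finsum_sub_distrib (hg.fun_smul_right _) (hg.fun_smul_right f), neg_sub]

end BackwardDifference

lemma fwdDiff_one_pow {R : Type*} [Ring R] (k : ℕ) (x : R) :
    Δ_[1] (fun y : R ↦ y ^ k) x = ∑ j ∈ Finset.range k, k.choose j • x ^ j := by
  simp [fwdDiff, (Commute.one_right x).add_pow, Finset.sum_range_succ, Nat.cast_comm]

section Sequences

variable {A : Type*} [AddCommGroup A]

lemma exists_eq_bwdDiff_of_finsum_eq_zero {c : ℤ → A} (hc : c.HasFiniteSupport)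
    (hsum : ∑ᶠ n, c n = 0) : ∃ d : ℤ → A, d.HasFiniteSupport ∧ c = bwdDiff 1 d := by
  obtain ⟨a, ha⟩ := Set.Finite.bddBelow hc
  obtain ⟨b, hb⟩ := Set.Finite.bddAbove hc
  refine ⟨fun n ↦ ∑ᶠ i ∈ Iic n, c i, (finite_Icc a b).subset fun n hn ↦ ⟨?_, ?_⟩, ?_⟩
  · by_contra! hna
    refine hn (finsum_mem_of_eqOn_zero fun i hi ↦ ?_)
    exact notMem_support.1 fun his ↦ (hna.trans_le (ha his)).not_ge hi
  · by_contra! hbn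
    refine hn ?_
    rw [← hsum, ← finsum_mem_univ]
    exact finsum_mem_inter_support_eq' _ _ _ fun i hi ↦ by simpa using (hb hi).trans hbn.le
  · funext n
    have Iic_eq : Iic n = insert n (Iic (n - 1)) := by
      ext i
      simp only [mem_Iic, mem_insert_iff]
      lia
    rw [bwdDiff, Iic_eq, finsum_mem_insert' _ (by simp) (Set.Finite.inter_of_right hc _),
      add_sub_cancel_right]

lemma eq_zero_of_bwdDiff_eq_zero {g : ℤ → A} (hg : g.HasFiniteSupport) {a : ℤ}
    (h : ∀ n < a, bwdDiff 1 g n = 0) : ∀ n < a, g n = 0 := by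
  intro n hn
  by_contra hgn
  obtain ⟨m, hmn, hm⟩ := Set.Finite.exists_le_minimal hg (mem_support.2 hgn)
  have g_pred : g (m - 1) = 0 := notMem_support.1 (hm.not_prop_of_lt (sub_one_lt m))
  have g_min : g m = 0 := by simpa [bwdDiff, g_pred] using h m (hmn.trans_lt hn)
  exact hm.prop g_min

lemma eq_zero_of_bwdDiff_iterate_eq_zero {g : ℤ → A} (hg : g.HasFiniteSupport) {a : ℤ} {r : ℕ}
    (h : ∀ n < a, (bwdDiff 1)^[r] g n = 0) : ∀ n < a, g n = 0 := by
  induction r with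
  | zero => exact h
  | succ r ih =>
    rw [iterate_succ_apply'] at h
    exact ih (eq_zero_of_bwdDiff_eq_zero (hasFiniteSupport_bwdDiff_iterate hg 1 r) h)

/-- The `k`-th moment `∑ n ^ k • c n`, with `0 ^ 0 = 1`. The weights are kept in `ℤ` so that `c` may
take values in any additive group; `finsum` gives the value `0` if infinitely many terms are
nonzero. -/
noncomputable def moment (k : ℕ) (c : ℤ → A) : A := ∑ᶠ n : ℤ, n ^ k • c n

lemma moment_zero (c : ℤ → A) : moment 0 c = ∑ᶠ n, c n := by
  simp [moment]

lemma moment_eq_finsum_mul {R : Type*} [Ring R] (k : ℕ) (c : ℤ → R) :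
    moment k c = ∑ᶠ n : ℤ, c n * (n : R) ^ k :=
  finsum_congr fun n ↦ by rw [zsmul_eq_mul, Int.cast_comm, Int.cast_pow]

theorem moment_bwdDiff {d : ℤ → A} (hd : d.HasFiniteSupport) (k : ℕ) :
    moment k (bwdDiff 1 d) = -∑ j ∈ Finset.range k, k.choose j • moment j d := by
  have hterm (j : ℕ) : HasFiniteSupport fun n : ℤ ↦ n ^ j • d n := hd.fun_smul_right _
  calc moment k (bwdDiff 1 d)
      = -∑ᶠ n : ℤ, ∑ j ∈ Finset.range k, k.choose j • n ^ j • d n := by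
        simp only [moment, finsum_smul_bwdDiff 1 _ hd, fwdDiff_one_pow, Finset.sum_smul,
          smul_assoc]
    _ = -∑ j ∈ Finset.range k, k.choose j • moment j d := by
        rw [finsum_sum_comm _ _ fun j _ ↦ (hterm j).fun_smul_right _]
        simp only [moment, smul_finsum' _ (hterm _)]

theorem forall_moment_bwdDiff_eq_zero_iff [IsAddTorsionFree A] {d : ℤ → A}
    (hd : d.HasFiniteSupport) (r : ℕ) :
    (∀ k < r + 1, moment k (bwdDiff 1 d) = 0) ↔ ∀ k < r, moment k d = 0 := by
  simp only [moment_bwdDiff hd, neg_eq_zero]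
  refine ⟨fun h k hk ↦ ?_, fun h k hk ↦ Finset.sum_eq_zero fun j hj ↦ ?_⟩
  · induction k using Nat.strong_induction_on with
    | _ k ih =>
      have lower : ∑ j ∈ Finset.range k, (k + 1).choose j • moment j d = 0 :=
        Finset.sum_eq_zero fun j hj ↦ by
          rw [ih j (Finset.mem_range.1 hj) ((Finset.mem_range.1 hj).trans hk), smul_zero]
      have top : (k + 1) • moment k d = 0 := by
        simpa [Finset.sum_range_succ, lower] using h (k + 1) (Nat.succ_lt_succ hk)
      exact (smul_eq_zero.1 top).resolve_left k.succ_ne_zero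
  · rw [h j ((Finset.mem_range.1 hj).trans_le (Nat.lt_succ_iff.1 hk)), smul_zero]

theorem stmt_5_general [IsAddTorsionFree A] (r : ℕ) {c : ℤ → A} (hc : c.HasFiniteSupport) :
    (∃ g : ℤ → A, g.HasFiniteSupport ∧ c = (bwdDiff 1)^[r] g) ↔ ∀ k < r, moment k c = 0 := by
  induction r generalizing c with
  | zero => simpa using hc
  | succ r ih =>
    constructor
    · rintro ⟨g, hg, rfl⟩
      have hg_iter := hasFiniteSupport_bwdDiff_iterate hg 1 r
      rw [iterate_succ_apply', forall_moment_bwdDiff_eq_zero_iff hg_iter]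
      exact (ih hg_iter).1 ⟨g, hg, rfl⟩
    · intro h
      obtain ⟨d, hd, rfl⟩ :=
        exists_eq_bwdDiff_of_finsum_eq_zero hc (moment_zero c ▸ h 0 r.succ_pos)
      obtain ⟨g, hg, rfl⟩ := (ih hd).2 ((forall_moment_bwdDiff_eq_zero_iff hd r).1 h)
      exact ⟨g, hg, (iterate_succ_apply' _ _ _).symm⟩

end Sequences

/-- A causal finitely supported sequence `c` can be written as `c = Δ^r g` with `g`
causal and finitely supported if and only if `c` has `r` vanishing moments,
i.e. `Σ_n c_n n^k = 0` for `k = 0, …, r−1`. -/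
theorem stmt_5 (r : ℕ) (hr : 1 ≤ r) (c : ℤ → ℝ)
    (hc_neg : ∀ n : ℤ, n < 0 → c n = 0)
    (hc_supp : ∃ N : ℤ, ∀ n : ℤ, N < n → c n = 0) :
    (∃ g : ℤ → ℝ, (∀ n : ℤ, n < 0 → g n = 0) ∧ (∃ M : ℤ, ∀ n : ℤ, M < n → g n = 0) ∧
        c = bdiff^[r] g)
      ↔ (∀ k : ℕ, k < r → ∑ᶠ n : ℤ, c n * (n : ℝ) ^ k = 0) := by
  have hc : c.HasFiniteSupport := (hasFiniteSupport_iff_of_eq_zero_of_lt hc_neg).2 hc_supp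
  simp only [← moment_eq_finsum_mul]
  rw [← stmt_5_general r hc]
  refine exists_congr fun g ↦ ⟨?_, ?_⟩
  · rintro ⟨hg_neg, hg_supp, h⟩
    exact ⟨(hasFiniteSupport_iff_of_eq_zero_of_lt hg_neg).2 hg_supp, h⟩
  · rintro ⟨hg, rfl⟩
    have hg_neg := eq_zero_of_bwdDiff_iterate_eq_zero hg hc_neg
    exact ⟨hg_neg, (hasFiniteSupport_iff_of_eq_zero_of_lt hg_neg).1 hg, rfl⟩
end

section
/- Let h : ℤ → ℝ be a feedback filter supported on {1,…,L}, let y : ℕ → ℝ be bounded, and let v : ℤ → ℝ, q : ℕ → {−1,1} be produced by the 1-bit ΣΔ quantizer: v_n = 0 for n < 0 and, for n ≥ 0, q_n = sign((h∗v)_n + y_n), v_n = (h∗v)_n + y_n − q_n with (h∗v)_n = Σ_{j=1}^L h_j v_{n−j}. Assume there is V ≥ 0 with |v_n| ≤ V for all n. Let Φ : ℝ → ℝ be a Schwartz function. Then for every λ > 0 and every x ∈ ℝ, both series below converge absolutely and λ^{−1} Σ_{n∈ℕ} (y_n − q_n) Φ(x − n/λ) = λ^{−1} Σ_{n∈ℕ}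 v_n ( Φ(x − n/λ) − Σ_{j=1}^L h_j Φ(x − (n+j)/λ) ). -/
/-!
Each `y n - q n` is the value `v n - ∑ j, h j * v (n - j)` of the filter `δ - h` applied to the
state. The sequence `v` is bounded, while the samples of `Φ` along an arithmetic progression are
absolutely summable, so the filter can be moved onto the samples, where it becomes the transposed
filter `g ↦ g n - ∑ j, h j * g (n + j)`. The transposition is carried out over `ℤ`, where
translations are bijections. Since `v` vanishes at negative times and `h` is causal, both series
over `ℤ` have their supports in `ℕ`.
-/

open scoped SchwartzMap

section Algebra

variable {G R M : Type*} [AddGroup G] [Ring R] [AddCommGroup M] [Module R M]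

/-- The residual `(δ - h) * v` of a sequence `v` under the feedback filter `h`. The finite set
`s` is the set of delays, and only the values of `h` on `s` are used. -/
def filterResidual (s : Finset G) (h : G → R) (v : G → M) (n : G) : M :=
  v n - ∑ j ∈ s, h j • v (n - j)

/-- The transpose of `filterResidual` with respect to the pairing `∑' n, v n • g n`: the filter
reads its input at the advanced times `n + j` instead of the delayed times `n - j`. -/
def transposedFilterResidual (s : Finset G) (h : G → R) (g : G → M) (n : G) : M :=
  g n - ∑ j ∈ s, h j • g (n + j)

theorem tsum_translate_smul [TopologicalSpace M] (v : G → R) (g : G → M) (j : G) :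
    ∑' n, v (n - j) • g n = ∑' n, v n • g (n + j) := by
  rw [← (Equiv.addRight j).tsum_eq fun n => v (n - j) • g n]
  simp only [Equiv.coe_addRight, add_sub_cancel_right]

end Algebra

theorem filterResidual_eq_zero_of_neg {G R M : Type*} [AddCommGroup G] [PartialOrder G]
    [IsOrderedAddMonoid G] [Ring R] [AddCommGroup M] [Module R M] {s : Finset G}
    (hs : ∀ j ∈ s, 0 ≤ j) (h : G → R) {v : G → M} (hv : ∀ n < 0, v n = 0) {n : G} (hn : n < 0) :
    filterResidual s h v n = 0 := by
  have delayed_eq_zero : ∀ j ∈ s, h j • v (n - j) = 0 := fun j hj => by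
    rw [hv (n - j) ((sub_le_self n (hs j hj)).trans_lt hn), smul_zero]
  rw [filterResidual, hv n hn, Finset.sum_eq_zero delayed_eq_zero, sub_zero]

section Normed

variable {G R E : Type*} [AddGroup G] [NormedAddCommGroup E]

theorem summable_norm_smul_of_norm_le {ι : Type*} [NormedRing R] [Module R E] [IsBoundedSMul R E]
    {a : ι → R} {C : ℝ} (ha : ∀ i, ‖a i‖ ≤ C) {g : ι → E} (hg : Summable fun i => ‖g i‖) :
    Summable fun i => ‖a i • g i‖ :=
  (hg.mul_left C).of_nonneg_of_le (fun _ => norm_nonneg _) fun i =>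
    (norm_smul_le _ _).trans (mul_le_mul_of_nonneg_right (ha i) (norm_nonneg _))

theorem norm_filterResidual_le [NormedRing R] [Module R E] [IsBoundedSMul R E] (s : Finset G)
    (h : G → R) {v : G → E} {V : ℝ} (hv : ∀ n, ‖v n‖ ≤ V) (n : G) :
    ‖filterResidual s h v n‖ ≤ V + ∑ j ∈ s, ‖h j‖ * V :=
  (norm_sub_le _ _).trans <| add_le_add (hv n) <| norm_sum_le_of_le s fun _ _ =>
    (norm_smul_le _ _).trans (mul_le_mul_of_nonneg_left (hv _) (norm_nonneg _))

theorem summable_norm_transposedFilterResidual [NormedRing R] [Module R E] [IsBoundedSMul R E]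
    (s : Finset G) (h : G → R) {g : G → E} (hg : Summable fun n => ‖g n‖) :
    Summable fun n => ‖transposedFilterResidual s h g n‖ := by
  have translated (j : G) : Summable fun n => ‖g (n + j)‖ :=
    hg.comp_injective (add_left_injective j)
  have dominating : Summable fun n => ‖g n‖ + ∑ j ∈ s, ‖h j • g (n + j)‖ :=
    hg.add <| summable_sum fun j _ =>
      summable_norm_smul_of_norm_le (fun _ => le_rfl) (translated j)
  exact dominating.of_nonneg_of_le (fun _ => norm_nonneg _) fun _ =>
    (norm_sub_le _ _).trans (add_le_add le_rfl (norm_sum_le _ _))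

variable [NormedCommRing R] [Module R E] [IsBoundedSMul R E] [CompleteSpace E]

theorem tsum_filterResidual_smul (s : Finset G) (h : G → R) {v : G → R} {V : ℝ}
    (hv : ∀ n, ‖v n‖ ≤ V) {g : G → E} (hg : Summable fun n => ‖g n‖) :
    ∑' n, filterResidual s h v n • g n = ∑' n, v n • transposedFilterResidual s h g n := by
  have undelayed : Summable fun n => v n • g n := (summable_norm_smul_of_norm_le hv hg).of_norm
  have delayed (j : G) : Summable fun n => v (n - j) • g n :=
    (summable_norm_smul_of_norm_le (fun n => hv (n - j)) hg).of_norm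
  have translated (j : G) : Summable fun n => ‖g (n + j)‖ :=
    hg.comp_injective (add_left_injective j)
  have advanced (j : G) : Summable fun n => v n • g (n + j) :=
    (summable_norm_smul_of_norm_le hv (translated j)).of_norm
  have exchange (j : G) :
      ∑' n, h j • v (n - j) • g n = ∑' n, h j • v n • g (n + j) := by
    rw [(delayed j).tsum_const_smul, (advanced j).tsum_const_smul, tsum_translate_smul]
  calc ∑' n, filterResidual s h v n • g n
      = ∑' n, (v n • g n - ∑ j ∈ s, h j • v (n - j) • g n) := by
        simp only [filterResidual, sub_smul, Finset.sum_smul, smul_eq_mul, mul_smul]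
    _ = ∑' n, v n • g n - ∑ j ∈ s, ∑' n, h j • v (n - j) • g n := by
        rw [undelayed.tsum_sub (summable_sum fun j _ => (delayed j).const_smul (h j)),
          Summable.tsum_finsetSum fun j _ => (delayed j).const_smul (h j)]
    _ = ∑' n, v n • g n - ∑ j ∈ s, ∑' n, h j • v n • g (n + j) := by
        simp only [exchange]
    _ = ∑' n, (v n • g n - ∑ j ∈ s, h j • v n • g (n + j)) := by
        rw [undelayed.tsum_sub (summable_sum fun j _ => (advanced j).const_smul (h j)),
          Summable.tsum_finsetSum fun j _ => (advanced j).const_smul (h j)]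
    _ = ∑' n, v n • transposedFilterResidual s h g n := by
        simp only [transposedFilterResidual, smul_sub, Finset.smul_sum, smul_comm (h _) (v _)]

theorem tsum_natCast_eq_tsum_int {M : Type*} [AddCommMonoid M] [TopologicalSpace M] {f : ℤ → M}
    (hf : ∀ n < 0, f n = 0) : ∑' n : ℕ, f n = ∑' n, f n :=
  Nat.cast_injective.tsum_eq fun n hn =>
    ⟨n.toNat, Int.toNat_of_nonneg (not_lt.1 (mt (hf n) hn))⟩

theorem tsum_nat_filterResidual_smul {s : Finset ℤ} (hs : ∀ j ∈ s, 0 ≤ j) (h : ℤ → R)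
    {v : ℤ → R} (hv_neg : ∀ n < 0, v n = 0) {V : ℝ} (hv : ∀ n, ‖v n‖ ≤ V)
    {g : ℤ → E} (hg : Summable fun n => ‖g n‖) :
    ∑' n : ℕ, filterResidual s h v n • g n
      = ∑' n : ℕ, v n • transposedFilterResidual s h g n := by
  have residual_causal : ∀ n < 0, filterResidual s h v n • g n = 0 := fun n hn => by
    rw [filterResidual_eq_zero_of_neg hs h hv_neg hn, zero_smul]
  have state_causal : ∀ n < 0, v n • transposedFilterResidual s h g n = 0 := fun n hn => by
    rw [hv_neg n hn, zero_smul]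
  rw [tsum_natCast_eq_tsum_int residual_causal, tsum_natCast_eq_tsum_int state_causal,
    tsum_filterResidual_smul s h hv hg]

end Normed

section Schwartz

variable {D F : Type*} [NormedAddCommGroup D] [NormedSpace ℝ D]
  [NormedAddCommGroup F] [NormedSpace ℝ F]

theorem summable_norm_schwartzMap_intCast (f : 𝓢(ℝ, F)) : Summable fun n : ℤ => ‖f n‖ := by
  have decay : (fun n : ℤ => ‖f n‖) =O[Filter.cofinite] fun n : ℤ => |(n : ℝ)| ^ (-2 : ℝ) :=
    ((f.isBigO_cocompact_rpow (-2)).comp_tendsto Int.tendsto_coe_cofinite).norm_left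
  exact summable_of_isBigO (Real.summable_abs_int_rpow one_lt_two) decay

theorem antilipschitzWith_sub_smul (x : D) {u : D} (hu : u ≠ 0) :
    AntilipschitzWith ‖u‖₊⁻¹ fun t : ℝ => x - t • u := by
  refine AntilipschitzWith.of_le_mul_dist fun t t' => ?_
  have : ‖u‖ ≠ 0 := norm_ne_zero_iff.2 hu
  rw [dist_sub_left, dist_eq_norm (t • u), ← sub_smul, norm_smul, ← dist_eq_norm t,
    NNReal.coe_inv, coe_nnnorm, mul_comm (dist t t'), inv_mul_cancel_left₀ this]

theorem summable_norm_schwartzMap_sub_smul (f : 𝓢(D, F)) (x : D) {u : D} (hu : u ≠ 0) :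
    Summable fun n : ℤ => ‖f (x - (n : ℝ) • u)‖ := by
  have temperate : (fun t : ℝ => x - t • u).HasTemperateGrowth := by fun_prop
  exact summable_norm_schwartzMap_intCast <|
    SchwartzMap.compCLMOfAntilipschitz ℝ temperate (antilipschitzWith_sub_smul x hu) f

end Schwartz

theorem stmt_7_general {R D F : Type*} [NormedCommRing R] [NormedAddCommGroup D] [NormedSpace ℝ D]
    [NormedAddCommGroup F] [NormedSpace ℝ F] [Module R F] [IsBoundedSMul R F] [CompleteSpace F]
    {s : Finset ℤ} (hs : ∀ j ∈ s, 0 ≤ j) (h : ℤ → R) {y q : ℕ → R} {v : ℤ → R}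
    (hv_neg : ∀ n < 0, v n = 0)
    (hv : ∀ n : ℕ, v n = (∑ j ∈ s, h j * v (n - j)) + y n - q n)
    {V : ℝ} (hvb : ∀ n, ‖v n‖ ≤ V) (Φ : 𝓢(D, F)) (x : D) {u : D} (hu : u ≠ 0) :
    Summable (fun n : ℕ => ‖(y n - q n) • Φ (x - (n : ℝ) • u)‖) ∧
    Summable (fun n : ℕ => ‖v n •
      (Φ (x - (n : ℝ) • u) - ∑ j ∈ s, h j • Φ (x - ((n : ℝ) + (j : ℝ)) • u))‖) ∧
    ∑' n : ℕ, (y n - q n) • Φ (x - (n : ℝ) • u)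
      = ∑' n : ℕ, v n •
          (Φ (x - (n : ℝ) • u) - ∑ j ∈ s, h j • Φ (x - ((n : ℝ) + (j : ℝ)) • u)) := by
  let g : ℤ → F := fun n => Φ (x - (n : ℝ) • u)
  have hg : Summable fun n => ‖g n‖ := summable_norm_schwartzMap_sub_smul Φ x hu
  have error_eq (n : ℕ) : y n - q n = filterResidual s h v n := by
    simp only [filterResidual, smul_eq_mul, hv n]
    ring
  have sample_eq (n : ℕ) : Φ (x - (n : ℝ) • u) = g n := by
    simp only [g, Int.cast_natCast]
  have correction_eq (n : ℕ) :
      g n - ∑ j ∈ s, h j • Φ (x - ((n : ℝ) + (j : ℝ)) • u) = transposedFilterResidual s h g n := by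
    simp only [g, transposedFilterResidual, Int.cast_add, Int.cast_natCast]
  simp only [error_eq, sample_eq, correction_eq]
  have error_summable : Summable fun n : ℤ => ‖filterResidual s h v n • g n‖ :=
    summable_norm_smul_of_norm_le (norm_filterResidual_le s h hvb) hg
  have correction_summable : Summable fun n : ℤ => ‖v n • transposedFilterResidual s h g n‖ :=
    summable_norm_smul_of_norm_le hvb (summable_norm_transposedFilterResidual s h hg)
  exact ⟨error_summable.comp_injective Nat.cast_injective,
    correction_summable.comp_injective Nat.cast_injective,
    tsum_nat_filterResidual_smul hs h hv_neg hvb hg⟩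

/-- Rewriting of the one-dimensional quantization error: for the 1-bit ΣΔ quantizer with
bounded state, both series converge absolutely and
`λ⁻¹ Σ_n (y_n − q_n) Φ(x − n/λ) = λ⁻¹ Σ_n v_n (Φ(x − n/λ) − Σ_j h_j Φ(x − (n+j)/λ))`. -/
theorem stmt_7 (L : ℕ) (h : ℤ → ℝ)
    (hcausal : ∀ n : ℤ, n ≤ 0 → h n = 0)
    (hsupp : ∀ n : ℤ, (L : ℤ) < n → h n = 0)
    (y : ℕ → ℝ) (hy : ∃ B : ℝ, ∀ n : ℕ, |y n| ≤ B)
    (v : ℤ → ℝ) (q : ℕ → ℝ)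
    (hv_neg : ∀ n : ℤ, n < 0 → v n = 0)
    (hq : ∀ n : ℕ, q n =
      sgn ((∑ j ∈ Finset.Icc (1 : ℤ) (L : ℤ), h j * v ((n : ℤ) - j)) + y n))
    (hv : ∀ n : ℕ, v (n : ℤ) =
      (∑ j ∈ Finset.Icc (1 : ℤ) (L : ℤ), h j * v ((n : ℤ) - j)) + y n - q n)
    (V : ℝ) (hV : 0 ≤ V) (hvb : ∀ n : ℤ, |v n| ≤ V)
    (Φ : SchwartzMap ℝ ℝ) (lam : ℝ) (hlam : 0 < lam) (x : ℝ) :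
    Summable (fun n : ℕ => |(y n - q n) * Φ (x - n / lam)|) ∧
    Summable (fun n : ℕ => |v (n : ℤ) *
      (Φ (x - n / lam) - ∑ j ∈ Finset.Icc (1 : ℤ) (L : ℤ),
        h j * Φ (x - ((n : ℝ) + (j : ℝ)) / lam))|) ∧
    lam⁻¹ * ∑' n : ℕ, (y n - q n) * Φ (x - n / lam)
      = lam⁻¹ * ∑' n : ℕ, v (n : ℤ) *
          (Φ (x - n / lam) - ∑ j ∈ Finset.Icc (1 : ℤ) (L : ℤ),
            h j * Φ (x - ((n : ℝ) + (j : ℝ)) / lam)) := by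
  obtain ⟨error_summable, correction_summable, series_eq⟩ := stmt_7_general
    (fun j hj => zero_le_one.trans (Finset.mem_Icc.1 hj).1) h hv_neg hv hvb Φ x
    (inv_ne_zero hlam.ne')
  simp only [smul_eq_mul, ← div_eq_mul_inv, Real.norm_eq_abs]
    at error_summable correction_summable series_eq
  exact ⟨error_summable, correction_summable, congrArg (lam⁻¹ * ·) series_eq⟩
end

section
/- Let g : ℝ → ℝ be a Schwartz function. Then for every λ > 0 and every x ∈ ℝ, λ^{−1} Σ_{n∈ℕ} |g(x − n/λ)| ≤ ‖g‖_{L¹(ℝ)} + λ^{−1} ‖g′‖_{L¹(ℝ)}. -/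
open MeasureTheory

/-!
On an interval `[a, b]` the values of `f` differ from each other by at most `∫ ‖f'‖` over `[a, b]`,
so averaging `‖f ξ‖ ≤ ‖f t‖ + ∫ ‖f'‖` over `t ∈ [a, b]` bounds one term `(b - a) * ‖f ξ‖` of a
Riemann sum of `‖f‖`. Summing over disjoint cells of length at most `h`, the first terms add up to
at most `∫ ‖f‖` and the second to at most `h * ∫ ‖f'‖`. The theorem takes the cells
`(x - (n + 1) / λ, x - n / λ]` tagged at their right endpoints.
-/

section RiemannSum

open Set
open scoped Function

variable {E : Type*} [NormedAddCommGroup E] [NormedSpace ℝ E] {f : ℝ → E}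

theorem norm_sub_le_integral_norm_deriv {a b s t : ℝ}
    (hcont : ContinuousOn f (Icc a b)) (hdiff : DifferentiableOn ℝ f (Ioo a b))
    (hderiv_int : IntervalIntegrable (deriv f) volume a b) (hs : s ∈ Icc a b) (ht : t ∈ Icc a b) :
    ‖f t - f s‖ ≤ ∫ u in a..b, ‖deriv f u‖ := by
  wlog hst : s ≤ t generalizing s t
  · rw [norm_sub_rev]
    exact this ht hs (le_of_not_ge hst)
  have hab : a ≤ b := hs.1.trans hs.2
  calc ‖f t - f s‖ ≤ ∫ u in s..t, ‖deriv f u‖ :=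
        norm_sub_le_integral_of_norm_deriv_le_of_le hst
          (hcont.mono (Icc_subset_Icc hs.1 ht.2)) (hdiff.mono (Ioo_subset_Ioo hs.1 ht.2))
          (.of_forall fun _ _ => le_rfl)
          (hderiv_int.norm.mono_set <| by
            rw [uIcc_of_le hst, uIcc_of_le hab]
            exact Icc_subset_Icc hs.1 ht.2)
    _ ≤ ∫ u in a..b, ‖deriv f u‖ :=
        intervalIntegral.integral_mono_interval hs.1 hst ht.2
          (.of_forall fun _ => norm_nonneg _) hderiv_int.norm

theorem sub_mul_norm_le_integral_norm_add {a b ξ : ℝ}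
    (hcont : ContinuousOn f (Icc a b)) (hdiff : DifferentiableOn ℝ f (Ioo a b))
    (hderiv_int : IntervalIntegrable (deriv f) volume a b) (hξ : ξ ∈ Icc a b) :
    (b - a) * ‖f ξ‖ ≤ (∫ t in a..b, ‖f t‖) + (b - a) * ∫ t in a..b, ‖deriv f t‖ := by
  have hab : a ≤ b := hξ.1.trans hξ.2
  have hnorm : IntervalIntegrable (fun t => ‖f t‖) volume a b :=
    hcont.norm.intervalIntegrable_of_Icc hab
  have pointwise : ∀ t ∈ Icc a b, ‖f ξ‖ ≤ ‖f t‖ + ∫ u in a..b, ‖deriv f u‖ := fun t ht =>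
    (norm_le_norm_add_norm_sub' _ _).trans <|
      add_le_add_right (norm_sub_le_integral_norm_deriv hcont hdiff hderiv_int ht hξ) _
  calc (b - a) * ‖f ξ‖ = ∫ _ in a..b, ‖f ξ‖ := by simp
    _ ≤ ∫ t in a..b, (‖f t‖ + ∫ u in a..b, ‖deriv f u‖) :=
        intervalIntegral.integral_mono_on hab intervalIntegrable_const
          (hnorm.add intervalIntegrable_const) pointwise
    _ = (∫ t in a..b, ‖f t‖) + (b - a) * ∫ t in a..b, ‖deriv f t‖ := by
        rw [intervalIntegral.integral_add hnorm intervalIntegrable_const,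
          intervalIntegral.integral_const, smul_eq_mul]

theorem sum_sub_mul_norm_le_setIntegral_norm_add {ι : Type*} {s : Finset ι} {a b ξ : ι → ℝ}
    {S : Set ℝ} {h : ℝ} (hcont : ContinuousOn f S) (hdiff : DifferentiableOn ℝ f (interior S))
    (hf_int : IntegrableOn f S) (hderiv_int : IntegrableOn (deriv f) S) (hh : 0 ≤ h)
    (hsub : ∀ i ∈ s, Icc (a i) (b i) ⊆ S) (hmesh : ∀ i ∈ s, b i - a i ≤ h)
    (hdisj : (s : Set ι).Pairwise (Disjoint on fun i => Ioc (a i) (b i)))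
    (hξ : ∀ i ∈ s, ξ i ∈ Icc (a i) (b i)) :
    ∑ i ∈ s, (b i - a i) * ‖f (ξ i)‖ ≤ (∫ t in S, ‖f t‖) + h * ∫ t in S, ‖deriv f t‖ := by
  set F : ℝ → ℝ := fun t => ‖f t‖ + h * ‖deriv f t‖ with hF
  have hFint : IntegrableOn F S := hf_int.norm.add (hderiv_int.norm.const_mul h)
  have hsub' : ∀ i ∈ s, Ioc (a i) (b i) ⊆ S := fun i hi => Ioc_subset_Icc_self.trans (hsub i hi)
  have cell : ∀ i ∈ s, (b i - a i) * ‖f (ξ i)‖ ≤ ∫ t in Ioc (a i) (b i), F t := fun i hi => by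
    have hab : a i ≤ b i := (hξ i hi).1.trans (hξ i hi).2
    have hIoo : Ioo (a i) (b i) ⊆ interior S :=
      interior_maximal (Ioo_subset_Icc_self.trans (hsub i hi)) isOpen_Ioo
    have hd : IntervalIntegrable (deriv f) volume (a i) (b i) :=
      (intervalIntegrable_iff_integrableOn_Ioc_of_le hab).2 (hderiv_int.mono_set (hsub' i hi))
    calc (b i - a i) * ‖f (ξ i)‖
        ≤ (∫ t in a i..b i, ‖f t‖) + (b i - a i) * ∫ t in a i..b i, ‖deriv f t‖ :=
          sub_mul_norm_le_integral_norm_add (hcont.mono (hsub i hi)) (hdiff.mono hIoo) hd (hξ i hi)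
      _ ≤ (∫ t in a i..b i, ‖f t‖) + h * ∫ t in a i..b i, ‖deriv f t‖ := by
          gcongr
          · exact intervalIntegral.integral_nonneg hab fun _ _ => norm_nonneg _
          · exact hmesh i hi
      _ = ∫ t in Ioc (a i) (b i), F t := by
          rw [intervalIntegral.integral_of_le hab, intervalIntegral.integral_of_le hab,
            ← integral_const_mul, ← integral_add (hf_int.mono_set (hsub' i hi)).norm
              ((hderiv_int.mono_set (hsub' i hi)).norm.const_mul h)]
  calc ∑ i ∈ s, (b i - a i) * ‖f (ξ i)‖
      ≤ ∑ i ∈ s, ∫ t in Ioc (a i) (b i), F t := Finset.sum_le_sum cell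
    _ = ∫ t in ⋃ i ∈ s, Ioc (a i) (b i), F t :=
        (integral_biUnion_finset s (fun _ _ => measurableSet_Ioc) hdisj
          fun i hi => hFint.mono_set (hsub' i hi)).symm
    _ ≤ ∫ t in S, F t :=
        setIntegral_mono_set hFint (.of_forall fun _ => by positivity)
          (iUnion₂_subset hsub').eventuallyLE
    _ = (∫ t in S, ‖f t‖) + h * ∫ t in S, ‖deriv f t‖ := by
        rw [hF, integral_add hf_int.norm (hderiv_int.norm.const_mul h), integral_const_mul]

theorem stmt_9_general {x lam : ℝ} (hcont : ContinuousOn f (Iic x))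
    (hdiff : DifferentiableOn ℝ f (Iio x)) (hf_int : IntegrableOn f (Iic x))
    (hderiv_int : IntegrableOn (deriv f) (Iic x)) (hlam : 0 < lam) :
    Summable (fun n : ℕ => ‖f (x - n / lam)‖) ∧
      lam⁻¹ * ∑' n : ℕ, ‖f (x - n / lam)‖
        ≤ (∫ t in Iic x, ‖f t‖) + lam⁻¹ * ∫ t in Iic x, ‖deriv f t‖ := by
  set node : ℕ → ℝ := fun n => x - n / lam with hnode
  have node_sub (n : ℕ) : node n - node (n + 1) = lam⁻¹ := by
    simp only [hnode, Nat.cast_add_one]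
    ring
  have node_antitone : Antitone node := antitone_nat_of_succ_le fun n =>
    sub_nonneg.1 (node_sub n ▸ inv_nonneg.2 hlam.le)
  have node_le (n : ℕ) : node n ≤ x := sub_le_self x (by positivity)
  have partial_sum (s : Finset ℕ) : ∑ n ∈ s, lam⁻¹ * ‖f (node n)‖
      ≤ (∫ t in Iic x, ‖f t‖) + lam⁻¹ * ∫ t in Iic x, ‖deriv f t‖ := by
    simpa only [node_sub] using
      sum_sub_mul_norm_le_setIntegral_norm_add (s := s) (a := fun n => node (n + 1)) (b := node)
        hcont (by rwa [interior_Iic]) hf_int hderiv_int (inv_nonneg.2 hlam.le)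
        (fun n _ => Icc_subset_Iic_self.trans (Iic_subset_Iic.2 (node_le n)))
        (fun n _ => (node_sub n).le)
        (node_antitone.pairwise_disjoint_on_Ioc_succ.set_pairwise _)
        (fun n _ => right_mem_Icc.2 (node_antitone n.le_succ))
  have nonneg (n : ℕ) : 0 ≤ lam⁻¹ * ‖f (node n)‖ := by positivity
  refine ⟨(summable_mul_left_iff (inv_ne_zero hlam.ne')).1 (summable_of_sum_le nonneg partial_sum),
    ?_⟩
  rw [← tsum_mul_left]
  exact Real.tsum_le_of_sum_le nonneg partial_sum

end RiemannSum

/-- Quantitative Riemann-sum estimate for a Schwartz function `g` on `ℝ`: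
`λ⁻¹ Σ_{n∈ℕ} |g(x − n/λ)| ≤ ‖g‖_{L¹} + λ⁻¹ ‖g′‖_{L¹}`. -/
theorem stmt_9 (g : SchwartzMap ℝ ℝ) (lam : ℝ) (hlam : 0 < lam) (x : ℝ) :
    lam⁻¹ * ∑' n : ℕ, |g (x - n / lam)|
      ≤ (∫ t : ℝ, |g t|) + lam⁻¹ * ∫ t : ℝ, |deriv (⇑g) t| := by
  have hg : Integrable g := g.integrable
  have hg' : Integrable (deriv g) := (SchwartzMap.derivCLM ℝ ℝ g).integrable
  refine (stmt_9_general g.continuous.continuousOn g.differentiable.differentiableOn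
    hg.integrableOn hg'.integrableOn hlam).2.trans ?_
  gcongr
  · exact setIntegral_le_integral hg.norm (.of_forall fun _ => norm_nonneg _)
  · exact setIntegral_le_integral hg'.norm (.of_forall fun _ => norm_nonneg _)
end

section
/- Let g : ℝ² → ℝ be a Schwartz function. Then for every λ > 0 and every x ∈ ℝ², λ^{−2} Σ_{n∈ℕ²} |g(x − n/λ)| ≤ ‖g‖_{L¹(ℝ²)} + λ^{−1} ( ‖∂₁ g‖_{L¹(ℝ²)} + ‖∂₂ g‖_{L¹(ℝ²)} ) + λ^{−2} ‖∂₁∂₂ g‖_{L¹(ℝ²)}. -/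
open MeasureTheory

/-!
On an interval `I` of length `h` the fundamental theorem of calculus gives
`|f c| ≤ |f s| + ∫_I |f'|` for all `c, s ∈ I`; averaging over `s` yields
`h |f c| ≤ ∫_I |f| + h ∫_I |f'|`. Doing this in each coordinate in turn bounds `h² |f p|` at a point
`p` of a square of side `h` by the integral over that square of
`|f| + h (|∂₁f| + |∂₂f|) + h² |∂₁∂₂f|`. The squares with corners at the lattice points
`x - n / λ`, `n ∈ ℤ²`, tile the plane, so summing gives the estimate with `h = λ⁻¹`.
-/

open Set
open scoped LineDeriv SchwartzMap

section PointValues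

variable {E : Type*} [NormedAddCommGroup E] [NormedSpace ℝ E]

lemma norm_le_norm_add_setIntegral_norm_deriv {f f' : ℝ → E} {a b c s : ℝ}
    (hf : ∀ u ∈ Icc a b, HasDerivAt f (f' u) u) (hf' : IntegrableOn f' (Ioc a b))
    (hc : c ∈ Icc a b) (hs : s ∈ Icc a b) :
    ‖f c‖ ≤ ‖f s‖ + ∫ u in Ioc a b, ‖f' u‖ := by
  have displacement {p q : ℝ} (hp : p ∈ Icc a b) (hq : q ∈ Icc a b) (hpq : p ≤ q) :
      ‖f q - f p‖ ≤ ∫ u in Ioc a b, ‖f' u‖ := by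
    have hsub : Icc p q ⊆ Icc a b := Icc_subset_Icc hp.1 hq.2
    have hsub' : Ioc p q ⊆ Ioc a b := Ioc_subset_Ioc hp.1 hq.2
    calc ‖f q - f p‖ ≤ ∫ u in p..q, ‖f' u‖ :=
          norm_sub_le_integral_of_norm_deriv_le_of_le hpq
            (fun u hu => (hf u (hsub hu)).continuousAt.continuousWithinAt)
            (fun u hu => (hf u (hsub (Ioo_subset_Icc_self hu))).differentiableAt
              |>.differentiableWithinAt)
            (.of_forall fun u hu => by rw [(hf u (hsub (Ioo_subset_Icc_self hu))).deriv])
            ((intervalIntegrable_iff_integrableOn_Ioc_of_le hpq).2 (hf'.mono_set hsub').norm)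
      _ = ∫ u in Ioc p q, ‖f' u‖ := intervalIntegral.integral_of_le hpq
      _ ≤ ∫ u in Ioc a b, ‖f' u‖ :=
          setIntegral_mono_set hf'.norm (.of_forall fun _ => norm_nonneg _) hsub'.eventuallyLE
  have hdist : ‖f c - f s‖ ≤ ∫ u in Ioc a b, ‖f' u‖ := by
    rcases le_total s c with hsc | hcs
    · exact displacement hs hc hsc
    · exact norm_sub_rev (f c) (f s) ▸ displacement hc hs hcs
  exact (norm_le_norm_add_norm_sub' (f c) (f s)).trans (by gcongr)

lemma mul_norm_le_setIntegral_norm_add_deriv {f f' : ℝ → E} {a b c : ℝ}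
    (hf : ∀ u ∈ Icc a b, HasDerivAt f (f' u) u) (hf' : IntegrableOn f' (Ioc a b))
    (hc : c ∈ Icc a b) :
    (b - a) * ‖f c‖ ≤ (∫ s in Ioc a b, ‖f s‖) + (b - a) * ∫ s in Ioc a b, ‖f' s‖ := by
  have hab : a ≤ b := hc.1.trans hc.2
  have hconst (r : ℝ) : IntegrableOn (fun _ => r) (Ioc a b) := integrableOn_const (by simp)
  have hfi : IntegrableOn (fun s => ‖f s‖) (Ioc a b) :=
    (ContinuousOn.integrableOn_Icc fun u hu =>
      (hf u hu).continuousAt.norm.continuousWithinAt).mono_set Ioc_subset_Icc_self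
  have haverage := setIntegral_mono_on (hconst ‖f c‖) (hfi.add (hconst (∫ s in Ioc a b, ‖f' s‖)))
    measurableSet_Ioc fun s hs =>
      norm_le_norm_add_setIntegral_norm_deriv hf hf' hc (Ioc_subset_Icc_self hs)
  simpa [integral_add hfi (hconst _), Real.volume_real_Ioc_of_le hab] using haverage

section Slab

variable {α : Type*} [MeasurableSpace α] {μ : Measure α} [SFinite μ] {f f₁ : ℝ × α → E} {a b c : ℝ}

lemma ae_mul_norm_le_setIntegral_norm_add_deriv_fst
    (hf₁ : ∀ᵐ y ∂μ, ∀ s ∈ Icc a b, HasDerivAt (fun u => f (u, y)) (f₁ (s, y)) s)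
    (hi₁ : Integrable f₁ ((volume.restrict (Ioc a b)).prod μ)) (hc : c ∈ Icc a b) :
    ∀ᵐ y ∂μ, (b - a) * ‖f (c, y)‖ ≤
      (∫ s in Ioc a b, ‖f (s, y)‖) + (b - a) * ∫ s in Ioc a b, ‖f₁ (s, y)‖ := by
  filter_upwards [hf₁, hi₁.prod_left_ae] with y hy hiy
  exact mul_norm_le_setIntegral_norm_add_deriv hy hiy hc

lemma integrable_slice_of_hasDerivAt_fst
    (hf₁ : ∀ᵐ y ∂μ, ∀ s ∈ Icc a b, HasDerivAt (fun u => f (u, y)) (f₁ (s, y)) s)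
    (hi : Integrable f ((volume.restrict (Ioc a b)).prod μ))
    (hi₁ : Integrable f₁ ((volume.restrict (Ioc a b)).prod μ))
    (hab : a < b) (hc : c ∈ Icc a b) (hfc : AEStronglyMeasurable (fun y => f (c, y)) μ) :
    Integrable (fun y => f (c, y)) μ := by
  have hbound := hi.norm.integral_prod_right.add (hi₁.norm.integral_prod_right.const_mul (b - a))
  refine (hbound.const_mul (b - a)⁻¹).mono' hfc ?_
  filter_upwards [ae_mul_norm_le_setIntegral_norm_add_deriv_fst hf₁ hi₁ hc] with y hy
  exact (le_inv_mul_iff₀ (sub_pos.2 hab)).2 hy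

lemma mul_integral_norm_slice_le
    (hf₁ : ∀ᵐ y ∂μ, ∀ s ∈ Icc a b, HasDerivAt (fun u => f (u, y)) (f₁ (s, y)) s)
    (hi : Integrable f ((volume.restrict (Ioc a b)).prod μ))
    (hi₁ : Integrable f₁ ((volume.restrict (Ioc a b)).prod μ)) (hc : c ∈ Icc a b) :
    (b - a) * ∫ y, ‖f (c, y)‖ ∂μ ≤
      (∫ p, ‖f p‖ ∂(volume.restrict (Ioc a b)).prod μ) +
        (b - a) * ∫ p, ‖f₁ p‖ ∂(volume.restrict (Ioc a b)).prod μ := by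
  have hab : 0 ≤ b - a := sub_nonneg.2 (hc.1.trans hc.2)
  calc (b - a) * ∫ y, ‖f (c, y)‖ ∂μ = ∫ y, (b - a) * ‖f (c, y)‖ ∂μ := (integral_const_mul _ _).symm
    _ ≤ ∫ y, ((∫ s in Ioc a b, ‖f (s, y)‖) + (b - a) * ∫ s in Ioc a b, ‖f₁ (s, y)‖) ∂μ :=
        integral_mono_of_nonneg (.of_forall fun _ => by positivity)
          (hi.norm.integral_prod_right.add (hi₁.norm.integral_prod_right.const_mul _))
          (ae_mul_norm_le_setIntegral_norm_add_deriv_fst hf₁ hi₁ hc)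
    _ = _ := by
        rw [integral_add hi.norm.integral_prod_right (hi₁.norm.integral_prod_right.const_mul _),
          integral_const_mul, integral_prod_symm _ hi.norm, integral_prod_symm _ hi₁.norm]

end Slab

lemma mul_mul_norm_le_setIntegral_rectangle [CompleteSpace E] {f f₁ f₂ f₁₂ : ℝ × ℝ → E}
    {a b c d : ℝ} {p : ℝ × ℝ}
    (hf₁ : ∀ q ∈ Icc a b ×ˢ Icc c d, HasDerivAt (fun s => f (s, q.2)) (f₁ q) q.1)
    (hf₂ : ∀ q ∈ Icc a b ×ˢ Icc c d, HasDerivAt (fun t => f (q.1, t)) (f₂ q) q.2)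
    (hf₁₂ : ∀ q ∈ Icc a b ×ˢ Icc c d, HasDerivAt (fun s => f₂ (s, q.2)) (f₁₂ q) q.1)
    (hi : IntegrableOn f (Ioc a b ×ˢ Ioc c d)) (hi₁ : IntegrableOn f₁ (Ioc a b ×ˢ Ioc c d))
    (hi₂ : IntegrableOn f₂ (Ioc a b ×ˢ Ioc c d)) (hi₁₂ : IntegrableOn f₁₂ (Ioc a b ×ˢ Ioc c d))
    (hab : a < b) (hp : p ∈ Icc a b ×ˢ Icc c d) :
    (b - a) * (d - c) * ‖f p‖ ≤
      (∫ q in Ioc a b ×ˢ Ioc c d, ‖f q‖) +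
        ((b - a) * (∫ q in Ioc a b ×ˢ Ioc c d, ‖f₁ q‖) +
          (d - c) * ∫ q in Ioc a b ×ˢ Ioc c d, ‖f₂ q‖) +
        (b - a) * (d - c) * ∫ q in Ioc a b ×ˢ Ioc c d, ‖f₁₂ q‖ := by
  obtain ⟨hp₁, hp₂⟩ := hp
  have hcd : 0 ≤ d - c := sub_nonneg.2 (hp₂.1.trans hp₂.2)
  have hprod : (volume : Measure (ℝ × ℝ)).restrict (Ioc a b ×ˢ Ioc c d) =
      (volume.restrict (Ioc a b)).prod (volume.restrict (Ioc c d)) :=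
    (Measure.prod_restrict _ _).symm
  rw [IntegrableOn, hprod] at hi hi₁ hi₂ hi₁₂
  have hslice {g g₁ : ℝ × ℝ → E}
      (hg : ∀ q ∈ Icc a b ×ˢ Icc c d, HasDerivAt (fun s => g (s, q.2)) (g₁ q) q.1) :
      ∀ᵐ t ∂volume.restrict (Ioc c d), ∀ s ∈ Icc a b,
        HasDerivAt (fun u => g (u, t)) (g₁ (s, t)) s :=
    ae_restrict_of_forall_mem measurableSet_Ioc fun t ht s hs =>
      hg (s, t) ⟨hs, Ioc_subset_Icc_self ht⟩
  -- A single section of an integrable function may fail to be measurable; this one is a derivative.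
  have hmeas : AEStronglyMeasurable (fun t => f₂ (p.1, t)) (volume.restrict (Ioc c d)) :=
    (aestronglyMeasurable_deriv (fun t => f (p.1, t)) _).congr <|
      ae_restrict_of_forall_mem measurableSet_Ioc fun t ht =>
        (hf₂ (p.1, t) ⟨hp₁, Ioc_subset_Icc_self ht⟩).deriv
  have hvertical := mul_norm_le_setIntegral_norm_add_deriv (f := fun t => f (p.1, t))
    (fun t ht => hf₂ (p.1, t) ⟨hp₁, ht⟩)
    (integrable_slice_of_hasDerivAt_fst (hslice hf₁₂) hi₂ hi₁₂ hab hp₁ hmeas) hp₂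
  have hhorizontal := mul_integral_norm_slice_le (hslice hf₁) hi hi₁ hp₁
  have hhorizontal₂ := mul_integral_norm_slice_le (hslice hf₁₂) hi₂ hi₁₂ hp₁
  rw [hprod]
  linear_combination (b - a) * hvertical + hhorizontal + (d - c) * hhorizontal₂

end PointValues

section Grid

/-- The half-open square of side `h` with lower left corner `x + n • h`: the cell with index `n` of
the square grid of mesh `h` through `x`. -/
def gridCell (x : ℝ × ℝ) (h : ℝ) (n : ℤ × ℤ) : Set (ℝ × ℝ) :=
  Ioc (x.1 + n.1 • h) (x.1 + (n.1 + 1) • h) ×ˢ Ioc (x.2 + n.2 • h) (x.2 + (n.2 + 1) • h)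

lemma measurableSet_gridCell (x : ℝ × ℝ) (h : ℝ) (n : ℤ × ℤ) : MeasurableSet (gridCell x h n) :=
  measurableSet_Ioc.prod measurableSet_Ioc

lemma pairwise_disjoint_gridCell (x : ℝ × ℝ) (h : ℝ) :
    Pairwise (Function.onFun Disjoint (gridCell x h)) := by
  intro m n hmn
  rw [Function.onFun, gridCell, gridCell, disjoint_prod]
  rcases not_and_or.1 (mt Prod.ext_iff.2 hmn) with h₁ | h₂
  · exact .inl (pairwise_disjoint_Ioc_add_zsmul x.1 h h₁)
  · exact .inr (pairwise_disjoint_Ioc_add_zsmul x.2 h h₂)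

lemma iUnion_gridCell (x : ℝ × ℝ) {h : ℝ} (hh : 0 < h) : ⋃ n, gridCell x h n = univ := by
  simp only [gridCell]
  rw [iUnion_prod (fun i : ℤ => Ioc (x.1 + i • h) (x.1 + (i + 1) • h))
    (fun j : ℤ => Ioc (x.2 + j • h) (x.2 + (j + 1) • h)),
    iUnion_Ioc_add_zsmul hh, iUnion_Ioc_add_zsmul hh, univ_prod_univ]

variable {E : Type*} [NormedAddCommGroup E] [NormedSpace ℝ E]

lemma hasSum_setIntegral_gridCell {f : ℝ × ℝ → E} (hf : Integrable f) (x : ℝ × ℝ) {h : ℝ}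
    (hh : 0 < h) : HasSum (fun n => ∫ p in gridCell x h n, f p) (∫ p, f p) := by
  simpa [iUnion_gridCell x hh] using hasSum_integral_iUnion (measurableSet_gridCell x h)
    (pairwise_disjoint_gridCell x h) hf.integrableOn

lemma sq_mul_norm_le_setIntegral_gridCell [CompleteSpace E] {f f₁ f₂ f₁₂ : ℝ × ℝ → E}
    (hf₁ : ∀ p, HasDerivAt (fun s => f (s, p.2)) (f₁ p) p.1)
    (hf₂ : ∀ p, HasDerivAt (fun t => f (p.1, t)) (f₂ p) p.2)
    (hf₁₂ : ∀ p, HasDerivAt (fun s => f₂ (s, p.2)) (f₁₂ p) p.1)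
    (hi : Integrable f) (hi₁ : Integrable f₁) (hi₂ : Integrable f₂) (hi₁₂ : Integrable f₁₂)
    (x : ℝ × ℝ) {h : ℝ} (hh : 0 < h) (n : ℤ × ℤ) :
    h ^ 2 * ‖f (x.1 + n.1 • h, x.2 + n.2 • h)‖ ≤
      (∫ p in gridCell x h n, ‖f p‖) +
        h * ((∫ p in gridCell x h n, ‖f₁ p‖) + ∫ p in gridCell x h n, ‖f₂ p‖) +
        h ^ 2 * ∫ p in gridCell x h n, ‖f₁₂ p‖ := by
  have hside (y : ℝ) (k : ℤ) : y + (k + 1) • h - (y + k • h) = h := by rw [add_one_zsmul]; ring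
  have hlt (y : ℝ) (k : ℤ) : y + k • h < y + (k + 1) • h := sub_pos.1 ((hside y k).symm ▸ hh)
  have hcorner : (x.1 + n.1 • h, x.2 + n.2 • h) ∈ Icc (x.1 + n.1 • h) (x.1 + (n.1 + 1) • h) ×ˢ
      Icc (x.2 + n.2 • h) (x.2 + (n.2 + 1) • h) :=
    ⟨left_mem_Icc.2 (hlt x.1 n.1).le, left_mem_Icc.2 (hlt x.2 n.2).le⟩
  have hcell := mul_mul_norm_le_setIntegral_rectangle (fun q _ => hf₁ q) (fun q _ => hf₂ q)
    (fun q _ => hf₁₂ q) hi.integrableOn hi₁.integrableOn hi₂.integrableOn hi₁₂.integrableOn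
    (hlt x.1 n.1) hcorner
  rwa [hside, hside, ← mul_add, ← sq] at hcell

end Grid

section PartialDerivatives

variable {𝕜 F E : Type*} [NontriviallyNormedField 𝕜] [NormedAddCommGroup F] [NormedSpace 𝕜 F]
  [NormedAddCommGroup E] [NormedSpace 𝕜 E]

lemma hasDerivAt_fst_of_hasFDerivAt {f : 𝕜 × F → E} {f' : 𝕜 × F →L[𝕜] E} {p : 𝕜 × F}
    (hf : HasFDerivAt f f' p) : HasDerivAt (fun s => f (s, p.2)) (f' (1, 0)) p.1 :=
  hf.comp_hasDerivAt p.1 ((hasDerivAt_id _).prodMk (hasDerivAt_const _ _))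

lemma hasDerivAt_snd_of_hasFDerivAt {f : F × 𝕜 → E} {f' : F × 𝕜 →L[𝕜] E} {p : F × 𝕜}
    (hf : HasFDerivAt f f' p) : HasDerivAt (fun t => f (p.1, t)) (f' (0, 1)) p.2 :=
  hf.comp_hasDerivAt p.2 ((hasDerivAt_const _ _).prodMk (hasDerivAt_id _))

end PartialDerivatives

section Schwartz

variable {E : Type*} [NormedAddCommGroup E] [NormedSpace ℝ E]

lemma hasDerivAt_fst_lineDerivOp (g : 𝓢(ℝ × ℝ, E)) (p : ℝ × ℝ) :
    HasDerivAt (fun s => g (s, p.2)) (∂_{((1, 0) : ℝ × ℝ)} g p) p.1 :=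
  hasDerivAt_fst_of_hasFDerivAt g.differentiableAt.hasFDerivAt

lemma hasDerivAt_snd_lineDerivOp (g : 𝓢(ℝ × ℝ, E)) (p : ℝ × ℝ) :
    HasDerivAt (fun t => g (p.1, t)) (∂_{((0, 1) : ℝ × ℝ)} g p) p.2 :=
  hasDerivAt_snd_of_hasFDerivAt g.differentiableAt.hasFDerivAt

lemma pd1_eq_lineDerivOp (g : 𝓢(ℝ × ℝ, ℝ)) : pd1 g = ∂_{((1, 0) : ℝ × ℝ)} g :=
  funext fun p => (hasDerivAt_fst_lineDerivOp g p).deriv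

lemma pd2_eq_lineDerivOp (g : 𝓢(ℝ × ℝ, ℝ)) : pd2 g = ∂_{((0, 1) : ℝ × ℝ)} g :=
  funext fun p => (hasDerivAt_snd_lineDerivOp g p).deriv

end Schwartz

lemma tsum_natCast_prod_le_tsum {F : ℤ × ℤ → ℝ} (hF : Summable F) (hF₀ : 0 ≤ F) :
    ∑' n : ℕ × ℕ, F (n.1, n.2) ≤ ∑' n, F n :=
  tsum_comp_le_tsum_of_inj hF hF₀ (Nat.cast_injective.prodMap Nat.cast_injective)

theorem stmt_10_general {E : Type*} [NormedAddCommGroup E] [NormedSpace ℝ E] [CompleteSpace E]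
    {f f₁ f₂ f₁₂ : ℝ × ℝ → E}
    (hf₁ : ∀ p, HasDerivAt (fun s => f (s, p.2)) (f₁ p) p.1)
    (hf₂ : ∀ p, HasDerivAt (fun t => f (p.1, t)) (f₂ p) p.2)
    (hf₁₂ : ∀ p, HasDerivAt (fun s => f₂ (s, p.2)) (f₁₂ p) p.1)
    (hi : Integrable f) (hi₁ : Integrable f₁) (hi₂ : Integrable f₂) (hi₁₂ : Integrable f₁₂)
    {lam : ℝ} (hlam : 0 < lam) (x : ℝ × ℝ) :
    Summable (fun n : ℤ × ℤ => ‖f (x.1 - n.1 / lam, x.2 - n.2 / lam)‖) ∧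
      (lam ^ 2)⁻¹ * ∑' n : ℤ × ℤ, ‖f (x.1 - n.1 / lam, x.2 - n.2 / lam)‖ ≤
        (∫ p, ‖f p‖) + lam⁻¹ * ((∫ p, ‖f₁ p‖) + ∫ p, ‖f₂ p‖) + (lam ^ 2)⁻¹ * ∫ p, ‖f₁₂ p‖ := by
  have hh : 0 < lam⁻¹ := inv_pos.2 hlam
  have hcells {φ : ℝ × ℝ → E} (hφ : Integrable φ) :=
    (Equiv.neg (ℤ × ℤ)).hasSum_iff.2 (hasSum_setIntegral_gridCell hφ.norm x hh)
  have hbound := ((hcells hi).add (((hcells hi₁).add (hcells hi₂)).mul_left lam⁻¹)).add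
    ((hcells hi₁₂).mul_left (lam⁻¹ ^ 2))
  have hterm (n : ℤ × ℤ) := sq_mul_norm_le_setIntegral_gridCell hf₁ hf₂ hf₁₂ hi hi₁ hi₂ hi₁₂
    x hh (-n)
  simp only [Prod.fst_neg, Prod.snd_neg, neg_smul, zsmul_eq_mul, ← div_eq_mul_inv,
    ← sub_eq_add_neg] at hterm
  have hsummable := Summable.of_nonneg_of_le (fun _ => by positivity) hterm hbound.summable
  refine ⟨(summable_mul_left_iff (by positivity)).1 hsummable, ?_⟩
  rw [← inv_pow, ← tsum_mul_left]
  exact hasSum_le hterm hsummable.hasSum hbound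

/-- Quantitative Riemann-sum estimate for a Schwartz function `g` on `ℝ²`:
`λ⁻² Σ_{n∈ℕ²} |g(x − n/λ)| ≤ ‖g‖_{L¹} + λ⁻¹(‖∂₁g‖_{L¹} + ‖∂₂g‖_{L¹}) + λ⁻² ‖∂₁∂₂g‖_{L¹}`. -/
theorem stmt_10 (g : SchwartzMap (ℝ × ℝ) ℝ) (lam : ℝ) (hlam : 0 < lam) (x : ℝ × ℝ) :
    (lam ^ 2)⁻¹ * ∑' n : ℕ × ℕ, |g (x.1 - n.1 / lam, x.2 - n.2 / lam)|
      ≤ (∫ t : ℝ × ℝ, |g t|)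
        + lam⁻¹ * ((∫ t : ℝ × ℝ, |pd1 (⇑g) t|) + ∫ t : ℝ × ℝ, |pd2 (⇑g) t|)
        + (lam ^ 2)⁻¹ * ∫ t : ℝ × ℝ, |pd1 (pd2 (⇑g)) t| := by
  rw [pd1_eq_lineDerivOp, pd2_eq_lineDerivOp, pd1_eq_lineDerivOp]
  obtain ⟨hsummable, hle⟩ := stmt_10_general (hasDerivAt_fst_lineDerivOp g)
    (hasDerivAt_snd_lineDerivOp g) (hasDerivAt_fst_lineDerivOp (∂_{((0, 1) : ℝ × ℝ)} g))
    g.integrable (SchwartzMap.integrable _) (SchwartzMap.integrable _) (SchwartzMap.integrable _)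
    hlam x
  refine le_trans ?_ hle
  gcongr
  exact tsum_natCast_prod_le_tsum hsummable fun _ => norm_nonneg _
end

section
/- Let r ≥ 1, let h : ℤ → ℝ be a feedback filter supported on {1,…,L} satisfying the order-r vanishing moment conditions, with filter constant C_h = Σ_{j=1}^L h_j j^r, and let Φ : ℝ → ℝ be a Schwartz function. Then there exists a constant C′ ≥ 0, depending only on Φ, h, and r, such that: for every bounded input y : ℕ → ℝ, if the state sequence v of the 1-bit ΣΔ quantizer (v_n = 0 for n < 0; for n ≥ 0, q_n = sign((h∗v)_n + y_n), v_n = (h∗v)_n + y_n − q_n with (h∗v)_n = Σ_{j=1}^L h_j v_{n−j}) satisfies |v_n| ≤ V for all n, then for every λ ≥ 1 and every x ∈ ℝ, |f_λ(x) − f_q(x)| ≤ λ^{−r} V ( |C_h| ‖Φ^{(r)}‖_{L¹(ℝ)} / r! + C′ λ^{−1} ), where f_λ(x) = λ^{−1} Σ_{n∈ℕ} y_n Φ(x − n/λ) and f_q(x) = λ^{−1} Σ_{n∈ℕ} q_n Φ(x − n/λ). -/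
open MeasureTheory

/-!
Write `δ = λ⁻¹`. Substituting `y - q = v - h ∗ v` and summing by parts moves the filter onto the
kernel:
`f_λ(x) - f_q(x) = δ ∑ₙ vₙ (Φ(tₙ) - ∑ⱼ hⱼ Φ(tₙ - jδ))` with `tₙ = x - nδ`.
Expanding `Φ(tₙ - jδ)` around `tₙ`, the vanishing moments kill the Taylor terms of orders
`1, …, r - 1`, and `∑ⱼ hⱼ = 1` cancels the term of order `0`. What is left is
`± δ ^ r (C_h / r!) Φ⁽ʳ⁾(tₙ)` plus integral remainders over the windows `[tₙ - jδ, tₙ]`. Summed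
over `n` with weight `δ`, the norms of the first terms form a Riemann sum, which exceeds `‖Φ⁽ʳ⁾‖₁`
by at most `δ ‖Φ⁽ʳ⁺¹⁾‖₁`; and since almost every point lies in at most `j` windows of length `jδ`,
the remainders are also controlled by `δ ‖Φ⁽ʳ⁺¹⁾‖₁`.
-/

section Sampling

variable {E : Type*} [NormedAddCommGroup E] [NormedSpace ℝ E]

lemma integrable_iteratedDeriv_schwartzMap (Φ : SchwartzMap ℝ E) (k : ℕ) :
    Integrable (iteratedDeriv k Φ) := by
  have hcont : Continuous (iteratedDeriv k Φ) := (Φ.smooth k).continuous_iteratedDeriv' k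
  rw [← integrable_norm_iff hcont.aestronglyMeasurable]
  simpa [norm_iteratedFDeriv_eq_norm_iteratedDeriv] using
    Φ.integrable_pow_mul_iteratedFDeriv volume 0 k

lemma sum_range_integral_adjacent_le {F : ℝ → ℝ} (hF : Integrable F) (hF0 : 0 ≤ F) {δ : ℝ}
    (hδ : 0 ≤ δ) (x : ℝ) (N : ℕ) :
    ∑ n ∈ Finset.range N, ∫ t in (x - n * δ - δ)..(x - n * δ), F t ≤ ∫ t, F t := by
  have telescope : ∑ n ∈ Finset.range N, ∫ t in (x - n * δ)..(x - (n + 1 : ℕ) * δ), F t =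
      ∫ t in x..(x - N * δ), F t := by
    simpa using intervalIntegral.sum_integral_adjacent_intervals (a := fun n : ℕ ↦ x - n * δ)
      (n := N) fun _ _ ↦ hF.intervalIntegrable
  calc ∑ n ∈ Finset.range N, ∫ t in (x - n * δ - δ)..(x - n * δ), F t
      = ∫ t in (x - N * δ)..x, F t := by
        rw [intervalIntegral.integral_symm, ← telescope, ← Finset.sum_neg_distrib]
        refine Finset.sum_congr rfl fun n _ ↦ ?_
        rw [← intervalIntegral.integral_symm]
        congr 1
        push_cast
        ring
    _ ≤ ∫ t, F t := by
        rw [intervalIntegral.integral_of_le (sub_le_self x (by positivity))]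
        exact setIntegral_le_integral hF (.of_forall hF0)

lemma sum_range_integral_window_le {F : ℝ → ℝ} (hF : Integrable F) (hF0 : 0 ≤ F) {δ : ℝ}
    (hδ : 0 ≤ δ) (x : ℝ) (N m : ℕ) :
    ∑ n ∈ Finset.range N, ∫ t in (x - n * δ - m * δ)..(x - n * δ), F t ≤ m * ∫ t, F t := by
  induction m with
  | zero => simp
  | succ m ih =>
    have split_window (n : ℕ) : ∫ t in (x - n * δ - (m + 1 : ℕ) * δ)..(x - n * δ), F t =
        (∫ t in (x - m * δ - n * δ - δ)..(x - m * δ - n * δ), F t) +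
          ∫ t in (x - n * δ - m * δ)..(x - n * δ), F t := by
      rw [sub_right_comm x (m * δ), intervalIntegral.integral_add_adjacent_intervals
        hF.intervalIntegrable hF.intervalIntegrable]
      congr 1
      push_cast
      ring
    simp only [split_window, Finset.sum_add_distrib]
    push_cast
    linarith [sum_range_integral_adjacent_le hF hF0 hδ (x - m * δ) N]

variable [CompleteSpace E] {f : ℝ → E}

lemma mul_norm_le_integral_norm_add_integral_norm_deriv (hf : Differentiable ℝ f)
    (hf' : LocallyIntegrable (deriv f)) {δ : ℝ} (hδ : 0 ≤ δ) (t : ℝ) :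
    δ * ‖f t‖ ≤ (∫ s in (t - δ)..t, ‖f s‖) + δ * ∫ s in (t - δ)..t, ‖deriv f s‖ := by
  have hf'_int (a b : ℝ) : IntervalIntegrable (deriv f) volume a b :=
    (hf'.integrableOn_isCompact isCompact_uIcc).intervalIntegrable
  have hf_int : IntervalIntegrable (‖f ·‖) volume (t - δ) t :=
    hf.continuous.norm.intervalIntegrable _ _
  have norm_le : ∀ s ∈ Set.Icc (t - δ) t, ‖f t‖ ≤ ‖f s‖ + ∫ u in (t - δ)..t, ‖deriv f u‖ := by
    intro s hs
    calc ‖f t‖ ≤ ‖f s‖ + ‖f t - f s‖ := norm_le_norm_add_norm_sub' _ _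
      _ = ‖f s‖ + ‖∫ u in s..t, deriv f u‖ := by
          rw [intervalIntegral.integral_deriv_eq_sub (fun u _ ↦ hf u) (hf'_int s t)]
      _ ≤ ‖f s‖ + ∫ u in s..t, ‖deriv f u‖ := by
          gcongr
          exact intervalIntegral.norm_integral_le_integral_norm hs.2
      _ ≤ ‖f s‖ + ∫ u in (t - δ)..t, ‖deriv f u‖ := by
          gcongr
          exact intervalIntegral.integral_mono_interval hs.1 hs.2 le_rfl
            (.of_forall fun _ ↦ norm_nonneg _) (hf'_int _ _).norm
  have := intervalIntegral.integral_mono_on (sub_le_self t hδ) intervalIntegrable_const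
    (hf_int.add intervalIntegrable_const) norm_le
  rw [intervalIntegral.integral_add hf_int intervalIntegrable_const] at this
  simpa using this

lemma mul_sum_range_norm_sample_le (hf : Differentiable ℝ f) (hfi : Integrable f)
    (hf' : Integrable (deriv f)) {δ : ℝ} (hδ : 0 ≤ δ) (x : ℝ) (N : ℕ) :
    δ * ∑ n ∈ Finset.range N, ‖f (x - n * δ)‖ ≤ (∫ t, ‖f t‖) + δ * ∫ t, ‖deriv f t‖ := by
  calc δ * ∑ n ∈ Finset.range N, ‖f (x - n * δ)‖
      ≤ ∑ n ∈ Finset.range N, ((∫ s in (x - n * δ - δ)..(x - n * δ), ‖f s‖) +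
          δ * ∫ s in (x - n * δ - δ)..(x - n * δ), ‖deriv f s‖) := by
        rw [Finset.mul_sum]
        gcongr
        exact mul_norm_le_integral_norm_add_integral_norm_deriv hf hf'.locallyIntegrable hδ _
    _ ≤ (∫ t, ‖f t‖) + δ * ∫ t, ‖deriv f t‖ := by
        rw [Finset.sum_add_distrib, ← Finset.mul_sum]
        gcongr
        · exact sum_range_integral_adjacent_le hfi.norm (fun _ ↦ norm_nonneg _) hδ x N
        · exact sum_range_integral_adjacent_le hf'.norm (fun _ ↦ norm_nonneg _) hδ x N

lemma mul_sum_range_norm_iteratedDeriv_sample_le {k : ℕ} (hf : ContDiff ℝ (k + 1 : ℕ) f)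
    (hfk : Integrable (iteratedDeriv k f)) (hfk' : Integrable (iteratedDeriv (k + 1) f)) {δ : ℝ}
    (hδ : 0 ≤ δ) (x : ℝ) (N : ℕ) :
    δ * ∑ n ∈ Finset.range N, ‖iteratedDeriv k f (x - n * δ)‖ ≤
      (∫ t, ‖iteratedDeriv k f t‖) + δ * ∫ t, ‖iteratedDeriv (k + 1) f t‖ := by
  rw [iteratedDeriv_succ] at hfk' ⊢
  exact mul_sum_range_norm_sample_le
    (hf.differentiable_iteratedDeriv k (by exact_mod_cast k.lt_succ_self)) hfk hfk' hδ x N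

lemma summable_norm_sample (hf : Differentiable ℝ f) (hfi : Integrable f)
    (hf' : Integrable (deriv f)) {δ : ℝ} (hδ : 0 < δ) (x : ℝ) :
    Summable fun n : ℕ ↦ ‖f (x - n * δ)‖ := by
  refine summable_of_sum_range_le (c := ((∫ t, ‖f t‖) + δ * ∫ t, ‖deriv f t‖) / δ)
    (fun _ ↦ norm_nonneg _) fun N ↦ ?_
  rw [le_div_iff₀' hδ]
  exact mul_sum_range_norm_sample_le hf hfi hf' hδ.le x N

lemma sub_taylorWithinEval_univ_eq_integral {n : ℕ} (hf : ContDiff ℝ (n + 1 : ℕ) f) (a b : ℝ) :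
    f b - taylorWithinEval f n Set.univ a b =
      ∫ u in a..b, ((n.factorial : ℝ)⁻¹ * (b - u) ^ n) • iteratedDeriv (n + 1) f u := by
  rcases eq_or_ne a b with rfl | hab
  · simp
  have iteratedDerivWithin_eq {k : ℕ} (hk : k ≤ n + 1) {u : ℝ} (hu : u ∈ Set.uIcc a b) :
      iteratedDerivWithin k f (Set.uIcc a b) u = iteratedDeriv k f u :=
    iteratedDerivWithin_eq_iteratedDeriv (uniqueDiffOn_uIcc hab)
      (hf.of_le (mod_cast hk)).contDiffAt hu
  have taylor_eq : taylorWithinEval f n (Set.uIcc a b) a b =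
      taylorWithinEval f n Set.univ a b := by
    simp only [taylor_within_apply, iteratedDerivWithin_univ]
    refine Finset.sum_congr rfl fun k hk ↦ ?_
    rw [iteratedDerivWithin_eq (Finset.mem_range.1 hk).le Set.left_mem_uIcc]
  rw [← taylor_eq, taylor_integral_remainder hf.contDiffOn]
  refine intervalIntegral.integral_congr fun u hu ↦ ?_
  simp only [iteratedDerivWithin_eq le_rfl hu, div_eq_inv_mul]

lemma norm_sub_taylorWithinEval_univ_le {n : ℕ} (hf : ContDiff ℝ (n + 1 : ℕ) f) (a b : ℝ) :
    ‖f b - taylorWithinEval f n Set.univ a b‖ ≤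
      |b - a| ^ n / n.factorial * |∫ u in a..b, ‖iteratedDeriv (n + 1) f u‖| := by
  have integrand_le : ∀ u ∈ Set.uIoc a b,
      ‖((n.factorial : ℝ)⁻¹ * (b - u) ^ n) • iteratedDeriv (n + 1) f u‖ ≤
        |b - a| ^ n / n.factorial * ‖iteratedDeriv (n + 1) f u‖ := by
    intro u hu
    rw [norm_smul, norm_mul, norm_inv, norm_pow, Real.norm_natCast, Real.norm_eq_abs,
      inv_mul_eq_div]
    gcongr ?_ ^ n / _ * _
    exact Set.abs_sub_right_of_mem_uIcc (Set.uIoc_subset_uIcc hu)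
  calc ‖f b - taylorWithinEval f n Set.univ a b‖
      ≤ |∫ u in a..b, |b - a| ^ n / n.factorial * ‖iteratedDeriv (n + 1) f u‖| := by
        rw [sub_taylorWithinEval_univ_eq_integral hf]
        exact intervalIntegral.norm_integral_le_abs_of_norm_le
          ((ae_restrict_iff' measurableSet_uIoc).2 (.of_forall integrand_le))
          (Continuous.intervalIntegrable (by fun_prop) _ _)
    _ = |b - a| ^ n / n.factorial * |∫ u in a..b, ‖iteratedDeriv (n + 1) f u‖| := by
        rw [intervalIntegral.integral_const_mul, abs_mul, abs_of_nonneg (by positivity)]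

end Sampling

section Filter

/-- The `k`-th moment `∑ⱼ hⱼ jᵏ` of a filter `h` with taps in `S`; the filter constant `C_h` of a
filter of order `r` is its `r`-th moment. -/
def filterMoment (S : Finset ℤ) (h : ℤ → ℝ) (k : ℕ) : ℝ :=
  ∑ j ∈ S, h j * (j : ℝ) ^ k

/-- The order-`r` vanishing moment conditions on a filter `h` with taps in `S`. -/
structure HasVanishingMoments (S : Finset ℤ) (h : ℤ → ℝ) (r : ℕ) : Prop where
  sum_eq_one : ∑ j ∈ S, h j = 1
  filterMoment_eq_zero : ∀ k, 1 ≤ k → k < r → filterMoment S h k = 0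

variable {E : Type*} [NormedAddCommGroup E] [NormedSpace ℝ E] {S : Finset ℤ} {h : ℤ → ℝ} {r : ℕ}
  {Φ : ℝ → E}

/-- The error `Φ(t) - ∑ⱼ hⱼ Φ(t - jδ)` of predicting `Φ` at `t` from its samples at distances
`jδ` with the weights `h`. -/
def predictionError (S : Finset ℤ) (h : ℤ → ℝ) (Φ : ℝ → E) (δ t : ℝ) : E :=
  Φ t - ∑ j ∈ S, h j • Φ (t - j * δ)

/-- The second-order constant `C′` of the error bound: the first summand of the first factor comes
from the Riemann sum of `‖Φ⁽ʳ⁾‖`, the second one from the Taylor remainders. -/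
noncomputable def errorConst (S : Finset ℤ) (h : ℤ → ℝ) (r : ℕ) (Φ : ℝ → E) : ℝ :=
  (|filterMoment S h r| / r.factorial + ∑ j ∈ S, |h j| * (j : ℝ) ^ (r + 1) / r.factorial) *
    ∫ t, ‖iteratedDeriv (r + 1) Φ t‖

lemma errorConst_nonneg (hS : ∀ j ∈ S, 0 ≤ j) : 0 ≤ errorConst S h r Φ := by
  unfold errorConst
  refine mul_nonneg (add_nonneg (by positivity) (Finset.sum_nonneg fun j hj ↦ ?_))
    (integral_nonneg fun _ ↦ norm_nonneg _)
  have : (0 : ℝ) ≤ j := mod_cast hS j hj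
  positivity

lemma HasVanishingMoments.sum_smul_taylorWithinEval (hmom : HasVanishingMoments S h r)
    (hr : 1 ≤ r) (Φ : ℝ → E) (δ t : ℝ) :
    ∑ j ∈ S, h j • taylorWithinEval Φ r Set.univ t (t - j * δ) =
      Φ t + ((r.factorial : ℝ)⁻¹ * (-δ) ^ r * filterMoment S h r) • iteratedDeriv r Φ t := by
  have swap : ∑ j ∈ S, h j • taylorWithinEval Φ r Set.univ t (t - j * δ) =
      ∑ k ∈ Finset.range (r + 1),
        ((k.factorial : ℝ)⁻¹ * (-δ) ^ k * filterMoment S h k) • iteratedDeriv k Φ t := by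
    simp only [taylor_within_apply, iteratedDerivWithin_univ, filterMoment, Finset.mul_sum,
      Finset.smul_sum, Finset.sum_smul, smul_smul]
    rw [Finset.sum_comm]
    refine Finset.sum_congr rfl fun k _ ↦ Finset.sum_congr rfl fun j _ ↦ ?_
    congr 1
    rw [sub_sub_cancel_left, ← mul_neg, mul_pow]
    ring
  rw [swap, Finset.sum_range_succ, Finset.sum_eq_single_of_mem 0 (Finset.mem_range.2 hr)]
  · simp [filterMoment, hmom.sum_eq_one]
  · intro k hk hk0
    rw [hmom.filterMoment_eq_zero k (Nat.one_le_iff_ne_zero.2 hk0) (Finset.mem_range.1 hk),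
      mul_zero, zero_smul]

variable [CompleteSpace E]

lemma norm_predictionError_le (hr : 1 ≤ r) (hS : ∀ j ∈ S, 0 ≤ j)
    (hmom : HasVanishingMoments S h r) (hΦ : ContDiff ℝ (r + 1 : ℕ) Φ) {δ : ℝ} (hδ : 0 ≤ δ)
    (t : ℝ) :
    ‖predictionError S h Φ δ t‖ ≤
      δ ^ r * (|filterMoment S h r| / r.factorial * ‖iteratedDeriv r Φ t‖ +
        ∑ j ∈ S, |h j| * (j : ℝ) ^ r / r.factorial *
          ∫ u in (t - j * δ)..t, ‖iteratedDeriv (r + 1) Φ u‖) := by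
  set P : ℤ → E := fun j ↦ taylorWithinEval Φ r Set.univ t (t - j * δ)
  have leading_add_remainder : predictionError S h Φ δ t =
      -(((r.factorial : ℝ)⁻¹ * (-δ) ^ r * filterMoment S h r) • iteratedDeriv r Φ t) -
        ∑ j ∈ S, h j • (Φ (t - j * δ) - P j) := by
    simp only [predictionError, smul_sub, Finset.sum_sub_distrib, P,
      hmom.sum_smul_taylorWithinEval hr]
    abel
  have remainder_le (j : ℤ) (hj : j ∈ S) : ‖Φ (t - j * δ) - P j‖ ≤
      (j * δ) ^ r / r.factorial * ∫ u in (t - j * δ)..t, ‖iteratedDeriv (r + 1) Φ u‖ := by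
    have hjδ : 0 ≤ j * δ := mul_nonneg (mod_cast hS j hj) hδ
    have hint : 0 ≤ ∫ u in (t - j * δ)..t, ‖iteratedDeriv (r + 1) Φ u‖ :=
      intervalIntegral.integral_nonneg (sub_le_self t hjδ) fun _ _ ↦ norm_nonneg _
    simpa only [sub_sub_cancel_left, abs_neg, abs_of_nonneg hjδ, abs_of_nonneg hint,
      intervalIntegral.integral_symm (t - j * δ) t] using
      norm_sub_taylorWithinEval_univ_le hΦ t (t - j * δ)
  rw [leading_add_remainder, mul_add, Finset.mul_sum]
  refine (norm_sub_le _ _).trans (add_le_add (le_of_eq ?_) (norm_sum_le_of_le _ fun j hj ↦ ?_))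
  · rw [norm_neg, norm_smul, norm_mul, norm_mul, norm_inv, norm_pow, norm_neg,
      Real.norm_natCast, Real.norm_of_nonneg hδ, Real.norm_eq_abs]
    ring
  · calc ‖h j • (Φ (t - j * δ) - P j)‖
        ≤ |h j| * ((j * δ) ^ r / r.factorial *
            ∫ u in (t - j * δ)..t, ‖iteratedDeriv (r + 1) Φ u‖) := by
          rw [norm_smul, Real.norm_eq_abs]
          gcongr
          exact remainder_le j hj
      _ = _ := by ring

lemma mul_sum_range_norm_predictionError_le (hr : 1 ≤ r) (hS : ∀ j ∈ S, 0 ≤ j)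
    (hmom : HasVanishingMoments S h r) (hΦ : ContDiff ℝ (r + 1 : ℕ) Φ)
    (hΦr : Integrable (iteratedDeriv r Φ)) (hΦr' : Integrable (iteratedDeriv (r + 1) Φ))
    {δ : ℝ} (hδ : 0 ≤ δ) (x : ℝ) (N : ℕ) :
    δ * ∑ n ∈ Finset.range N, ‖predictionError S h Φ δ (x - n * δ)‖ ≤
      δ ^ r * (|filterMoment S h r| * (∫ t, ‖iteratedDeriv r Φ t‖) / r.factorial +
        errorConst S h r Φ * δ) := by
  let J := ∫ t, ‖iteratedDeriv (r + 1) Φ t‖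
  have windows_le (j : ℤ) (hj : j ∈ S) : ∑ n ∈ Finset.range N,
      ∫ u in (x - n * δ - j * δ)..(x - n * δ), ‖iteratedDeriv (r + 1) Φ u‖ ≤ j * J := by
    lift j to ℕ using hS j hj
    exact_mod_cast sum_range_integral_window_le hΦr'.norm (fun _ ↦ norm_nonneg _) hδ x N j
  calc δ * ∑ n ∈ Finset.range N, ‖predictionError S h Φ δ (x - n * δ)‖
      ≤ δ * ∑ n ∈ Finset.range N, δ ^ r *
          (|filterMoment S h r| / r.factorial * ‖iteratedDeriv r Φ (x - n * δ)‖ +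
            ∑ j ∈ S, |h j| * (j : ℝ) ^ r / r.factorial *
              ∫ u in (x - n * δ - j * δ)..(x - n * δ), ‖iteratedDeriv (r + 1) Φ u‖) := by
        gcongr
        exact norm_predictionError_le hr hS hmom hΦ hδ _
    _ = δ ^ r * (|filterMoment S h r| / r.factorial *
            (δ * ∑ n ∈ Finset.range N, ‖iteratedDeriv r Φ (x - n * δ)‖) +
          δ * ∑ j ∈ S, |h j| * (j : ℝ) ^ r / r.factorial * ∑ n ∈ Finset.range N,
            ∫ u in (x - n * δ - j * δ)..(x - n * δ), ‖iteratedDeriv (r + 1) Φ u‖) := by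
        rw [← Finset.mul_sum, Finset.sum_add_distrib, ← Finset.mul_sum, Finset.sum_comm]
        simp only [← Finset.mul_sum]
        ring
    _ ≤ δ ^ r * (|filterMoment S h r| / r.factorial *
            ((∫ t, ‖iteratedDeriv r Φ t‖) + δ * J) +
          δ * ∑ j ∈ S, |h j| * (j : ℝ) ^ r / r.factorial * (j * J)) := by
        gcongr with j hj
        · exact mul_sum_range_norm_iteratedDeriv_sample_le hΦ hΦr hΦr' hδ x N
        · have : (0 : ℝ) ≤ j := mod_cast hS j hj
          positivity
        · exact windows_le j hj
    _ = _ := by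
        have (j : ℤ) : |h j| * (j : ℝ) ^ r / r.factorial * (j * J) =
            |h j| * (j : ℝ) ^ (r + 1) / r.factorial * J := by ring
        simp only [errorConst, this, ← Finset.sum_mul]
        ring

end Filter

section Series

lemma tsum_nat_eq_tsum_nat_add {M : Type*} [AddCommMonoid M] [TopologicalSpace M] {F : ℤ → M}
    {j : ℤ} (hj : 0 ≤ j) (hF : ∀ n < j, F n = 0) :
    ∑' n : ℕ, F n = ∑' n : ℕ, F (n + j) := by
  lift j to ℕ using hj
  have support_subset :
      Function.support (fun n : ℕ ↦ F n) ⊆ Set.range fun n : ℕ ↦ n + j := by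
    intro n hn
    have : j ≤ n := by
      by_contra! hlt
      exact hn (hF n (mod_cast hlt))
    exact ⟨n - j, Nat.sub_add_cancel this⟩
  rw [← (add_left_injective j).tsum_eq support_subset]
  simp only [Nat.cast_add]

lemma summable_smul_of_abs_le {E : Type*} [NormedAddCommGroup E] [NormedSpace ℝ E]
    [CompleteSpace E] {w : ℕ → ℝ} {B : ℝ} (hw : ∀ n, |w n| ≤ B) {g : ℕ → E}
    (hg : Summable (‖g ·‖)) : Summable fun n ↦ w n • g n := by
  refine .of_norm_bounded (hg.mul_left B) fun n ↦ ?_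
  rw [norm_smul, Real.norm_eq_abs]
  gcongr
  exact hw n

end Series

section SigmaDelta

/-- `v` is the state sequence of a ΣΔ modulator with feedback filter `h` (taps in `S`), input `y`
and output `q`. The quantization rule producing `q` is left unspecified. -/
structure IsSigmaDeltaState (S : Finset ℤ) (h : ℤ → ℝ) (y q : ℕ → ℝ) (v : ℤ → ℝ) : Prop where
  eq_zero_of_neg : ∀ n < 0, v n = 0
  eq_feedback_add_sub : ∀ n : ℕ, v n = ∑ j ∈ S, h j * v (n - j) + y n - q n

variable {E : Type*} [NormedAddCommGroup E] [NormedSpace ℝ E] {S : Finset ℤ} {h : ℤ → ℝ}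
  {y q : ℕ → ℝ} {v : ℤ → ℝ} {B V : ℝ}

lemma IsSigmaDeltaState.smul_sub_smul_eq (hv : IsSigmaDeltaState S h y q v) (n : ℕ) (e : E) :
    y n • e - q n • e = v n • e - ∑ j ∈ S, h j • v (n - j) • e := by
  simp only [smul_smul, ← Finset.sum_smul, ← sub_smul, hv.eq_feedback_add_sub n]
  congr 1
  ring

lemma IsSigmaDeltaState.tsum_smul_delay_eq (hv : IsSigmaDeltaState S h y q v) {j : ℤ}
    (hj : 0 ≤ j) (Φ : ℝ → E) (δ x : ℝ) :
    ∑' n : ℕ, v (n - j) • Φ (x - n * δ) = ∑' n : ℕ, v n • Φ (x - n * δ - j * δ) := by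
  simpa [add_mul, sub_sub] using tsum_nat_eq_tsum_nat_add
    (F := fun n ↦ v (n - j) • Φ (x - n * δ)) hj
    fun n hn ↦ by rw [hv.eq_zero_of_neg _ (sub_neg.2 hn), zero_smul]

variable [CompleteSpace E]

lemma IsSigmaDeltaState.tsum_sub_tsum_eq (hv : IsSigmaDeltaState S h y q v)
    (hS : ∀ j ∈ S, 0 ≤ j) (hy : ∀ n, |y n| ≤ B) (hV : ∀ n, |v n| ≤ V) {Φ : ℝ → E} {δ : ℝ}
    (hΦ : ∀ t, Summable fun n : ℕ ↦ ‖Φ (t - n * δ)‖) (x : ℝ) :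
    ∑' n : ℕ, y n • Φ (x - n * δ) - ∑' n : ℕ, q n • Φ (x - n * δ) =
      ∑' n : ℕ, v n • predictionError S h Φ δ (x - n * δ) := by
  have hsum_y := summable_smul_of_abs_le hy (hΦ x)
  have hsum_v (t : ℝ) : Summable fun n : ℕ ↦ v n • Φ (t - n * δ) :=
    summable_smul_of_abs_le (fun n ↦ hV n) (hΦ t)
  have hsum_shift (j : ℤ) : Summable fun n : ℕ ↦ h j • v (n - j) • Φ (x - n * δ) :=
    (summable_smul_of_abs_le (fun n ↦ hV (n - j)) (hΦ x)).const_smul _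
  have hsum_translate (j : ℤ) : Summable fun n : ℕ ↦ h j • v n • Φ (x - n * δ - j * δ) := by
    simpa only [sub_right_comm x] using (hsum_v (x - j * δ)).const_smul (h j)
  have hsum_sub : Summable fun n ↦ y n • Φ (x - n * δ) - q n • Φ (x - n * δ) := by
    simpa only [hv.smul_sub_smul_eq] using
      (hsum_v x).sub (summable_sum fun j _ ↦ hsum_shift j)
  have hsum_q : Summable fun n ↦ q n • Φ (x - n * δ) := by
    simpa only [sub_sub_cancel] using hsum_y.sub hsum_sub
  have shift (j : ℤ) (hj : j ∈ S) : ∑' n : ℕ, h j • v (n - j) • Φ (x - n * δ) =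
      ∑' n : ℕ, h j • v n • Φ (x - n * δ - j * δ) := by
    rw [tsum_const_smul'', tsum_const_smul'', hv.tsum_smul_delay_eq (hS j hj)]
  calc ∑' n : ℕ, y n • Φ (x - n * δ) - ∑' n : ℕ, q n • Φ (x - n * δ)
      = ∑' n : ℕ, v n • Φ (x - n * δ) -
          ∑ j ∈ S, ∑' n : ℕ, h j • v (n - j) • Φ (x - n * δ) := by
        rw [← hsum_y.tsum_sub hsum_q, tsum_congr fun n ↦ hv.smul_sub_smul_eq n _,
          (hsum_v x).tsum_sub (summable_sum fun j _ ↦ hsum_shift j),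
          Summable.tsum_finsetSum fun j _ ↦ hsum_shift j]
    _ = ∑' n : ℕ, v n • Φ (x - n * δ) -
          ∑ j ∈ S, ∑' n : ℕ, h j • v n • Φ (x - n * δ - j * δ) := by
        rw [Finset.sum_congr rfl shift]
    _ = ∑' n : ℕ, v n • predictionError S h Φ δ (x - n * δ) := by
        rw [← Summable.tsum_finsetSum fun j _ ↦ hsum_translate j,
          ← (hsum_v x).tsum_sub (summable_sum fun j _ ↦ hsum_translate j)]
        simp only [predictionError, smul_sub, Finset.smul_sum, smul_comm (v _)]

theorem stmt_11_general {r : ℕ} (hr : 1 ≤ r) (hS : ∀ j ∈ S, 0 ≤ j)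
    (hmom : HasVanishingMoments S h r) {Φ : ℝ → E} (hΦ : ContDiff ℝ (r + 1 : ℕ) Φ)
    (hΦint : ∀ k ≤ r + 1, Integrable (iteratedDeriv k Φ)) (hy : ∀ n, |y n| ≤ B)
    (hv : IsSigmaDeltaState S h y q v) (hV : ∀ n, |v n| ≤ V) {lam : ℝ} (hlam : 0 < lam) (x : ℝ) :
    ‖lam⁻¹ • (∑' n : ℕ, y n • Φ (x - n / lam)) - lam⁻¹ • (∑' n : ℕ, q n • Φ (x - n / lam))‖ ≤
      (lam ^ r)⁻¹ * V * (|filterMoment S h r| * (∫ t, ‖iteratedDeriv r Φ t‖) / r.factorial +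
        errorConst S h r Φ * lam⁻¹) := by
  have hδ : 0 < lam⁻¹ := inv_pos.2 hlam
  have hV0 : 0 ≤ V := (abs_nonneg _).trans (hV 0)
  have hΦsum := summable_norm_sample (hΦ.differentiable (by simp))
    (by simpa using hΦint 0 (by omega)) (by simpa using hΦint 1 (by omega)) hδ
  simp only [div_eq_mul_inv _ lam, ← inv_pow]
  set δ := lam⁻¹
  set K := |filterMoment S h r| * (∫ t, ‖iteratedDeriv r Φ t‖) / r.factorial +
    errorConst S h r Φ * δ
  have sum_error_le (N : ℕ) :
      ∑ n ∈ Finset.range N, ‖predictionError S h Φ δ (x - n * δ)‖ ≤ δ ^ r * K / δ :=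
    (le_div_iff₀' hδ).2 <| mul_sum_range_norm_predictionError_le hr hS hmom hΦ
      (hΦint r r.le_succ) (hΦint (r + 1) le_rfl) hδ.le x N
  have hsum_error := summable_of_sum_range_le (fun _ ↦ norm_nonneg _) sum_error_le
  calc ‖δ • ∑' n : ℕ, y n • Φ (x - n * δ) - δ • ∑' n : ℕ, q n • Φ (x - n * δ)‖
      = δ * ‖∑' n : ℕ, v n • predictionError S h Φ δ (x - n * δ)‖ := by
        rw [← smul_sub, hv.tsum_sub_tsum_eq hS hy hV hΦsum, norm_smul, Real.norm_of_nonneg hδ.le]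
    _ ≤ δ * (V * ∑' n : ℕ, ‖predictionError S h Φ δ (x - n * δ)‖) := by
        gcongr
        refine tsum_of_norm_bounded (hsum_error.hasSum.mul_left V) fun n ↦ ?_
        rw [norm_smul, Real.norm_eq_abs]
        gcongr
        exact hV n
    _ ≤ δ * (V * (δ ^ r * K / δ)) := by
        gcongr
        exact Real.tsum_le_of_sum_range_le (fun _ ↦ norm_nonneg _) sum_error_le
    _ = δ ^ r * V * K := by
        field_simp

end SigmaDelta

/-- Error bound for the one-dimensional `r`-th order 1-bit ΣΔ quantizer: there is a
constant `C′` depending only on `Φ`, `h`, `r` such that whenever the state variable is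
bounded by `V`, for all `λ ≥ 1` and `x ∈ ℝ`,
`|f_λ(x) − f_q(x)| ≤ λ^{−r} V (|C_h| ‖Φ^{(r)}‖_{L¹}/r! + C′ λ⁻¹)`. -/
theorem stmt_11 (r L : ℕ) (hr : 1 ≤ r) (h : ℤ → ℝ)
    (hcausal : ∀ n : ℤ, n ≤ 0 → h n = 0)
    (hsupp : ∀ n : ℤ, (L : ℤ) < n → h n = 0)
    (hm0 : ∑ j ∈ Finset.Icc (1 : ℤ) (L : ℤ), h j = 1)
    (hmk : ∀ k : ℕ, 1 ≤ k → k < r →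
      ∑ j ∈ Finset.Icc (1 : ℤ) (L : ℤ), h j * (j : ℝ) ^ k = 0)
    (Φ : SchwartzMap ℝ ℝ) :
    ∃ C' : ℝ, 0 ≤ C' ∧
      ∀ (y : ℕ → ℝ), (∃ B : ℝ, ∀ n : ℕ, |y n| ≤ B) →
      ∀ (v : ℤ → ℝ) (q : ℕ → ℝ),
        (∀ n : ℤ, n < 0 → v n = 0) →
        (∀ n : ℕ, q n =
          sgn ((∑ j ∈ Finset.Icc (1 : ℤ) (L : ℤ), h j * v ((n : ℤ) - j)) + y n)) →
        (∀ n : ℕ, v (n : ℤ) =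
          (∑ j ∈ Finset.Icc (1 : ℤ) (L : ℤ), h j * v ((n : ℤ) - j)) + y n - q n) →
      ∀ V : ℝ, (∀ n : ℤ, |v n| ≤ V) →
      ∀ lam : ℝ, 1 ≤ lam → ∀ x : ℝ,
        |lam⁻¹ * (∑' n : ℕ, y n * Φ (x - n / lam))
            - lam⁻¹ * (∑' n : ℕ, q n * Φ (x - n / lam))|
          ≤ (lam ^ r)⁻¹ * V *
              (|∑ j ∈ Finset.Icc (1 : ℤ) (L : ℤ), h j * (j : ℝ) ^ r| *
                  (∫ t : ℝ, |iteratedDeriv r (⇑Φ) t|) / r.factorial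
                + C' * lam⁻¹) := by
  have hS : ∀ j ∈ Finset.Icc (1 : ℤ) L, 0 ≤ j := fun j hj ↦
    zero_le_one.trans (Finset.mem_Icc.1 hj).1
  exact ⟨errorConst (Finset.Icc 1 L) h r Φ, errorConst_nonneg hS,
    fun y ⟨_, hy⟩ v q hv _ hrec V hV lam hlam x ↦
      stmt_11_general hr hS ⟨hm0, hmk⟩ (Φ.smooth _)
        (fun k _ ↦ integrable_iteratedDeriv_schwartzMap Φ k) hy ⟨hv, hrec⟩ hV
        (zero_lt_one.trans_le hlam) x⟩
end

section
/- Let r ≥ 1, let h : ℤ → ℝ be a feedback filter supported on {1,…,L}, let Φ : ℝ → ℝ be a Schwartz function, and for a ∈ ℝ let R_{a,r}(t) = Φ(a+t) − Σ_{p=0}^r (t^p/p!) Φ^{(p)}(a) be the r-th order Taylor remainder of Φ at a. Let v : ℕ → ℝ satisfy |v_n| ≤ V for all n. Then for every λ > 0 and every x ∈ ℝ, | λ^{−1} Σ_{n∈ℕ} v_n Σ_{j=1}^L h_j R_{x−n/λ, r}(−j/λ) | ≤ V λ^{−(r+1)} ( Σ_{j=1}^L |h_j| j^{r+1} ) / (r+1)!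 · ( ‖Φ^{(r+1)}‖_{L¹(ℝ)} + λ^{−1} ‖Φ^{(r+2)}‖_{L¹(ℝ)} ). -/
open MeasureTheory

/-! The integral form of the remainder writes `R_{a,r}(t)` as a weighted average over `u ∈ [0, 1]`
of `t ^ (r + 1) * Φ^{(r+1)}(a + u * t)`. For each fixed `u` the base points `a = x - n / λ` move
along a progression of step `1 / λ`, and on such a progression the samples of `g = Φ^{(r+1)}`
satisfy `∑ |g| ≤ λ ‖g‖₁ + ‖g'‖₁`, uniformly in `u`: over each cell, `g` at the endpoint is the mean
of `g` plus an error controlled by `∫ |g'|`. Integrating the weight `(1 - u) ^ r / r!` turns `r!`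
into `(r + 1)!`. -/

section Sampling

variable {E : Type*} [NormedAddCommGroup E] [NormedSpace ℝ E] [CompleteSpace E] {g g' : ℝ → E}

lemma sub_smul_eq_integral_sub_integral_deriv {a b : ℝ}
    (hg : ∀ t ∈ Set.uIcc a b, HasDerivAt g (g' t) t) (hg' : IntervalIntegrable g' volume a b) :
    (b - a) • g a = (∫ t in a..b, g t) - ∫ t in a..b, (b - t) • g' t := by
  have by_parts := intervalIntegral.integral_smul_deriv_eq_deriv_smul
    (u := fun t => b - t) (u' := fun _ => -1)
    (fun t _ => (hasDerivAt_id t).const_sub b) hg intervalIntegrable_const hg'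
  simp [by_parts]

lemma sub_mul_norm_le_integral_norm_add_integral_norm_deriv {a b : ℝ} (hab : a ≤ b)
    (hg : ∀ t ∈ Set.Icc a b, HasDerivAt g (g' t) t) (hg' : IntervalIntegrable g' volume a b) :
    (b - a) * ‖g a‖ ≤ (∫ t in a..b, ‖g t‖) + (b - a) * ∫ t in a..b, ‖g' t‖ := by
  have weighted : ‖∫ t in a..b, (b - t) • g' t‖ ≤ ∫ t in a..b, (b - a) * ‖g' t‖ := by
    refine intervalIntegral.norm_integral_le_of_norm_le hab (.of_forall fun t ht => ?_)
      (hg'.norm.const_mul _)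
    rw [norm_smul, Real.norm_of_nonneg (sub_nonneg.2 ht.2)]
    gcongr
    exact ht.1.le
  calc (b - a) * ‖g a‖
      = ‖(b - a) • g a‖ := by rw [norm_smul, Real.norm_of_nonneg (sub_nonneg.2 hab)]
    _ ≤ ‖∫ t in a..b, g t‖ + ‖∫ t in a..b, (b - t) • g' t‖ := by
        rw [sub_smul_eq_integral_sub_integral_deriv (Set.uIcc_of_le hab ▸ hg) hg']
        exact norm_sub_le _ _
    _ ≤ (∫ t in a..b, ‖g t‖) + (b - a) * ∫ t in a..b, ‖g' t‖ := by
        rw [intervalIntegral.integral_const_mul] at weighted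
        gcongr
        exact intervalIntegral.norm_integral_le_integral_norm hab

lemma sum_intervalIntegral_add_int_le_integral {f : ℝ → ℝ} (hf : Integrable f) (hf0 : 0 ≤ f)
    (y : ℝ) (s : Finset ℤ) :
    ∑ n ∈ s, ∫ t in (y + n)..(y + n + 1), f t ≤ ∫ t, f t :=
  sum_le_hasSum s
    (fun _ _ => intervalIntegral.integral_nonneg (le_add_of_nonneg_right zero_le_one)
      fun t _ => hf0 t)
    (hf.hasSum_intervalIntegral y)

lemma sum_norm_add_int_le (hg : ∀ t, HasDerivAt g (g' t) t) (hgi : Integrable g)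
    (hgi' : Integrable g') (y : ℝ) (s : Finset ℤ) :
    ∑ n ∈ s, ‖g (y + n)‖ ≤ (∫ t, ‖g t‖) + ∫ t, ‖g' t‖ := by
  calc ∑ n ∈ s, ‖g (y + n)‖
      ≤ ∑ n ∈ s, ((∫ t in (y + n)..(y + n + 1), ‖g t‖)
          + ∫ t in (y + n)..(y + n + 1), ‖g' t‖) :=
        Finset.sum_le_sum fun n _ => by
          simpa using sub_mul_norm_le_integral_norm_add_integral_norm_deriv
            (le_add_of_nonneg_right zero_le_one : y + n ≤ y + n + 1)
            (fun t _ => hg t) hgi'.intervalIntegrable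
    _ ≤ (∫ t, ‖g t‖) + ∫ t, ‖g' t‖ := by
        rw [Finset.sum_add_distrib]
        exact add_le_add
          (sum_intervalIntegral_add_int_le_integral hgi.norm (fun _ => norm_nonneg _) y s)
          (sum_intervalIntegral_add_int_le_integral hgi'.norm (fun _ => norm_nonneg _) y s)

lemma sum_norm_add_int_mul_le (hg : ∀ t, HasDerivAt g (g' t) t) (hgi : Integrable g)
    (hgi' : Integrable g') {d : ℝ} (hd : d ≠ 0) (y : ℝ) (s : Finset ℤ) :
    ∑ n ∈ s, ‖g (y + n * d)‖ ≤ |d|⁻¹ * (∫ t, ‖g t‖) + ∫ t, ‖g' t‖ := by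
  have hasDerivAt_rescaled (t : ℝ) :
      HasDerivAt (fun t => g (y + t * d)) (d • g' (y + t * d)) t :=
    (hg _).scomp t (((hasDerivAt_mul_const d).const_add y))
  have integral_rescaled (f : ℝ → ℝ) : ∫ t, f (y + t * d) = |d|⁻¹ * ∫ t, f t := by
    rw [Measure.integral_comp_mul_right fun t => f (y + t), integral_add_left_eq_self, abs_inv,
      smul_eq_mul]
  have unit_spacing := sum_norm_add_int_le hasDerivAt_rescaled
    ((hgi.comp_add_left y).comp_mul_right' hd)
    (((hgi'.comp_add_left y).comp_mul_right' hd).smul d) 0 s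
  simpa only [zero_add, norm_smul, Real.norm_eq_abs, integral_const_mul,
    integral_rescaled (‖g ·‖), integral_rescaled (‖g' ·‖),
    mul_inv_cancel_left₀ (abs_ne_zero.2 hd)] using unit_spacing

end Sampling

section TaylorRemainder

variable {r : ℕ} {Φ : ℝ → ℝ}

lemma taylorRem1_zero (r : ℕ) (Φ : ℝ → ℝ) (a : ℝ) : taylorRem1 r Φ a 0 = 0 := by
  simp [taylorRem1, Finset.sum_range_succ']

lemma taylorRem1_eq_sub_taylorWithinEval (hΦ : ContDiff ℝ r Φ) (a : ℝ) {t : ℝ} (ht : t ≠ 0) :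
    taylorRem1 r Φ a t
      = Φ (a + t) - taylorWithinEval Φ r (Set.uIcc a (a + t)) a (a + t) := by
  rw [taylorRem1, taylor_within_apply]
  congr 1
  refine Finset.sum_congr rfl fun p hp => ?_
  have hpr : p ≤ r := Nat.lt_succ_iff.1 (Finset.mem_range.1 hp)
  rw [iteratedDerivWithin_eq_iteratedDeriv (uniqueDiffOn_uIcc (by simpa using ht))
    (hΦ.contDiffAt.of_le (mod_cast hpr)) Set.left_mem_uIcc, add_sub_cancel_left, smul_eq_mul]
  ring

lemma taylorRem1_eq_integral (hΦ : ContDiff ℝ (r + 1 : ℕ) Φ) (a t : ℝ) :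
    taylorRem1 r Φ a t
      = t ^ (r + 1) / r.factorial
        * ∫ u in (0 : ℝ)..1, (1 - u) ^ r * iteratedDeriv (r + 1) Φ (a + t * u) := by
  rcases eq_or_ne t 0 with rfl | ht
  · simp [taylorRem1_zero]
  have huniq : UniqueDiffOn ℝ (Set.uIcc a (a + t)) :=
    uniqueDiffOn_uIcc (by simpa using ht)
  calc taylorRem1 r Φ a t
      = ∫ z in a..(a + t), (a + t - z) ^ r / r.factorial * iteratedDeriv (r + 1) Φ z := by
        rw [taylorRem1_eq_sub_taylorWithinEval (hΦ.of_le (mod_cast r.le_succ)) a ht,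
          taylor_integral_remainder hΦ.contDiffOn]
        refine intervalIntegral.integral_congr fun z hz => ?_
        simp only [smul_eq_mul, iteratedDerivWithin_eq_iteratedDeriv huniq hΦ.contDiffAt hz]
    _ = t * ∫ u in (0 : ℝ)..1,
          (a + t - (a + t * u)) ^ r / r.factorial * iteratedDeriv (r + 1) Φ (a + t * u) := by
        simpa using (intervalIntegral.mul_integral_comp_add_mul (a := 0) (b := 1)
          (f := fun z => (a + t - z) ^ r / r.factorial * iteratedDeriv (r + 1) Φ z) t a).symm
    _ = _ := by
        rw [← intervalIntegral.integral_const_mul, ← intervalIntegral.integral_const_mul]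
        refine intervalIntegral.integral_congr fun u _ => ?_
        have : a + t - (a + t * u) = t * (1 - u) := by ring
        simp only [this, mul_pow]
        ring

lemma abs_taylorRem1_le_integral (hΦ : ContDiff ℝ (r + 1 : ℕ) Φ) (a t : ℝ) :
    |taylorRem1 r Φ a t|
      ≤ |t| ^ (r + 1) / r.factorial
        * ∫ u in (0 : ℝ)..1, (1 - u) ^ r * |iteratedDeriv (r + 1) Φ (a + t * u)| := by
  rw [taylorRem1_eq_integral hΦ, abs_mul, abs_div, abs_pow, Nat.abs_cast]
  gcongr
  refine (intervalIntegral.abs_integral_le_integral_abs zero_le_one).trans_eq ?_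
  refine intervalIntegral.integral_congr fun u hu => ?_
  rw [Set.uIcc_of_le zero_le_one] at hu
  simp only [abs_mul, abs_pow, abs_of_nonneg (sub_nonneg.2 hu.2)]

lemma integral_one_sub_pow (r : ℕ) : ∫ u in (0 : ℝ)..1, (1 - u) ^ r = ((r : ℝ) + 1)⁻¹ := by
  simp [intervalIntegral.integral_comp_sub_left fun u : ℝ => u ^ r]

lemma sum_abs_taylorRem1_le {ι : Type*} (hΦ : ContDiff ℝ (r + 1 : ℕ) Φ) {a : ι → ℝ}
    {s : Finset ι} {C : ℝ} (hC : ∀ b, ∑ i ∈ s, |iteratedDeriv (r + 1) Φ (a i + b)| ≤ C) (t : ℝ) :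
    ∑ i ∈ s, |taylorRem1 r Φ (a i) t| ≤ |t| ^ (r + 1) / (r + 1).factorial * C := by
  have hcont : Continuous (iteratedDeriv (r + 1) Φ) := hΦ.continuous_iteratedDeriv _ le_rfl
  calc ∑ i ∈ s, |taylorRem1 r Φ (a i) t|
      ≤ ∑ i ∈ s, |t| ^ (r + 1) / r.factorial
          * ∫ u in (0 : ℝ)..1, (1 - u) ^ r * |iteratedDeriv (r + 1) Φ (a i + t * u)| :=
        Finset.sum_le_sum fun i _ => abs_taylorRem1_le_integral hΦ (a i) t
    _ = |t| ^ (r + 1) / r.factorial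
          * ∫ u in (0 : ℝ)..1, (1 - u) ^ r
              * ∑ i ∈ s, |iteratedDeriv (r + 1) Φ (a i + t * u)| := by
        simp only [Finset.mul_sum]
        rw [intervalIntegral.integral_finsetSum fun i _ =>
          Continuous.intervalIntegrable (by fun_prop) _ _, Finset.mul_sum]
    _ ≤ |t| ^ (r + 1) / r.factorial * ∫ u in (0 : ℝ)..1, (1 - u) ^ r * C := by
        gcongr
        refine intervalIntegral.integral_mono_on zero_le_one
          (Continuous.intervalIntegrable (by fun_prop) _ _)
          (Continuous.intervalIntegrable (by fun_prop) _ _) fun u hu => ?_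
        have : 0 ≤ 1 - u := sub_nonneg.2 hu.2
        gcongr
        exact hC _
    _ = |t| ^ (r + 1) / (r + 1).factorial * C := by
        rw [intervalIntegral.integral_mul_const, integral_one_sub_pow, Nat.factorial_succ]
        push_cast
        field_simp

lemma sum_abs_taylorRem1_add_int_mul_le (hΦ : ContDiff ℝ (r + 2 : ℕ) Φ)
    (hint : Integrable (iteratedDeriv (r + 1) Φ)) (hint' : Integrable (iteratedDeriv (r + 2) Φ))
    {d : ℝ} (hd : d ≠ 0) (x t : ℝ) (s : Finset ℤ) :
    ∑ n ∈ s, |taylorRem1 r Φ (x + n * d) t|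
      ≤ |t| ^ (r + 1) / (r + 1).factorial
        * (|d|⁻¹ * (∫ z, |iteratedDeriv (r + 1) Φ z|) + ∫ z, |iteratedDeriv (r + 2) Φ z|) := by
  have hderiv (z : ℝ) :
      HasDerivAt (iteratedDeriv (r + 1) Φ) (iteratedDeriv (r + 2) Φ z) z := by
    rw [iteratedDeriv_succ (n := r + 1)]
    exact (hΦ.differentiable_iteratedDeriv (r + 1)
      (mod_cast (r + 1).lt_succ_self) z).hasDerivAt
  refine sum_abs_taylorRem1_le (hΦ.of_le (mod_cast (r + 1).le_succ)) (fun b => ?_) t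
  simpa only [add_right_comm, Real.norm_eq_abs]
    using sum_norm_add_int_mul_le hderiv hint hint' hd (x + b) s

end TaylorRemainder

lemma sum_abs_mul_sum_le {ι κ : Type*} {v : ι → ℝ} {V : ℝ} (hV : 0 ≤ V) (hv : ∀ i, |v i| ≤ V)
    (h : κ → ℝ) {ρ : ι → κ → ℝ} {B : κ → ℝ} (s : Finset ι) (J : Finset κ)
    (hB : ∀ j ∈ J, ∑ i ∈ s, |ρ i j| ≤ B j) :
    ∑ i ∈ s, |v i * ∑ j ∈ J, h j * ρ i j| ≤ V * ∑ j ∈ J, |h j| * B j := by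
  calc ∑ i ∈ s, |v i * ∑ j ∈ J, h j * ρ i j|
      ≤ ∑ i ∈ s, V * ∑ j ∈ J, |h j| * |ρ i j| := by
        refine Finset.sum_le_sum fun i _ => ?_
        rw [abs_mul]
        gcongr
        · exact hv i
        · simpa only [abs_mul] using Finset.abs_sum_le_sum_abs (fun j => h j * ρ i j) J
    _ = V * ∑ j ∈ J, |h j| * ∑ i ∈ s, |ρ i j| := by
        rw [← Finset.mul_sum, Finset.sum_comm]
        simp only [Finset.mul_sum]
    _ ≤ V * ∑ j ∈ J, |h j| * B j := by
        gcongr with j hj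
        exact hB j hj

lemma norm_tsum_le_of_sum_norm_le {ι F : Type*} [SeminormedAddCommGroup F] {f : ι → F} {c : ℝ}
    (hf : ∀ s : Finset ι, ∑ i ∈ s, ‖f i‖ ≤ c) : ‖∑' i, f i‖ ≤ c :=
  have norm_comp_nonneg : 0 ≤ fun i => ‖f i‖ := fun _ => norm_nonneg _
  (norm_tsum_le_tsum_norm (summable_of_sum_le norm_comp_nonneg hf)).trans
    (Real.tsum_le_of_sum_le norm_comp_nonneg hf)

theorem stmt_14_general (r L : ℕ) (h : ℤ → ℝ) {Φ : ℝ → ℝ} (hΦ : ContDiff ℝ (r + 2 : ℕ) Φ)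
    (hint : Integrable (iteratedDeriv (r + 1) Φ)) (hint' : Integrable (iteratedDeriv (r + 2) Φ))
    (v : ℕ → ℝ) (V : ℝ) (hvb : ∀ n : ℕ, |v n| ≤ V) (lam : ℝ) (hlam : 0 < lam) (x : ℝ) :
    |lam⁻¹ * ∑' n : ℕ, v n * ∑ j ∈ Finset.Icc (1 : ℤ) (L : ℤ),
        h j * taylorRem1 r Φ (x - n / lam) (-((j : ℝ) / lam))|
      ≤ V * (lam ^ (r + 1))⁻¹ *
          ((∑ j ∈ Finset.Icc (1 : ℤ) (L : ℤ), |h j| * (j : ℝ) ^ (r + 1)) /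
            (r + 1).factorial) *
          ((∫ t : ℝ, |iteratedDeriv (r + 1) Φ t|)
            + lam⁻¹ * ∫ t : ℝ, |iteratedDeriv (r + 2) Φ t|) := by
  have hV : 0 ≤ V := (abs_nonneg _).trans (hvb 0)
  set A := ∫ t : ℝ, |iteratedDeriv (r + 1) Φ t|
  set B := ∫ t : ℝ, |iteratedDeriv (r + 2) Φ t|
  have sum_rem_le (s : Finset ℕ) (j : ℤ) (hj : j ∈ Finset.Icc (1 : ℤ) L) :
      ∑ n ∈ s, |taylorRem1 r Φ (x - n / lam) (-((j : ℝ) / lam))|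
        ≤ (j / lam) ^ (r + 1) / (r + 1).factorial * (lam * A + B) := by
    have hj0 : (0 : ℝ) ≤ j := mod_cast zero_le_one.trans (Finset.mem_Icc.1 hj).1
    simpa [← div_eq_mul_inv, ← sub_eq_add_neg, abs_of_pos hlam, abs_div, abs_of_nonneg hj0] using
      sum_abs_taylorRem1_add_int_mul_le hΦ hint hint' (neg_ne_zero.2 (inv_ne_zero hlam.ne')) x
        (-((j : ℝ) / lam)) (s.map Nat.castEmbedding)
  calc _ ≤ lam⁻¹ * (V * ∑ j ∈ Finset.Icc (1 : ℤ) L,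
        |h j| * ((j / lam) ^ (r + 1) / (r + 1).factorial * (lam * A + B))) := by
        rw [abs_mul, abs_of_pos (inv_pos.2 hlam), ← Real.norm_eq_abs]
        gcongr
        exact norm_tsum_le_of_sum_norm_le fun s => sum_abs_mul_sum_le hV hvb h s _ (sum_rem_le s)
    _ = _ := by
        simp only [div_pow, div_mul_eq_mul_div, mul_div_assoc', ← mul_assoc, ← Finset.sum_mul,
          ← Finset.sum_div]
        field_simp

lemma integrable_iteratedDeriv_schwartzMap_s14 {F : Type*} [NormedAddCommGroup F] [NormedSpace ℝ F]
    (μ : Measure ℝ) [μ.HasTemperateGrowth] (f : SchwartzMap ℝ F) (k : ℕ) :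
    Integrable (iteratedDeriv k f) μ := by
  have hcont : Continuous (iteratedDeriv k f) := (f.smooth k).continuous_iteratedDeriv k le_rfl
  refine (integrable_norm_iff hcont.aestronglyMeasurable).1 ?_
  simpa [norm_iteratedFDeriv_eq_norm_iteratedDeriv]
    using f.integrable_pow_mul_iteratedFDeriv μ 0 k

/-- Bound on the combined Taylor remainder term in the one-dimensional `r`-th order ΣΔ
error analysis:
`|λ⁻¹ Σ_n v_n Σ_j h_j R_{x−n/λ,r}(−j/λ)|
  ≤ V λ^{−(r+1)} (Σ_j |h_j| j^{r+1})/(r+1)! (‖Φ^{(r+1)}‖_{L¹} + λ⁻¹ ‖Φ^{(r+2)}‖_{L¹})`. -/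
theorem stmt_14 (r L : ℕ) (hr : 1 ≤ r) (h : ℤ → ℝ)
    (hcausal : ∀ n : ℤ, n ≤ 0 → h n = 0)
    (hsupp : ∀ n : ℤ, (L : ℤ) < n → h n = 0)
    (Φ : SchwartzMap ℝ ℝ) (v : ℕ → ℝ) (V : ℝ) (hvb : ∀ n : ℕ, |v n| ≤ V)
    (lam : ℝ) (hlam : 0 < lam) (x : ℝ) :
    |lam⁻¹ * ∑' n : ℕ, v n * ∑ j ∈ Finset.Icc (1 : ℤ) (L : ℤ),
        h j * taylorRem1 r (⇑Φ) (x - n / lam) (-((j : ℝ) / lam))|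
      ≤ V * (lam ^ (r + 1))⁻¹ *
          ((∑ j ∈ Finset.Icc (1 : ℤ) (L : ℤ), |h j| * (j : ℝ) ^ (r + 1)) /
            (r + 1).factorial) *
          ((∫ t : ℝ, |iteratedDeriv (r + 1) (⇑Φ) t|)
            + lam⁻¹ * ∫ t : ℝ, |iteratedDeriv (r + 2) (⇑Φ) t|) :=
  stmt_14_general r L h (Φ.smooth _) (integrable_iteratedDeriv_schwartzMap_s14 volume Φ _)
    (integrable_iteratedDeriv_schwartzMap_s14 volume Φ _) v V hvb lam hlam x
end

section
/- Let r ≥ 1 and let Φ : ℝ² → ℝ be a Schwartz function. Then there exists a constant C ≥ 0, depending only on Φ and r, with the following property. For every p, s, ℓ ∈ ℕ, every weight matrix w = (w_{i,j}), i ∈ {0,…,p}, j ∈ {−s,…,ℓ}, with w_{i,j} ≥ 0 and Σ_{i,j} w_{i,j} = 1, every family of feedback filters h^{i,j} supported on {1,…,L}, every v : ℕ² → ℝ with |v_n| ≤ V for all n, every λ ≥ 1 and every x ∈ ℝ²: | λ^{−2} Σ_{n∈ℕ²} v_n Σ_{i,j} w_{i,j} Σ_{k=1}^L h^{i,j}_k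 R_{x−n/λ, r}( −(k/λ) d_{i,j} ) | ≤ C V λ^{−(r+1)} · ( max_{i,j} Σ_{k=1}^L |h^{i,j}_k| k^{r+1} ) · ( Σ_{i,j} w_{i,j} Σ_{m=0}^{r+1} |i|^{r+1−m} |j|^m / ((r+1−m)! m!) ), where d_{i,j} = (i,j) and R_{a,r}(u) = Φ(a+u) − Σ_{ℓ'=0}^r Σ_{|α|=ℓ'} (u^α/α!) ∂^α Φ(a) is the r-th order Taylor remainder of Φ at a ∈ ℝ². -/
open MeasureTheory

/-!
By the integral form of Taylor's theorem, `R_{a,r}(u)` is at most `‖u‖ ^ (r + 1)` times an average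
of `‖D^{r+1} Φ‖` over the segment from `a` to `a + u`. Averaging commutes with summing over the
centres `a = x - n / λ`, and every translate of the grid of mesh `1 / λ` sees at most `O(λ²)` of a
rapidly decreasing function, which the prefactor `λ⁻²` compensates. The steps `u = -(k / λ) d`
enter homogeneously of degree `r + 1`, and this gives the factor `λ^{-(r+1)} k^{r+1}`.
-/

open scoped Nat SchwartzMap

section DirectionalDerivative

variable {E F : Type*} [NormedAddCommGroup E] [NormedSpace ℝ E]
  [NormedAddCommGroup F] [NormedSpace ℝ F]

/-- The directional derivative `∂_u` as an element of the ring of continuous endomorphisms of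
Schwartz space, so that powers and the binomial theorem are available for it. -/
noncomputable def dirDeriv (u : E) : 𝓢(E, F) →L[ℝ] 𝓢(E, F) :=
  LineDeriv.lineDerivOpCLM ℝ 𝓢(E, F) u

lemma dirDeriv_apply (u : E) (f : 𝓢(E, F)) (x : E) : dirDeriv u f x = fderiv ℝ f x u := rfl

lemma dirDeriv_smul_add_smul (a b : ℝ) (u v : E) :
    (dirDeriv (a • u + b • v) : 𝓢(E, F) →L[ℝ] 𝓢(E, F)) = a • dirDeriv u + b • dirDeriv v := by
  ext f x
  simp [dirDeriv_apply]

lemma dirDeriv_pow_apply (u : E) (n : ℕ) (f : 𝓢(E, F)) (x : E) :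
    (dirDeriv u ^ n) f x = iteratedFDeriv ℝ n f x fun _ => u := by
  rw [← SchwartzMap.iteratedLineDerivOp_eq_iteratedFDeriv,
    LineDeriv.iteratedLineDerivOp_const_eq_iter_lineDerivOp, pow_apply_eq_iterate]
  rfl

lemma commute_dirDeriv (u v : E) :
    Commute (dirDeriv u : 𝓢(E, F) →L[ℝ] 𝓢(E, F)) (dirDeriv v) := by
  have dirDeriv_dirDeriv (f : 𝓢(E, F)) (x a b : E) :
      dirDeriv a (dirDeriv b f) x = fderiv ℝ (fderiv ℝ f) x a b := by
    have hf : DifferentiableAt ℝ (fderiv ℝ f) x :=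
      ((f.smooth 2).fderiv_right (m := 1) (by norm_num)).differentiable (by norm_num) x
    rw [dirDeriv_apply, funext (dirDeriv_apply b f), fderiv_clm_apply hf (by fun_prop)]
    simp
  ext f x
  have symm : IsSymmSndFDerivAt ℝ f x := (f.smooth 2).contDiffAt.isSymmSndFDerivAt (by simp)
  simp only [mul_apply_eq_comp, dirDeriv_dirDeriv, symm.eq u v]

lemma iteratedFDeriv_smul_add_smul (f : 𝓢(E, F)) (n : ℕ) (x : E) (a b : ℝ) (u v : E) :
    iteratedFDeriv ℝ n f x (fun _ => a • u + b • v) =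
      ∑ m ∈ Finset.range (n + 1), (n.choose m * (a ^ (n - m) * b ^ m)) •
        (dirDeriv u ^ (n - m)) ((dirDeriv v ^ m) f) x := by
  have comm : Commute (b • dirDeriv v : 𝓢(E, F) →L[ℝ] 𝓢(E, F)) (a • dirDeriv u) :=
    ((commute_dirDeriv v u).smul_left b).smul_right a
  rw [← dirDeriv_pow_apply, dirDeriv_smul_add_smul, add_comm, comm.add_pow, sum_apply,
    sum_apply]
  refine Finset.sum_congr rfl fun m _ => ?_
  have term_eq : (b • dirDeriv v) ^ m * (a • dirDeriv u) ^ (n - m) *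
        (n.choose m : 𝓢(E, F) →L[ℝ] 𝓢(E, F)) =
      (n.choose m * (a ^ (n - m) * b ^ m) : ℝ) • (dirDeriv u ^ (n - m) * dirDeriv v ^ m) := by
    rw [smul_pow, smul_pow, smul_mul_smul_comm,
      ← ((commute_dirDeriv (F := F) u v).pow_pow (n - m) m).eq, ← nsmul_eq_mul',
      ← Nat.cast_smul_eq_nsmul ℝ, smul_smul, mul_comm (b ^ m)]
  rw [term_eq, smul_apply, smul_apply, mul_apply_eq_comp]

end DirectionalDerivative

section PlaneTaylor

variable (f : 𝓢(ℝ × ℝ, ℝ))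

lemma pd1_eq_dirDeriv : pd1 f = dirDeriv (1, 0) f := by
  ext x
  exact (f.differentiableAt.hasFDerivAt.comp_hasDerivAt x.1
    ((hasDerivAt_id x.1).prodMk (hasDerivAt_const x.1 x.2))).deriv

lemma pd2_eq_dirDeriv : pd2 f = dirDeriv (0, 1) f := by
  ext x
  exact (f.differentiableAt.hasFDerivAt.comp_hasDerivAt x.2
    ((hasDerivAt_const x.2 x.1).prodMk (hasDerivAt_id x.2))).deriv

lemma pdm_eq_dirDeriv (a b : ℕ) :
    pdm a b f = (dirDeriv ((1, 0) : ℝ × ℝ) ^ a) ((dirDeriv ((0, 1) : ℝ × ℝ) ^ b) f) := by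
  have iterate_pd1 (g : 𝓢(ℝ × ℝ, ℝ)) : pd1^[a] g = (dirDeriv ((1, 0) : ℝ × ℝ) ^ a) g := by
    rw [pow_apply_eq_iterate]
    exact (Function.Semiconj.iterate_right (f := DFunLike.coe) (fun g => (pd1_eq_dirDeriv g).symm)
      a g).symm
  have iterate_pd2 : pd2^[b] f = (dirDeriv ((0, 1) : ℝ × ℝ) ^ b) f := by
    rw [pow_apply_eq_iterate]
    exact (Function.Semiconj.iterate_right (f := DFunLike.coe) (fun g => (pd2_eq_dirDeriv g).symm)
      b f).symm
  rw [pdm, iterate_pd2, iterate_pd1]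

lemma sum_pdm_eq_iteratedFDeriv (n : ℕ) (a u : ℝ × ℝ) :
    ∑ m ∈ Finset.range (n + 1), u.1 ^ (n - m) * u.2 ^ m / ((n - m)! * m !) * pdm (n - m) m f a =
      (n ! : ℝ)⁻¹ * iteratedFDeriv ℝ n f a fun _ => u := by
  have hu : u = u.1 • (1, 0) + u.2 • (0, 1) := by ext <;> simp
  conv_rhs => rw [hu, iteratedFDeriv_smul_add_smul, Finset.mul_sum]
  refine Finset.sum_congr rfl fun m hm => ?_
  rw [pdm_eq_dirDeriv, Nat.cast_choose ℝ (Finset.mem_range_succ_iff.mp hm), smul_eq_mul]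
  field_simp

lemma taylorRem2_eq_sub_sum_iteratedFDeriv (r : ℕ) (a u : ℝ × ℝ) :
    taylorRem2 r f a u = f (a + u) -
      ∑ k ∈ Finset.range (r + 1), (k ! : ℝ)⁻¹ • iteratedFDeriv ℝ k f a fun _ => u := by
  simp only [taylorRem2, sum_pdm_eq_iteratedFDeriv, smul_eq_mul]

end PlaneTaylor

lemma sum_norm_sub_taylor_le {ι E F : Type*} [NormedAddCommGroup E] [NormedSpace ℝ E]
    [NormedAddCommGroup F] [NormedSpace ℝ F] [CompleteSpace F] {f : E → F} {r : ℕ}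
    (hf : ContDiff ℝ (r + 1) f) (S : Finset ι) (a : ι → E) (u : E) {B : ℝ}
    (hB : ∀ t : ℝ, ∑ i ∈ S, ‖iteratedFDeriv ℝ (r + 1) f (a i + t • u)‖ ≤ B) :
    ∑ i ∈ S, ‖f (a i + u) -
        ∑ k ∈ Finset.range (r + 1), (k ! : ℝ)⁻¹ • iteratedFDeriv ℝ k f (a i) fun _ => u‖ ≤
      B * ‖u‖ ^ (r + 1) := by
  set D : ι → ℝ → ℝ := fun i t => ‖iteratedFDeriv ℝ (r + 1) f (a i + t • u)‖ * ‖u‖ ^ (r + 1)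
  have D_continuous (i : ι) : Continuous (D i) := by
    have := hf.continuous_iteratedFDeriv (m := r + 1) le_rfl
    fun_prop
  have remainder_le (i : ι) : ‖f (a i + u) -
      ∑ k ∈ Finset.range (r + 1), (k ! : ℝ)⁻¹ • iteratedFDeriv ℝ k f (a i) fun _ => u‖ ≤
      ∫ t in (0 : ℝ)..1, D i t := by
    rw [map_add_eq_sum_add_integral_iteratedFDeriv fun t _ => hf.contDiffAt, add_sub_cancel_left,
      norm_smul, norm_inv, Real.norm_natCast]
    have factorial_inv_le : (r ! : ℝ)⁻¹ ≤ 1 := inv_le_one_of_one_le₀ (mod_cast r.factorial_pos)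
    refine (mul_le_of_le_one_left (norm_nonneg _) factorial_inv_le).trans ?_
    refine intervalIntegral.norm_integral_le_of_norm_le zero_le_one
      (.of_forall fun t ht => ?_) ((D_continuous i).intervalIntegrable 0 1)
    rw [norm_smul, norm_pow, Real.norm_of_nonneg (sub_nonneg.mpr ht.2)]
    refine (mul_le_of_le_one_left (norm_nonneg _) ?_).trans
      (ContinuousMultilinearMap.le_opNorm_mul_pow_of_le _ (pi_norm_const_le u))
    exact pow_le_one₀ (sub_nonneg.mpr ht.2) (by linarith [ht.1])
  calc
    _ ≤ ∑ i ∈ S, ∫ t in (0 : ℝ)..1, D i t := Finset.sum_le_sum fun i _ => remainder_le i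
    _ = ∫ t in (0 : ℝ)..1, ∑ i ∈ S, D i t :=
      (intervalIntegral.integral_finsetSum fun i _ => (D_continuous i).intervalIntegrable 0 1).symm
    _ ≤ ∫ _ in (0 : ℝ)..1, B * ‖u‖ ^ (r + 1) := by
      refine intervalIntegral.integral_mono_on zero_le_one
        ((continuous_finsetSum S fun i _ => D_continuous i).intervalIntegrable 0 1) (by simp)
        fun t _ => ?_
      rw [← Finset.sum_mul]
      exact mul_le_mul_of_nonneg_right (hB t) (by positivity)
    _ = B * ‖u‖ ^ (r + 1) := by simp

section Grid

lemma sub_mul_inv_one_add_sq_le_arctan_sub {a b : ℝ} (hab : a < b) (hba : b ≤ a + 1) :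
    (b - a) * (1 + a ^ 2)⁻¹ ≤ 3 * (Real.arctan b - Real.arctan a) := by
  obtain ⟨c, ⟨hac, hcb⟩, hc⟩ := exists_hasDerivAt_eq_slope Real.arctan (fun t => (1 + t ^ 2)⁻¹) hab
    Real.continuous_arctan.continuousOn fun t _ => Real.hasDerivAt_arctan' t
  have derivative_comparable : (1 + a ^ 2)⁻¹ ≤ 3 * (1 + c ^ 2)⁻¹ := by
    rw [← div_eq_mul_inv, le_div_iff₀ (by positivity), inv_mul_le_iff₀ (by positivity)]
    nlinarith [sq_nonneg (c - 2 * a)]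
  calc
    (b - a) * (1 + a ^ 2)⁻¹ ≤ (b - a) * (3 * (1 + c ^ 2)⁻¹) := by
      gcongr
    _ = 3 * (Real.arctan b - Real.arctan a) := by
      rw [hc]
      field_simp [(sub_pos.mpr hab).ne']

lemma sum_inv_one_add_sq_grid_le {lam : ℝ} (hlam : 1 ≤ lam) (y : ℝ) (N : ℕ) :
    ∑ n ∈ Finset.range N, (1 + (y - n / lam) ^ 2)⁻¹ ≤ 3 * Real.pi * lam := by
  have hlam_pos : 0 < lam := by linarith
  set θ : ℕ → ℝ := fun n => Real.arctan (n / lam - y)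
  have term_le (n : ℕ) : (1 + (y - n / lam) ^ 2)⁻¹ ≤ 3 * lam * (θ (n + 1) - θ n) := by
    have spacing : ((n + 1 : ℕ) : ℝ) / lam - y - (n / lam - y) = lam⁻¹ := by
      push_cast
      ring
    have := sub_mul_inv_one_add_sq_le_arctan_sub
      (sub_pos.mp (spacing ▸ inv_pos.mpr hlam_pos))
      (sub_le_iff_le_add'.mp (spacing.trans_le (inv_le_one_of_one_le₀ hlam)))
    rw [spacing, inv_mul_le_iff₀ hlam_pos, sub_sq_comm] at this
    linarith
  calc
    _ ≤ ∑ n ∈ Finset.range N, 3 * lam * (θ (n + 1) - θ n) := Finset.sum_le_sum fun n _ => term_le n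
    _ = 3 * lam * (θ N - θ 0) := by rw [← Finset.mul_sum, Finset.sum_range_sub]
    _ ≤ 3 * lam * Real.pi := by
      gcongr
      simp only [θ]
      linarith [Real.arctan_lt_pi_div_two (N / lam - y),
        Real.neg_pi_div_two_lt_arctan ((0 : ℕ) / lam - y)]
    _ = 3 * Real.pi * lam := by ring

/-- The point `x - n / λ` of the translated and reflected grid of mesh `1 / λ` at which the
Taylor expansions are centred. -/
noncomputable def gridPoint (lam : ℝ) (x : ℝ × ℝ) (n : ℕ × ℕ) : ℝ × ℝ :=
  (x.1 - n.1 / lam, x.2 - n.2 / lam)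

lemma gridPoint_add (lam : ℝ) (x u : ℝ × ℝ) (n : ℕ × ℕ) :
    gridPoint lam x n + u = gridPoint lam (x + u) n := by
  ext <;> simp only [gridPoint, Prod.fst_add, Prod.snd_add] <;> ring

lemma one_add_norm_pow_four_inv_le (z : ℝ × ℝ) :
    ((1 + ‖z‖) ^ 4)⁻¹ ≤ (1 + z.1 ^ 2)⁻¹ * (1 + z.2 ^ 2)⁻¹ := by
  have one_add_sq_le {t : ℝ} (ht : ‖t‖ ≤ ‖z‖) : 1 + t ^ 2 ≤ (1 + ‖z‖) ^ 2 := by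
    rw [← sq_abs t, ← Real.norm_eq_abs]
    nlinarith [norm_nonneg t]
  rw [← mul_inv]
  refine inv_anti₀ (by positivity) ?_
  calc
    (1 + z.1 ^ 2) * (1 + z.2 ^ 2) ≤ (1 + ‖z‖) ^ 2 * (1 + ‖z‖) ^ 2 := by
      gcongr
      exacts [one_add_sq_le (norm_fst_le z), one_add_sq_le (norm_snd_le z)]
    _ = (1 + ‖z‖) ^ 4 := by ring

lemma sum_inv_one_add_norm_pow_four_grid_le {lam : ℝ} (hlam : 1 ≤ lam) (x : ℝ × ℝ)
    (S : Finset (ℕ × ℕ)) :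
    ∑ n ∈ S, ((1 + ‖gridPoint lam x n‖) ^ 4)⁻¹ ≤ (3 * Real.pi * lam) ^ 2 := by
  obtain ⟨N, hN⟩ := (S.image Prod.fst ∪ S.image Prod.snd).exists_nat_subset_range
  have S_subset : S ⊆ Finset.range N ×ˢ Finset.range N :=
    Finset.subset_product.trans <| Finset.product_subset_product
      (Finset.subset_union_left.trans hN) (Finset.subset_union_right.trans hN)
  calc
    _ ≤ ∑ n ∈ S, (1 + (x.1 - n.1 / lam) ^ 2)⁻¹ * (1 + (x.2 - n.2 / lam) ^ 2)⁻¹ :=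
      Finset.sum_le_sum fun n _ => one_add_norm_pow_four_inv_le (gridPoint lam x n)
    _ ≤ ∑ n ∈ Finset.range N ×ˢ Finset.range N,
        (1 + (x.1 - n.1 / lam) ^ 2)⁻¹ * (1 + (x.2 - n.2 / lam) ^ 2)⁻¹ :=
      Finset.sum_le_sum_of_subset_of_nonneg S_subset fun _ _ _ => by positivity
    _ = (∑ n ∈ Finset.range N, (1 + (x.1 - n / lam) ^ 2)⁻¹) *
        ∑ n ∈ Finset.range N, (1 + (x.2 - n / lam) ^ 2)⁻¹ := by
      rw [Finset.sum_mul_sum, Finset.sum_product]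
    _ ≤ 3 * Real.pi * lam * (3 * Real.pi * lam) :=
      mul_le_mul (sum_inv_one_add_sq_grid_le hlam x.1 N) (sum_inv_one_add_sq_grid_le hlam x.2 N)
        (Finset.sum_nonneg fun _ _ => by positivity) (by positivity)
    _ = (3 * Real.pi * lam) ^ 2 := by ring

lemma exists_sum_norm_iteratedFDeriv_grid_le {F : Type*} [NormedAddCommGroup F] [NormedSpace ℝ F]
    (f : 𝓢(ℝ × ℝ, F)) (k : ℕ) :
    ∃ C : ℝ, 0 ≤ C ∧ ∀ lam : ℝ, 1 ≤ lam → ∀ (x : ℝ × ℝ) (S : Finset (ℕ × ℕ)),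
      ∑ n ∈ S, ‖iteratedFDeriv ℝ k f (gridPoint lam x n)‖ ≤ C * lam ^ 2 := by
  obtain ⟨M, hM, decay⟩ : ∃ M : ℝ, 0 ≤ M ∧ ∀ z, (1 + ‖z‖) ^ 4 * ‖iteratedFDeriv ℝ k f z‖ ≤ M :=
    ⟨_, by positivity,
      f.one_add_le_sup_seminorm_apply (𝕜 := ℝ) (m := (4, k)) le_rfl le_rfl⟩
  refine ⟨M * (3 * Real.pi) ^ 2, by positivity, fun lam hlam x S => ?_⟩
  calc
    _ ≤ ∑ n ∈ S, M * ((1 + ‖gridPoint lam x n‖) ^ 4)⁻¹ := by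
      refine Finset.sum_le_sum fun n _ => ?_
      rw [← div_eq_mul_inv, le_div_iff₀' (by positivity)]
      exact decay _
    _ ≤ M * (3 * Real.pi * lam) ^ 2 := by
      rw [← Finset.mul_sum]
      exact mul_le_mul_of_nonneg_left (sum_inv_one_add_norm_pow_four_grid_le hlam x S) hM
    _ = M * (3 * Real.pi) ^ 2 * lam ^ 2 := by ring

end Grid

section MultiIndexWeight

/-- The sum `∑_{|α| = n} |u^α| / α!` over the multi-indices `α = (n - m, m)`, in which the error
bound measures the size of a direction `u`. -/
noncomputable def multiIndexWeight (n : ℕ) (u : ℝ × ℝ) : ℝ :=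
  ∑ m ∈ Finset.range (n + 1), |u.1| ^ (n - m) * |u.2| ^ m / ((n - m)! * m !)

lemma multiIndexWeight_eq (n : ℕ) (u : ℝ × ℝ) :
    multiIndexWeight n u = (|u.1| + |u.2|) ^ n / n ! := by
  rw [add_comm, add_pow, Finset.sum_div, multiIndexWeight]
  refine Finset.sum_congr rfl fun m hm => ?_
  rw [Nat.cast_choose ℝ (Finset.mem_range_succ_iff.mp hm)]
  field_simp

lemma multiIndexWeight_nonneg (n : ℕ) (u : ℝ × ℝ) : 0 ≤ multiIndexWeight n u := by
  rw [multiIndexWeight_eq]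
  positivity

lemma multiIndexWeight_smul (n : ℕ) (c : ℝ) (u : ℝ × ℝ) :
    multiIndexWeight n (c • u) = |c| ^ n * multiIndexWeight n u := by
  simp only [multiIndexWeight_eq, Prod.smul_fst, Prod.smul_snd, smul_eq_mul, abs_mul, ← mul_add,
    mul_pow, mul_div_assoc]

lemma norm_pow_le_factorial_mul_multiIndexWeight (n : ℕ) (u : ℝ × ℝ) :
    ‖u‖ ^ n ≤ n ! * multiIndexWeight n u := by
  rw [multiIndexWeight_eq, mul_div_cancel₀ _ (by positivity)]
  gcongr
  exact max_le_add_of_nonneg (abs_nonneg _) (abs_nonneg _)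

end MultiIndexWeight

lemma exists_sum_norm_taylorRem2_grid_le (r : ℕ) (f : 𝓢(ℝ × ℝ, ℝ)) :
    ∃ C : ℝ, 0 ≤ C ∧ ∀ lam : ℝ, 1 ≤ lam → ∀ (x : ℝ × ℝ) (S : Finset (ℕ × ℕ)) (u : ℝ × ℝ),
      ∑ n ∈ S, ‖taylorRem2 r f (gridPoint lam x n) u‖ ≤
        C * lam ^ 2 * multiIndexWeight (r + 1) u := by
  obtain ⟨C, hC, derivative_sum_le⟩ := exists_sum_norm_iteratedFDeriv_grid_le f (r + 1)
  refine ⟨C * (r + 1)!, by positivity, fun lam hlam x S u => ?_⟩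
  calc
    _ ≤ C * lam ^ 2 * ‖u‖ ^ (r + 1) := by
      simp only [taylorRem2_eq_sub_sum_iteratedFDeriv]
      refine sum_norm_sub_taylor_le (f.smooth _) S (gridPoint lam x) u fun t => ?_
      simp only [gridPoint_add]
      exact derivative_sum_le lam hlam (x + t • u) S
    _ ≤ C * lam ^ 2 * ((r + 1)! * multiIndexWeight (r + 1) u) := by
      gcongr
      exact norm_pow_le_factorial_mul_multiIndexWeight (r + 1) u
    _ = C * (r + 1)! * lam ^ 2 * multiIndexWeight (r + 1) u := by ring

section Superposition

variable {ν E : Type*} [NormedAddCommGroup E]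

lemma sum_norm_sum_smul_le [NormedSpace ℝ E] {κ : Type*} {S : Finset ν} (K : Finset κ) (c : κ → ℝ)
    {g : κ → ν → E} {B : κ → ℝ} (hg : ∀ k ∈ K, ∑ n ∈ S, ‖g k n‖ ≤ B k) :
    ∑ n ∈ S, ‖∑ k ∈ K, c k • g k n‖ ≤ ∑ k ∈ K, |c k| * B k := by
  calc
    _ ≤ ∑ n ∈ S, ∑ k ∈ K, |c k| * ‖g k n‖ := by
      refine Finset.sum_le_sum fun n _ => ?_
      simpa only [norm_smul, Real.norm_eq_abs] using norm_sum_le K fun k => c k • g k n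
    _ = ∑ k ∈ K, |c k| * ∑ n ∈ S, ‖g k n‖ := by
      rw [Finset.sum_comm]
      simp only [Finset.mul_sum]
    _ ≤ ∑ k ∈ K, |c k| * B k :=
      Finset.sum_le_sum fun k hk => mul_le_mul_of_nonneg_left (hg k hk) (abs_nonneg _)

lemma sum_norm_feedback_sum_le [NormedSpace ℝ E] {S : Finset ν} {g : ν → ℝ × ℝ → E} {N : ℕ} {B : ℝ}
    (hg : ∀ u, ∑ n ∈ S, ‖g n u‖ ≤ B * multiIndexWeight N u) {lam : ℝ} (hlam : 0 ≤ lam) (L : ℤ)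
    (h : ℤ → ℝ) (d : ℝ × ℝ) :
    ∑ n ∈ S, ‖∑ k ∈ Finset.Icc 1 L, h k • g n (-(((k : ℝ) / lam) • d))‖ ≤
      B * (lam ^ N)⁻¹ * (∑ k ∈ Finset.Icc 1 L, |h k| * (k : ℝ) ^ N) * multiIndexWeight N d := by
  refine (sum_norm_sum_smul_le _ h fun k _ => hg _).trans_eq ?_
  rw [Finset.mul_sum, Finset.sum_mul]
  refine Finset.sum_congr rfl fun k hk => ?_
  have hk_nonneg : (0 : ℝ) ≤ k := mod_cast zero_le_one.trans (Finset.mem_Icc.mp hk).1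
  rw [← neg_smul, multiIndexWeight_smul, abs_neg, abs_of_nonneg (div_nonneg hk_nonneg hlam),
    div_pow]
  ring

lemma summable_and_norm_tsum_le_of_sum_norm_le [CompleteSpace E] {f : ν → E} {B : ℝ}
    (hf : ∀ S : Finset ν, ∑ n ∈ S, ‖f n‖ ≤ B) : Summable f ∧ ‖∑' n, f n‖ ≤ B := by
  have summable_norm : Summable fun n => ‖f n‖ := summable_of_sum_le (fun n => norm_nonneg (f n)) hf
  exact ⟨summable_norm.of_norm,
    (norm_tsum_le_tsum_norm summable_norm).trans (summable_norm.tsum_le_of_sum_le hf)⟩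

end Superposition

theorem stmt_15_general (r : ℕ) (Φ : 𝓢(ℝ × ℝ, ℝ)) :
    ∃ C : ℝ, 0 ≤ C ∧
      ∀ (ι : Type*) (I : Finset ι) (hI : I.Nonempty) (w : ι → ℝ), (∀ i ∈ I, 0 ≤ w i) →
      ∀ (d : ι → ℝ × ℝ) (L : ℤ) (h : ι → ℤ → ℝ) (v : ℕ × ℕ → ℝ) (V : ℝ), (∀ n, |v n| ≤ V) →
      ∀ lam : ℝ, 1 ≤ lam → ∀ x : ℝ × ℝ,
        let error (n : ℕ × ℕ) : ℝ := v n * ∑ i ∈ I, w i * ∑ k ∈ Finset.Icc 1 L,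
          h i k * taylorRem2 r Φ (gridPoint lam x n) (-(((k : ℝ) / lam) • d i))
        Summable error ∧
          |(lam ^ 2)⁻¹ * ∑' n, error n| ≤
            C * V * (lam ^ (r + 1))⁻¹ *
              (I.sup' hI fun i => ∑ k ∈ Finset.Icc 1 L, |h i k| * (k : ℝ) ^ (r + 1)) *
              ∑ i ∈ I, w i * multiIndexWeight (r + 1) (d i) := by
  obtain ⟨C, hC, remainder_sum_le⟩ := exists_sum_norm_taylorRem2_grid_le r Φ
  refine ⟨C, hC, fun ι I hI w hw d L h v V hv lam hlam x => ?_⟩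
  intro error
  have hV : 0 ≤ V := (abs_nonneg _).trans (hv 0)
  set H := I.sup' hI fun i => ∑ k ∈ Finset.Icc 1 L, |h i k| * (k : ℝ) ^ (r + 1)
  have filtered_sum_le (S : Finset (ℕ × ℕ)) (i : ι) (hi : i ∈ I) :
      ∑ n ∈ S, ‖∑ k ∈ Finset.Icc 1 L,
        h i k * taylorRem2 r Φ (gridPoint lam x n) (-(((k : ℝ) / lam) • d i))‖ ≤
      C * lam ^ 2 * (lam ^ (r + 1))⁻¹ * H * multiIndexWeight (r + 1) (d i) := by
    refine (sum_norm_feedback_sum_le (remainder_sum_le lam hlam x S) (by linarith)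
      L (h i) (d i)).trans ?_
    have := multiIndexWeight_nonneg (r + 1) (d i)
    have : ∑ k ∈ Finset.Icc 1 L, |h i k| * (k : ℝ) ^ (r + 1) ≤ H :=
      I.le_sup' (fun i => ∑ k ∈ Finset.Icc 1 L, |h i k| * (k : ℝ) ^ (r + 1)) hi
    gcongr
  have error_sum_le (S : Finset (ℕ × ℕ)) : ∑ n ∈ S, ‖error n‖ ≤ V * ∑ i ∈ I,
      |w i| * (C * lam ^ 2 * (lam ^ (r + 1))⁻¹ * H * multiIndexWeight (r + 1) (d i)) := by
    refine le_trans ?_ (mul_le_mul_of_nonneg_left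
      (sum_norm_sum_smul_le I w (filtered_sum_le S)) hV)
    rw [Finset.mul_sum]
    refine Finset.sum_le_sum fun n _ => ?_
    rw [norm_mul]
    exact mul_le_mul_of_nonneg_right (hv n) (norm_nonneg _)
  obtain ⟨error_summable, tsum_error_le⟩ := summable_and_norm_tsum_le_of_sum_norm_le error_sum_le
  refine ⟨error_summable, ?_⟩
  rw [abs_mul, abs_of_nonneg (by positivity), inv_mul_le_iff₀ (by positivity)]
  refine tsum_error_le.trans_eq ?_
  simp only [Finset.mul_sum]
  refine Finset.sum_congr rfl fun i hi => ?_
  rw [abs_of_nonneg (hw i hi)]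
  ring

/-- Bound on the combined Taylor remainder term in the two-dimensional weighted `r`-th
order ΣΔ error analysis: there is a constant `C ≥ 0` depending only on `Φ` and `r` such
that the remainder series is bounded by
`C V λ^{−(r+1)} (max_{i,j} Σ_k |h^{i,j}_k| k^{r+1}) (Σ_{i,j} w_{i,j} Σ_m |i|^{r+1−m}|j|^m/((r+1−m)! m!))`. -/
theorem stmt_15 (r : ℕ) (hr : 1 ≤ r) (Φ : SchwartzMap (ℝ × ℝ) ℝ) :
    ∃ C : ℝ, 0 ≤ C ∧
      ∀ (p s ℓ L : ℕ) (w : ℤ → ℤ → ℝ), (∀ i j : ℤ, 0 ≤ w i j) →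
        (∑ i ∈ Finset.Icc (0 : ℤ) (p : ℤ), ∑ j ∈ Finset.Icc (-(s : ℤ)) (ℓ : ℤ), w i j = 1) →
      ∀ h : ℤ → ℤ → ℤ → ℝ, (∀ i j k : ℤ, k ≤ 0 → h i j k = 0) →
        (∀ i j k : ℤ, (L : ℤ) < k → h i j k = 0) →
      ∀ (v : ℕ × ℕ → ℝ) (V : ℝ), (∀ n : ℕ × ℕ, |v n| ≤ V) →
      ∀ lam : ℝ, 1 ≤ lam → ∀ x : ℝ × ℝ,
        |(lam ^ 2)⁻¹ * ∑' n : ℕ × ℕ, v n *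
            ∑ i ∈ Finset.Icc (0 : ℤ) (p : ℤ), ∑ j ∈ Finset.Icc (-(s : ℤ)) (ℓ : ℤ),
              w i j * ∑ k ∈ Finset.Icc (1 : ℤ) (L : ℤ),
                h i j k * taylorRem2 r (⇑Φ) (x.1 - n.1 / lam, x.2 - n.2 / lam)
                  (-(((k : ℝ) / lam) • ((i : ℝ), (j : ℝ))))|
          ≤ C * V * (lam ^ (r + 1))⁻¹ *
              ((Finset.Icc (0 : ℤ) (p : ℤ) ×ˢ Finset.Icc (-(s : ℤ)) (ℓ : ℤ)).sup'
                (Finset.nonempty_product.mpr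
                  ⟨Finset.nonempty_Icc.mpr (by omega), Finset.nonempty_Icc.mpr (by omega)⟩)
                (fun ij => ∑ k ∈ Finset.Icc (1 : ℤ) (L : ℤ),
                  |h ij.1 ij.2 k| * (k : ℝ) ^ (r + 1))) *
              (∑ i ∈ Finset.Icc (0 : ℤ) (p : ℤ), ∑ j ∈ Finset.Icc (-(s : ℤ)) (ℓ : ℤ),
                w i j * ∑ m ∈ Finset.range (r + 2),
                  |(i : ℝ)| ^ (r + 1 - m) * |(j : ℝ)| ^ m /
                    ((r + 1 - m).factorial * m.factorial)) := by
  obtain ⟨C, hC, bound⟩ := stmt_15_general r Φ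
  refine ⟨C, hC, fun p s ℓ L w hw _ h _ _ v V hv lam hlam x => ?_⟩
  have hI : (Finset.Icc (0 : ℤ) p ×ˢ Finset.Icc (-(s : ℤ)) ℓ).Nonempty :=
    Finset.nonempty_product.mpr
      ⟨Finset.nonempty_Icc.mpr (by omega), Finset.nonempty_Icc.mpr (by omega)⟩
  have := (bound (ℤ × ℤ) _ hI (fun ij => w ij.1 ij.2) (fun ij _ => hw ij.1 ij.2)
    (fun ij => (ij.1, ij.2)) L (fun ij => h ij.1 ij.2) v V hv lam hlam x).2
  simpa only [Finset.sum_product, gridPoint, multiIndexWeight] using this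
end

section
/- Let p, s, ℓ ∈ ℕ with p ≥ 1 and ℓ ≥ 1, and consider weights w = (w_{i,j}), i ∈ {0,…,p}, j ∈ {−s,…,ℓ}, satisfying w_{i,j} ≥ 0 for all i,j, Σ_{i,j} w_{i,j} = 1, and w_{0,j} = 0 for all j ≤ 0. Define F(w) = ( Σ_{i,j} j·w_{i,j} )² + ( Σ_{i,j} i·w_{i,j} )². Then F(w) ≥ 1/(1+(s+1)²) for every such w, and equality holds for the weights given by w_{1,−s} = (s+1)/(1+(s+1)²), w_{0,1} = 1 − (s+1)/(1+(s+1)²), and w_{i,j} = 0 otherwise. In particular, the minimal value of the weight constant C_W = F(w)^{1/2} over all admissible weight matrices equals 1/√(1+(s+1)²). -/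
open Finset

/-- The objective `F(w) = (Σ_{i,j} j w_{i,j})² + (Σ_{i,j} i w_{i,j})²` of the
optimization problem for first-order weighted ΣΔ schemes. -/
noncomputable def Fobj (p s ℓ : ℕ) (w : ℤ → ℤ → ℝ) : ℝ :=
  (∑ i ∈ Icc (0 : ℤ) (p : ℤ), ∑ j ∈ Icc (-(s : ℤ)) (ℓ : ℤ), (j : ℝ) * w i j) ^ 2
    + (∑ i ∈ Icc (0 : ℤ) (p : ℤ), ∑ j ∈ Icc (-(s : ℤ)) (ℓ : ℤ), (i : ℝ) * w i j) ^ 2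

/-- Admissible weight matrices: nonnegative entries summing to one, vanishing for
`i = 0`, `j ≤ 0`. -/
def AdmissibleW (p s ℓ : ℕ) (w : ℤ → ℤ → ℝ) : Prop :=
  (∀ i j : ℤ, 0 ≤ w i j) ∧
    (∑ i ∈ Icc (0 : ℤ) (p : ℤ), ∑ j ∈ Icc (-(s : ℤ)) (ℓ : ℤ), w i j = 1) ∧
    (∀ j : ℤ, j ≤ 0 → w 0 j = 0)

/-- The optimal weights: `w_{1,−s} = (s+1)/(1+(s+1)²)`, `w_{0,1} = 1 − (s+1)/(1+(s+1)²)`,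
all other entries zero. -/
noncomputable def wOpt (s : ℕ) : ℤ → ℤ → ℝ := fun i j =>
  if (i, j) = ((1 : ℤ), -(s : ℤ)) then ((s : ℝ) + 1) / (1 + ((s : ℝ) + 1) ^ 2)
  else if (i, j) = ((0 : ℤ), (1 : ℤ)) then 1 - ((s : ℝ) + 1) / (1 + ((s : ℝ) + 1) ^ 2)
  else 0

/-!
Every lattice point `(i, j)` at which an admissible weight may be nonzero satisfies
`1 ≤ j + (s + 1) i`, so the moments `x = Σ j w_{i,j}` and `y = Σ i w_{i,j}` satisfy
`1 ≤ x + (s + 1) y`. Thus `F(w) = x² + y²` is at least the squared distance from the origin to the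
line `x + (s + 1) y = 1`. The index pairs `(1, -s)` and `(0, 1)` make `1 ≤ j + (s + 1) i` an
equality, and distributing the mass between them reaches the foot of the perpendicular on that line.
-/

section Line

variable {K : Type*} [Field K] [LinearOrder K] [IsStrictOrderedRing K]

lemma one_div_sq_add_sq_le_sq_add_sq {a b x y : K} (h : 1 ≤ a * x + b * y) :
    1 / (a ^ 2 + b ^ 2) ≤ x ^ 2 + y ^ 2 := by
  have cauchy_schwarz : (a * x + b * y) ^ 2 ≤ (x ^ 2 + y ^ 2) * (a ^ 2 + b ^ 2) := by
    linear_combination sq_nonneg (a * y - b * x)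
  exact div_le_of_le_mul₀ (by positivity) (by positivity)
    ((one_le_pow₀ h).trans cauchy_schwarz)

lemma sq_one_sub_mul_div_add_sq_div (a : K) :
    (1 - a * (a / (1 + a ^ 2))) ^ 2 + (a / (1 + a ^ 2)) ^ 2 = 1 / (1 + a ^ 2) := by
  have : 1 + a ^ 2 ≠ 0 := by positivity
  field_simp
  ring

lemma div_one_add_sq_le_one (a : K) : a / (1 + a ^ 2) ≤ 1 := by
  rw [div_le_one (by positivity)]
  nlinarith [sq_nonneg (a - 1), sq_nonneg a]

end Line

lemma sum_le_sum_mul_of_one_le_of_ne_zero {ι R : Type*} [Semiring R] [PartialOrder R]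
    [IsOrderedRing R] {t : Finset ι} {f w : ι → R} (hw : ∀ k ∈ t, 0 ≤ w k)
    (hf : ∀ k ∈ t, w k ≠ 0 → 1 ≤ f k) : ∑ k ∈ t, w k ≤ ∑ k ∈ t, f k * w k := by
  refine sum_le_sum fun k hk => ?_
  rcases eq_or_ne (w k) 0 with hzero | hne
  · simp [hzero]
  · exact le_mul_of_one_le_left (hw k hk) (hf k hk hne)

/-- The index set `{0, …, p} × {-s, …, ℓ}` of the weights, as a single finset, so that the iterated
sums in `Fobj` and `AdmissibleW` become sums over one index. -/
noncomputable def weightGrid (p s ℓ : ℕ) : Finset (ℤ × ℤ) :=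
  Icc (0 : ℤ) p ×ˢ Icc (-(s : ℤ)) ℓ

section Weights

variable {p s ℓ : ℕ}

lemma mem_weightGrid {k : ℤ × ℤ} :
    k ∈ weightGrid p s ℓ ↔ (0 ≤ k.1 ∧ k.1 ≤ p) ∧ (-(s : ℤ) ≤ k.2 ∧ k.2 ≤ ℓ) := by
  simp only [weightGrid, mem_product, mem_Icc]

lemma sum_weightGrid (f : ℤ → ℤ → ℝ) :
    ∑ k ∈ weightGrid p s ℓ, f k.1 k.2 =
      ∑ i ∈ Icc (0 : ℤ) p, ∑ j ∈ Icc (-(s : ℤ)) ℓ, f i j :=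
  sum_product' _ _ f

lemma Fobj_eq_sum_weightGrid (w : ℤ → ℤ → ℝ) :
    Fobj p s ℓ w = (∑ k ∈ weightGrid p s ℓ, (k.2 : ℝ) * w k.1 k.2) ^ 2 +
      (∑ k ∈ weightGrid p s ℓ, (k.1 : ℝ) * w k.1 k.2) ^ 2 := by
  rw [Fobj, sum_weightGrid fun i j => (j : ℝ) * w i j, sum_weightGrid fun i j => (i : ℝ) * w i j]

lemma one_le_snd_add_mul_fst {k : ℤ × ℤ} (hk : k ∈ weightGrid p s ℓ)
    (hpos : k.1 = 0 → 0 < k.2) : 1 ≤ k.2 + (s + 1) * k.1 := by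
  obtain ⟨⟨hfst, -⟩, hsnd, -⟩ := mem_weightGrid.1 hk
  rcases hfst.eq_or_lt with hzero | hfst_pos
  · have := hpos hzero.symm
    simp only [← hzero]
    omega
  · calc (1 : ℤ) = -s + (s + 1) * 1 := by ring
      _ ≤ k.2 + (s + 1) * k.1 := by gcongr; omega

namespace AdmissibleW

variable {w : ℤ → ℤ → ℝ}

lemma one_le_moment_add_mul_moment (hw : AdmissibleW p s ℓ w) :
    1 ≤ ∑ k ∈ weightGrid p s ℓ, (k.2 : ℝ) * w k.1 k.2 +
      ((s : ℝ) + 1) * ∑ k ∈ weightGrid p s ℓ, (k.1 : ℝ) * w k.1 k.2 := by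
  obtain ⟨hnonneg, hsum, hvanish⟩ := hw
  have one_le_of_ne_zero : ∀ k ∈ weightGrid p s ℓ, w k.1 k.2 ≠ 0 →
      (1 : ℝ) ≤ k.2 + (s + 1) * k.1 := by
    intro k hk hne
    have hpos : k.1 = 0 → 0 < k.2 := by
      intro hzero
      by_contra! hle
      exact hne (hzero ▸ hvanish k.2 hle)
    exact_mod_cast one_le_snd_add_mul_fst hk hpos
  calc (1 : ℝ) = ∑ k ∈ weightGrid p s ℓ, w k.1 k.2 := by rw [sum_weightGrid, hsum]
    _ ≤ ∑ k ∈ weightGrid p s ℓ, ((k.2 : ℝ) + (s + 1) * k.1) * w k.1 k.2 :=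
        sum_le_sum_mul_of_one_le_of_ne_zero (fun k _ => hnonneg k.1 k.2) one_le_of_ne_zero
    _ = _ := by simp only [add_mul _ _ (w _ _), sum_add_distrib, mul_sum, mul_assoc]

lemma one_div_le_Fobj (hw : AdmissibleW p s ℓ w) :
    1 / (1 + ((s : ℝ) + 1) ^ 2) ≤ Fobj p s ℓ w := by
  rw [Fobj_eq_sum_weightGrid]
  simpa only [one_pow] using one_div_sq_add_sq_le_sq_add_sq (a := (1 : ℝ))
    (by simpa only [one_mul] using hw.one_le_moment_add_mul_moment)

end AdmissibleW

/-- The weights with mass `t` at `(1, -s)` and mass `1 - t` at `(0, 1)`, the only two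
index pairs at which `1 ≤ j + (s + 1) i` is an equality. They are admissible for `t ∈ [0, 1]`, and
`wOpt s` is the case `t = (s + 1) / (1 + (s + 1) ^ 2)`. -/
noncomputable def twoPointWeights (s : ℕ) (t : ℝ) : ℤ → ℤ → ℝ := fun i j =>
  if (i, j) = ((1 : ℤ), -(s : ℤ)) then t
  else if (i, j) = ((0 : ℤ), (1 : ℤ)) then 1 - t
  else 0

lemma wOpt_eq_twoPointWeights (s : ℕ) :
    wOpt s = twoPointWeights s (((s : ℝ) + 1) / (1 + ((s : ℝ) + 1) ^ 2)) :=
  rfl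

lemma twoPointWeights_nonneg {t : ℝ} (ht₀ : 0 ≤ t) (ht₁ : t ≤ 1) (i j : ℤ) :
    0 ≤ twoPointWeights s t i j := by
  unfold twoPointWeights
  split_ifs
  exacts [ht₀, sub_nonneg.2 ht₁, le_rfl]

lemma twoPointWeights_zero_of_nonpos (t : ℝ) {j : ℤ} (hj : j ≤ 0) :
    twoPointWeights s t 0 j = 0 := by
  have : j ≠ 1 := by omega
  simp [twoPointWeights, this]

lemma sum_mul_twoPointWeights (hp : 1 ≤ p) (hℓ : 1 ≤ ℓ) (f : ℤ × ℤ → ℝ) (t : ℝ) :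
    ∑ k ∈ weightGrid p s ℓ, f k * twoPointWeights s t k.1 k.2 =
      f (1, -(s : ℤ)) * t + f (0, 1) * (1 - t) := by
  have left_mem : ((1 : ℤ), -(s : ℤ)) ∈ weightGrid p s ℓ := by
    rw [mem_weightGrid]
    omega
  have right_mem : ((0 : ℤ), (1 : ℤ)) ∈ weightGrid p s ℓ := by
    rw [mem_weightGrid]
    omega
  rw [sum_eq_add_of_mem _ _ left_mem right_mem (by simp)]
  · simp [twoPointWeights]
  · rintro k - ⟨hleft, hright⟩
    simp only [twoPointWeights, if_neg hleft, if_neg hright, mul_zero]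

lemma admissibleW_twoPointWeights (hp : 1 ≤ p) (hℓ : 1 ≤ ℓ) {t : ℝ} (ht₀ : 0 ≤ t) (ht₁ : t ≤ 1) :
    AdmissibleW p s ℓ (twoPointWeights s t) := by
  refine ⟨twoPointWeights_nonneg ht₀ ht₁, ?_, fun _ => twoPointWeights_zero_of_nonpos t⟩
  rw [← sum_weightGrid]
  simpa only [one_mul, add_sub_cancel] using sum_mul_twoPointWeights hp hℓ (fun _ => 1) t

lemma Fobj_twoPointWeights (hp : 1 ≤ p) (hℓ : 1 ≤ ℓ) (t : ℝ) :
    Fobj p s ℓ (twoPointWeights s t) = (1 - ((s : ℝ) + 1) * t) ^ 2 + t ^ 2 := by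
  rw [Fobj_eq_sum_weightGrid, sum_mul_twoPointWeights hp hℓ fun k => (k.2 : ℝ),
    sum_mul_twoPointWeights hp hℓ fun k => (k.1 : ℝ)]
  push_cast
  ring

lemma admissibleW_wOpt (hp : 1 ≤ p) (hℓ : 1 ≤ ℓ) : AdmissibleW p s ℓ (wOpt s) :=
  admissibleW_twoPointWeights hp hℓ (by positivity) (div_one_add_sq_le_one _)

lemma Fobj_wOpt (hp : 1 ≤ p) (hℓ : 1 ≤ ℓ) :
    Fobj p s ℓ (wOpt s) = 1 / (1 + ((s : ℝ) + 1) ^ 2) := by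
  rw [wOpt_eq_twoPointWeights, Fobj_twoPointWeights hp hℓ, sq_one_sub_mul_div_add_sq_div]

end Weights

/-- Solution of the optimization problem for the first-order weight constant:
`F(w) ≥ 1/(1+(s+1)²)` for every admissible `w`, with equality at `wOpt`; in particular
the minimal value of `C_W = √F(w)` equals `1/√(1+(s+1)²)`. -/
theorem stmt_16 (p s ℓ : ℕ) (hp : 1 ≤ p) (hℓ : 1 ≤ ℓ) :
    (∀ w : ℤ → ℤ → ℝ, AdmissibleW p s ℓ w →
        1 / (1 + ((s : ℝ) + 1) ^ 2) ≤ Fobj p s ℓ w) ∧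
    (AdmissibleW p s ℓ (wOpt s) ∧ Fobj p s ℓ (wOpt s) = 1 / (1 + ((s : ℝ) + 1) ^ 2)) ∧
    IsLeast {c : ℝ | ∃ w : ℤ → ℤ → ℝ, AdmissibleW p s ℓ w ∧ c = Real.sqrt (Fobj p s ℓ w)}
      (1 / Real.sqrt (1 + ((s : ℝ) + 1) ^ 2)) := by
  have hsqrt : 1 / √(1 + ((s : ℝ) + 1) ^ 2) = √(1 / (1 + ((s : ℝ) + 1) ^ 2)) := by
    rw [Real.sqrt_div zero_le_one, Real.sqrt_one]
  refine ⟨fun w hw => hw.one_div_le_Fobj, ⟨admissibleW_wOpt hp hℓ, Fobj_wOpt hp hℓ⟩,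
    ⟨wOpt s, admissibleW_wOpt hp hℓ, ?_⟩, ?_⟩
  · rw [hsqrt, Fobj_wOpt hp hℓ]
  · rintro _ ⟨w, hw, rfl⟩
    rw [hsqrt]
    exact Real.sqrt_le_sqrt hw.one_div_le_Fobj
end
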